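/- arXiv:1708.04918 — 2 statements merged into one kernel-verified Lean document; each statement's English description precedes it below -/
import Mathlib

section
/- Let ε ∈ {1,−1} and consider the 2-parameter family of surfaces given by f(x,y;t,u) = y² + εx⁴ + x²y³ + tx² + ux²y. Then the family of asymptotic BDEs of f(·,·;t,u), parametrized by (t,u) ∈ ℝ², is fiber topologically equivalent at 0 to the family of BDEs dy² + (εx² + y³ + uy + t)dx² = 0, i.e. the family with coefficients (a,b,c) = (1, 0, εx² + y³ + uy + t). -/
open Asymptotics Filter Set

noncomputable section

/-- Partial derivative in the first variable (∂/∂x). -/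
def pdx (f : ℝ × ℝ → ℝ) (p : ℝ × ℝ) : ℝ := deriv (fun s => f (s, p.2)) p.1

/-- Partial derivative in the second variable (∂/∂y). -/
def pdy (f : ℝ × ℝ → ℝ) (p : ℝ × ℝ) : ℝ := deriv (fun s => f (p.1, s)) p.2

/-- f_xx -/
def fxx (f : ℝ × ℝ → ℝ) : ℝ × ℝ → ℝ := pdx (pdx f)
/-- f_xy -/
def fxy (f : ℝ × ℝ → ℝ) : ℝ × ℝ → ℝ := pdy (pdx f)
/-- f_yy -/
def fyy (f : ℝ × ℝ → ℝ) : ℝ × ℝ → ℝ := pdy (pdy f)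

/-- The discriminant δ = f_xy² − f_xx·f_yy of the asymptotic BDE of `f`. -/
def bdeDiscr (f : ℝ × ℝ → ℝ) : ℝ × ℝ → ℝ := fun p => (fxy f p) ^ 2 - fxx f p * fyy f p

/-- The BDE `a dy² + 2b dxdy + c dx² = 0`, regarded as the family of quadratic
forms `ω_p(v) = a(p)v₂² + 2b(p)v₁v₂ + c(p)v₁²`. -/
def BDE (a b c : ℝ × ℝ → ℝ) : (ℝ × ℝ) → (ℝ × ℝ) → ℝ :=
  fun p v => a p * v.2 ^ 2 + 2 * b p * v.1 * v.2 + c p * v.1 ^ 2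

/-- The asymptotic BDE `f_yy dy² + 2 f_xy dxdy + f_xx dx² = 0` of the surface `z = f(x,y)`. -/
def asymBDE (f : ℝ × ℝ → ℝ) : (ℝ × ℝ) → (ℝ × ℝ) → ℝ := BDE (fyy f) (fxy f) (fxx f)

/-- `j^k f(0) = P` : the degree-k Taylor polynomial of `f` at the origin is `P`,
i.e. `f − P = o(‖(x,y)‖^k)` as `(x,y) → 0`. -/
def HasJetAt0 (f P : ℝ × ℝ → ℝ) (k : ℕ) : Prop :=
  (fun p => f p - P p) =o[nhds (0 : ℝ × ℝ)] fun p => ‖p‖ ^ k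

/-- `γ` is an integral curve of the BDE `ω` on the open interval `I`:
`γ` is C¹ on `I` with nowhere-vanishing derivative annihilating `ω`. -/
def IsIntegralCurveOnBDE (ω : (ℝ × ℝ) → (ℝ × ℝ) → ℝ) (γ : ℝ → ℝ × ℝ) (I : Set ℝ) : Prop :=
  (∃ a b : ℝ, I = Set.Ioo a b) ∧
  ∃ dγ : ℝ → ℝ × ℝ, ContinuousOn dγ I ∧
    ∀ t ∈ I, HasDerivAt γ (dγ t) t ∧ dγ t ≠ 0 ∧ ω (γ t) (dγ t) = 0

/-- Topological equivalence of two BDEs at the origin: a local homeomorphism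
fixing `0` sending integral curves of one to integral curves of the other. -/
def TopEquivAt0 (ω Ω : (ℝ × ℝ) → (ℝ × ℝ) → ℝ) : Prop :=
  ∃ (U V : Set (ℝ × ℝ)) (h hinv : ℝ × ℝ → ℝ × ℝ),
    IsOpen U ∧ IsOpen V ∧ (0 : ℝ × ℝ) ∈ U ∧ (0 : ℝ × ℝ) ∈ V ∧ h 0 = 0 ∧
    ContinuousOn h U ∧ ContinuousOn hinv V ∧
    Set.BijOn h U V ∧ Set.InvOn hinv h U V ∧
    (∀ γ I, IsIntegralCurveOnBDE ω γ I → Set.MapsTo γ I U →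
      ∃ σ J, IsIntegralCurveOnBDE Ω σ J ∧ h '' (γ '' I) = σ '' J) ∧
    (∀ σ J, IsIntegralCurveOnBDE Ω σ J → Set.MapsTo σ J V →
      ∃ γ I, IsIntegralCurveOnBDE ω γ I ∧ hinv '' (σ '' J) = γ '' I)

/-- Smooth equivalence of two BDEs at the origin: a local C^∞ diffeomorphism `h`
fixing `0` pulling one family of quadratic forms back to a nonvanishing multiple
of the other. -/
def SmoothEquivAt0 (ω Ω : (ℝ × ℝ) → (ℝ × ℝ) → ℝ) : Prop :=
  ∃ (U V : Set (ℝ × ℝ)) (h hinv : ℝ × ℝ → ℝ × ℝ) (ρ : ℝ × ℝ → ℝ),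
    IsOpen U ∧ IsOpen V ∧ (0 : ℝ × ℝ) ∈ U ∧ (0 : ℝ × ℝ) ∈ V ∧ h 0 = 0 ∧
    ContDiffOn ℝ (⊤ : ℕ∞) h U ∧ ContDiffOn ℝ (⊤ : ℕ∞) hinv V ∧
    Set.BijOn h U V ∧ Set.InvOn hinv h U V ∧
    ContDiffOn ℝ (⊤ : ℕ∞) ρ U ∧ (∀ p ∈ U, ρ p ≠ 0) ∧
    (∀ p ∈ U, ∀ v : ℝ × ℝ, Ω (h p) (fderiv ℝ h p v) = ρ p * ω p v)

/-- Fiber topological equivalence at `0` of two 2-parameter families of BDEs: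
a homeomorphism `φ` of parameter spaces (onto its image), fixing `0`, such that
corresponding members of the families are topologically equivalent at `0`. -/
def FiberTopEquivAt0 (ω Ω : (ℝ × ℝ) → (ℝ × ℝ) → (ℝ × ℝ) → ℝ) : Prop :=
  ∃ (W : Set (ℝ × ℝ)) (φ ψ : ℝ × ℝ → ℝ × ℝ),
    W ∈ nhds (0 : ℝ × ℝ) ∧ φ 0 = 0 ∧
    ContinuousOn φ W ∧ ContinuousOn ψ (φ '' W) ∧
    Set.InvOn ψ φ W (φ '' W) ∧
    ∀ q ∈ W, TopEquivAt0 (ω q) (Ω (φ q))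


def IsSol (g : ℝ → ℝ → ℝ) (σ α β : ℝ) (y : ℝ → ℝ) : Prop :=
  ∀ x ∈ Icc α β, HasDerivWithinAt y (σ * √(g x (y x))) (Icc α β) x

lemma my_sqrt_add_le {a b : ℝ} (ha : 0 ≤ a) (hb : 0 ≤ b) : √(a + b) ≤ √a + √b := by
  rw [Real.sqrt_le_left (by positivity)]
  have h1 := Real.mul_self_sqrt ha
  have h2 := Real.mul_self_sqrt hb
  have h3 := Real.sqrt_nonneg a
  have h4 := Real.sqrt_nonneg b
  nlinarith [mul_nonneg h3 h4]

lemma abs_sqrt_sub_le (a b : ℝ) : |√a - √b| ≤ √|a - b| := by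
  have key : ∀ a b : ℝ, √a ≤ √b + √|a - b| := by
    intro a b
    have h1 : √a ≤ √(max b 0 + |a - b|) := by
      apply Real.sqrt_le_sqrt
      have := le_abs_self (a - b)
      have := le_max_left b 0
      linarith
    have h2 := my_sqrt_add_le (le_max_right b 0) (abs_nonneg (a - b))
    have h3 : √(max b 0) = √b := by
      rcases le_total b 0 with h | h
      · rw [max_eq_right h, Real.sqrt_eq_zero_of_nonpos h, Real.sqrt_zero]
      · rw [max_eq_left h]
    linarith
  rw [abs_le]
  have h1 := key a b
  have h2 := key b a
  rw [abs_sub_comm b a] at h2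
  constructor <;> linarith

lemma abs_sqrt_sub_le_mul {d a b : ℝ} (hd : 0 < d) (ha : d ≤ a) (hb : d ≤ b) :
    |√a - √b| ≤ (1 / √d) * |a - b| := by
  have hsd : 0 < √d := Real.sqrt_pos.2 hd
  have hsa : √d ≤ √a := Real.sqrt_le_sqrt ha
  have hsb : √d ≤ √b := Real.sqrt_le_sqrt hb
  have e : a - b = (√a - √b) * (√a + √b) := by
    have h1 := Real.mul_self_sqrt (hd.le.trans ha)
    have h2 := Real.mul_self_sqrt (hd.le.trans hb)
    nlinarith
  rw [e, abs_mul, abs_of_pos (by linarith : 0 < √a + √b)]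
  have : 0 ≤ |√a - √b| := abs_nonneg _
  rw [one_div, inv_mul_eq_div, le_div_iff₀ hsd]
  nlinarith

lemma exists_approx (g : ℝ → ℝ → ℝ) (K M : ℝ) (hK0 : 0 ≤ K)
    (hK : ∀ x x' y y', |g x y - g x' y'| ≤ K * (|x - x'| + |y - y'|))
    (hM : ∀ x y, |g x y| ≤ M) (σ : ℝ) (hσ : |σ| ≤ 1) (r : ℝ)
    (x₁ : ℝ) (hx₁ : x₁ ∈ Icc 0 r) (y₁ : ℝ) (d : ℝ) (hd : 0 < d) (hd1 : d ≤ 1) :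
    ∃ y : ℝ → ℝ, y x₁ = y₁ ∧ ∀ x ∈ Icc 0 r,
      HasDerivWithinAt y (σ * √(max (g x (y x)) 0 + d)) (Icc 0 r) x := by
  have hM0 : 0 ≤ M := (abs_nonneg _).trans (hM 0 0)
  have hr : 0 ≤ r := hx₁.1.trans hx₁.2
  let f : ℝ → ℝ → ℝ := fun x y => σ * √(max (g x y) 0 + d)
  have hP : IsPicardLindelof f (⟨x₁, hx₁⟩ : Icc (0:ℝ) r) y₁ (Real.toNNReal (√(M+1) * r)) 0
      (Real.toNNReal √(M+1)) (Real.toNNReal (1 / √d * K)) := by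
    have hmx : ∀ a b : ℝ, |max a 0 - max b 0| ≤ |a - b| := fun a b => abs_max_sub_max_le_abs a b 0
    constructor
    · intro t ht
      apply LipschitzOnWith.of_dist_le_mul
      intro a _ b _
      rw [Real.coe_toNNReal _ (by positivity), Real.dist_eq, Real.dist_eq]
      simp only [f]
      rw [← mul_sub, abs_mul]
      have h1 := abs_sqrt_sub_le_mul hd (a := max (g t a) 0 + d) (b := max (g t b) 0 + d)
        (by linarith [le_max_right (g t a) 0]) (by linarith [le_max_right (g t b) 0])
      have h2 := hmx (g t a) (g t b)
      have h3 := hK t t a b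
      simp only [sub_self, abs_zero, zero_add, add_sub_add_right_eq_sub] at h1 h3
      calc |σ| * _ ≤ 1 * (1 / √d * |max (g t a) 0 - max (g t b) 0|) := by gcongr
        _ ≤ 1 * (1 / √d * (K * |a - b|)) := by gcongr; linarith
        _ = _ := by ring
    · intro x _
      have hc : Continuous (fun t => g t x) := by
        apply LipschitzWith.continuous (K := Real.toNNReal K)
        apply LipschitzWith.of_dist_le_mul
        intro a b
        rw [Real.coe_toNNReal _ hK0, Real.dist_eq, Real.dist_eq]
        simpa using hK a b x x
      simp only [f]
      fun_prop
    · intro t ht x _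
      rw [Real.coe_toNNReal _ (by positivity), Real.norm_eq_abs]
      simp only [f]
      rw [abs_mul, abs_of_nonneg (Real.sqrt_nonneg _)]
      have : √(max (g t x) 0 + d) ≤ √(M+1) := by
        apply Real.sqrt_le_sqrt
        have := max_le ((le_abs_self _).trans (hM t x)) hM0
        linarith
      calc _ ≤ 1 * √(M+1) := by gcongr
        _ = _ := one_mul _
    · rw [Real.coe_toNNReal _ (by positivity), Real.coe_toNNReal _ (by positivity)]
      simp only [NNReal.coe_zero, sub_zero]
      gcongr
      exact max_le (by linarith [hx₁.1]) (by linarith [hx₁.2])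
  obtain ⟨α, h1, h2⟩ := hP.exists_eq_forall_mem_Icc_hasDerivWithinAt₀
  exact ⟨α, h1, h2⟩

lemma exists_sol (g : ℝ → ℝ → ℝ) (K M : ℝ) (hK0 : 0 ≤ K)
    (hK : ∀ x x' y y', |g x y - g x' y'| ≤ K * (|x - x'| + |y - y'|))
    (hM : ∀ x y, |g x y| ≤ M) (σ : ℝ) (hσ : |σ| ≤ 1) (r : ℝ)
    (x₁ : ℝ) (hx₁ : x₁ ∈ Icc 0 r) (y₁ : ℝ) :
    ∃ y : ℝ → ℝ, IsSol g σ 0 r y ∧ y x₁ = y₁ := by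
  have hM0 : 0 ≤ M := (abs_nonneg _).trans (hM 0 0)
  have hd : ∀ n : ℕ, (0:ℝ) < 1 / ((n:ℝ)+1) := fun n => by positivity
  have hd1 : ∀ n : ℕ, 1 / ((n:ℝ)+1) ≤ 1 := fun n => by
    rw [div_le_one (by positivity)]; linarith [(Nat.cast_nonneg n : (0:ℝ) ≤ n)]
  choose Y hY1 hY2 using fun n : ℕ => exists_approx g K M hK0 hK hM σ hσ r x₁ hx₁ y₁ _ (hd n) (hd1 n)
  set B := √(M+1) with hB
  have hB0 : 0 ≤ B := Real.sqrt_nonneg _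
  have hbound : ∀ n x, |σ * √(max (g x (Y n x)) 0 + 1 / ((n:ℝ)+1))| ≤ B := by
    intro n x
    rw [abs_mul, abs_of_nonneg (Real.sqrt_nonneg _)]
    have : √(max (g x (Y n x)) 0 + 1 / ((n:ℝ)+1)) ≤ √(M+1) := by
      apply Real.sqrt_le_sqrt
      have := max_le ((le_abs_self _).trans (hM x (Y n x))) hM0
      linarith [hd1 n]
    calc _ ≤ 1 * √(M+1) := by gcongr
      _ = _ := one_mul _
  have hlip : ∀ n, ∀ x ∈ Icc 0 r, ∀ z ∈ Icc 0 r, |Y n z - Y n x| ≤ B * |z - x| := by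
    intro n x hx z hz
    have := (convex_Icc (0:ℝ) r).norm_image_sub_le_of_norm_hasDerivWithin_le (hY2 n)
      (fun x _ => by rw [Real.norm_eq_abs]; exact hbound n x) hx hz
    simpa [Real.norm_eq_abs] using this
  set K' := K * (1 + B) with hK'
  have hK'0 : 0 ≤ K' := by positivity
  have hest : ∀ n, ∀ x ∈ Icc 0 r, ∀ z ∈ Icc 0 r,
      |Y n z - Y n x - (z - x) * (σ * √(g x (Y n x)))| ≤
        (√(K' * |z - x|) + √(1 / ((n:ℝ)+1))) * |z - x| := by
    intro n x hx z hz
    have hsub : uIcc x z ⊆ Icc 0 r := uIcc_subset_Icc hx hz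
    have hder : ∀ w ∈ uIcc x z, HasDerivWithinAt (fun w => Y n w - w * (σ * √(g x (Y n x))))
        (σ * √(max (g w (Y n w)) 0 + 1 / ((n:ℝ)+1)) - 1 * (σ * √(g x (Y n x)))) (uIcc x z) w := by
      intro w hw
      exact ((hY2 n w (hsub hw)).mono hsub).sub ((hasDerivWithinAt_id w _).mul_const _)
    have := (convex_uIcc x z).norm_image_sub_le_of_norm_hasDerivWithin_le
      (C := √(K' * |z - x|) + √(1 / ((n:ℝ)+1))) hder ?_ left_mem_uIcc right_mem_uIcc
    · simp only [Real.norm_eq_abs] at this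
      convert this using 2
      ring
    · intro w hw
      rw [Real.norm_eq_abs, one_mul, ← mul_sub, abs_mul]
      have hwx : |w - x| ≤ |z - x| := abs_sub_left_of_mem_uIcc hw
      have h1 : |√(max (g w (Y n w)) 0 + 1 / ((n:ℝ)+1)) - √(g x (Y n x))| ≤
          √(K' * |z - x|) + √(1 / ((n:ℝ)+1)) := by
        have e : √(g x (Y n x)) = √(max (g x (Y n x)) 0) := by
          rcases le_total (g x (Y n x)) 0 with h | h
          · rw [max_eq_right h, Real.sqrt_eq_zero_of_nonpos h, Real.sqrt_zero]
          · rw [max_eq_left h]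
        rw [e]
        refine (abs_sqrt_sub_le _ _).trans ?_
        refine le_trans ?_ (my_sqrt_add_le (by positivity) (hd n).le)
        apply Real.sqrt_le_sqrt
        have h3 := hK w x (Y n w) (Y n x)
        have h4 := abs_max_sub_max_le_abs (g w (Y n w)) (g x (Y n x)) 0
        have h5 := hlip n x hx w (hsub hw)
        calc |max (g w (Y n w)) 0 + 1 / ((n:ℝ)+1) - max (g x (Y n x)) 0|
            = |(max (g w (Y n w)) 0 - max (g x (Y n x)) 0) + 1 / ((n:ℝ)+1)| := by ring_nf
          _ ≤ |max (g w (Y n w)) 0 - max (g x (Y n x)) 0| + |1 / ((n:ℝ)+1)| := abs_add_le _ _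
          _ ≤ K * (|z - x| + B * |z - x|) + 1 / ((n:ℝ)+1) := by
              rw [abs_of_pos (hd n)]
              gcongr
              refine h4.trans (h3.trans ?_)
              gcongr
              exact h5.trans (by gcongr)
          _ = _ := by rw [hK']; ring
      calc |σ| * _ ≤ 1 * (√(K' * |z - x|) + √(1 / ((n:ℝ)+1))) := by gcongr
        _ = _ := one_mul _
  -- ultrafilter limit
  let 𝓤 : Ultrafilter ℕ := hyperfilter ℕ
  have hlim : ∀ x ∈ Icc 0 r, ∃ l, Tendsto (fun n => Y n x) 𝓤 (nhds l) := by
    intro x hx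
    have hc : IsCompact (Icc (y₁ - B * |x - x₁|) (y₁ + B * |x - x₁|)) := isCompact_Icc
    obtain ⟨l, _, hl⟩ := hc.ultrafilter_le_nhds (𝓤.map (fun n => Y n x)) (by
      rw [Ultrafilter.coe_map, le_principal_iff, mem_map]
      apply univ_mem'
      intro n
      have := hlip n x₁ hx₁ x hx
      rw [hY1, abs_le] at this
      simp only [mem_preimage, mem_Icc]
      constructor <;> linarith)
    exact ⟨l, hl⟩
  choose! y hy using hlim
  have hcont : ∀ x, Continuous (fun w => √(g x w)) := by
    intro x
    apply Real.continuous_sqrt.comp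
    apply LipschitzWith.continuous (K := Real.toNNReal K)
    apply LipschitzWith.of_dist_le_mul
    intro a b
    rw [Real.coe_toNNReal _ hK0, Real.dist_eq, Real.dist_eq]
    simpa using hK x x a b
  have hest' : ∀ x ∈ Icc 0 r, ∀ z ∈ Icc 0 r,
      |y z - y x - (z - x) * (σ * √(g x (y x)))| ≤ √(K' * |z - x|) * |z - x| := by
    intro x hx z hz
    have t1 : Tendsto (fun n => |Y n z - Y n x - (z - x) * (σ * √(g x (Y n x)))|) 𝓤
        (nhds |y z - y x - (z - x) * (σ * √(g x (y x)))|) := by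
      apply Tendsto.abs
      refine ((hy z hz).sub (hy x hx)).sub ?_
      exact ((((hcont x).tendsto (y x)).comp (hy x hx)).const_mul σ).const_mul (z - x)
    have t2 : Tendsto (fun n : ℕ => (√(K' * |z - x|) + √(1 / ((n:ℝ)+1))) * |z - x|) 𝓤
        (nhds ((√(K' * |z - x|) + √0) * |z - x|)) := by
      have : Tendsto (fun n : ℕ => 1 / ((n:ℝ)+1)) 𝓤 (nhds 0) :=
        tendsto_one_div_add_atTop_nhds_zero_nat.mono_left Nat.hyperfilter_le_atTop
      exact (((Real.continuous_sqrt.tendsto 0).comp this).const_add _).mul_const _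
    have := le_of_tendsto_of_tendsto' t1 t2 (fun n => hest n x hx z hz)
    simpa using this
  refine ⟨y, ?_, ?_⟩
  · intro x hx
    rw [hasDerivWithinAt_iff_isLittleO, isLittleO_iff]
    intro c hc
    have hz : Tendsto (fun z => √(K' * |z - x|)) (nhdsWithin x (Icc 0 r)) (nhds 0) := by
      have : Continuous (fun z => √(K' * |z - x|)) := by fun_prop
      have := this.tendsto x
      simp only [sub_self, abs_zero, mul_zero, Real.sqrt_zero] at this
      exact this.mono_left nhdsWithin_le_nhds
    filter_upwards [hz.eventually_lt_const hc, self_mem_nhdsWithin] with z hz1 hz2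
    rw [Real.norm_eq_abs, Real.norm_eq_abs, smul_eq_mul]
    refine (hest' x hx z hz2).trans ?_
    gcongr
  · have h1 := hy x₁ hx₁
    simp only [hY1] at h1
    exact tendsto_nhds_unique h1 tendsto_const_nhds


structure UH (g : ℝ → ℝ → ℝ) (α β : ℝ) : Prop where
  cont : Continuous (fun p : ℝ × ℝ => g p.1 p.2)
  lip : ∀ x y y', |g x y - g x y'| ≤ |y - y'| / 8
  mono : ∀ x x' y, α ≤ x → x ≤ x' → x' ≤ β → (x' - x) ^ 2 / 2 ≤ g x' y - g x y

lemma IsSol.continuousOn {g σ α β y} (h : IsSol g σ α β y) : ContinuousOn y (Icc α β) :=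
  fun x hx => (h x hx).continuousWithinAt

lemma IsSol.mono {g σ α β y α' β'} (h : IsSol g σ α β y) (h1 : α ≤ α') (h2 : β' ≤ β) :
    IsSol g σ α' β' y := fun x hx =>
  (h x ⟨h1.trans hx.1, hx.2.trans h2⟩).mono (Icc_subset_Icc h1 h2)

lemma contG {g : ℝ → ℝ → ℝ} (hc : Continuous (fun p : ℝ × ℝ => g p.1 p.2)) {y : ℝ → ℝ} {s : Set ℝ}
    (hy : ContinuousOn y s) : ContinuousOn (fun x => g x (y x)) s :=
  hc.comp_continuousOn (continuousOn_id.prodMk hy)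

lemma nagumo {D D' : ℝ → ℝ} {e β : ℝ}
    (hD : ∀ s ∈ Icc e β, HasDerivWithinAt D (D' s) (Icc e β) s) (h0 : D e = 0)
    (hb : ∀ s ∈ Ioc e β, |D' s| ≤ |D s| / (2 * (s - e))) : ∀ s ∈ Icc e β, D s = 0 := by
  intro s hs
  rcases eq_or_lt_of_le hs.1 with rfl | hes
  · exact h0
  have hO := hasDerivWithinAt_iff_isLittleO.1 (hD e ⟨le_rfl, hs.1.trans hs.2⟩)
  have hO1 := hO.def one_pos
  obtain ⟨C, hC⟩ : ∃ C : ℝ, ∀ᶠ s in nhdsWithin e (Icc e β), |D s| ≤ C * |s - e| := by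
    refine ⟨1 + |D' e|, hO1.mono fun s h => ?_⟩
    simp only [h0, sub_zero, Real.norm_eq_abs, smul_eq_mul, one_mul] at h
    have : |D s| ≤ |D s - (s - e) * D' e| + |(s - e) * D' e| := by
      have := abs_add_le (D s - (s - e) * D' e) ((s - e) * D' e)
      simpa using this
    rw [abs_mul] at this
    linarith
  -- antitone
  have hanti : ∀ s₁ ∈ Ioo e s, D s ^ 2 / (s - e) ≤ D s₁ ^ 2 / (s₁ - e) := by
    intro s₁ hs₁
    have hsub : Icc s₁ s ⊆ Icc e β := Icc_subset_Icc hs₁.1.le hs.2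
    have hder : ∀ z ∈ Icc s₁ s, HasDerivWithinAt (fun z => D z ^ 2 / (z - e))
        ((2 * D z * D' z * (z - e) - D z ^ 2 * 1) / (z - e) ^ 2) (Icc s₁ s) z := by
      intro z hz
      have hne : z - e ≠ 0 := by linarith [hz.1, hs₁.1]
      have h1 := ((hD z (hsub hz)).mono hsub)
      have h2 := (h1.pow 2)
      have h3 := h2.div ((hasDerivWithinAt_id z (Icc s₁ s)).sub_const e) hne
      exact h3.congr_deriv (by simp)
    have := antitoneOn_of_hasDerivWithinAt_nonpos (convex_Icc s₁ s)
      (f := fun z => D z ^ 2 / (z - e)) (fun z hz => (hder z hz).continuousWithinAt)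
      (fun z hz => (hder z (interior_subset hz)).mono interior_subset) ?_
    · exact this ⟨le_rfl, hs₁.2.le⟩ ⟨hs₁.2.le, le_rfl⟩ hs₁.2.le
    · intro z hz
      have hz' := interior_subset hz
      have hpos : 0 < z - e := by linarith [hz'.1, hs₁.1]
      apply div_nonpos_of_nonpos_of_nonneg _ (by positivity)
      have h1 := hb z ⟨by linarith, hz'.2.trans hs.2⟩
      rw [le_div_iff₀ (by positivity)] at h1
      have h2 : D z * D' z ≤ |D z| * |D' z| := by rw [← abs_mul]; exact le_abs_self _
      have h3 : |D z| * |D z| = D z ^ 2 := by rw [abs_mul_abs_self]; ring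
      have h4 := mul_le_mul_of_nonneg_left h1 (abs_nonneg (D z))
      nlinarith
  have hle : ∀ᶠ s₁ in nhdsWithin e (Ioo e s), D s ^ 2 / (s - e) ≤ C ^ 2 * (s₁ - e) := by
    have : ∀ᶠ s₁ in nhdsWithin e (Ioo e s), |D s₁| ≤ C * |s₁ - e| :=
      hC.filter_mono (nhdsWithin_mono _ (Ioo_subset_Icc_self.trans (Icc_subset_Icc le_rfl hs.2)))
    filter_upwards [this, self_mem_nhdsWithin] with s₁ h1 h2
    refine (hanti s₁ h2).trans ?_
    have hpos : 0 < s₁ - e := by linarith [h2.1]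
    rw [abs_of_pos hpos] at h1
    rw [div_le_iff₀ hpos]
    have : D s₁ ^ 2 = |D s₁| ^ 2 := (sq_abs _).symm
    rw [this]
    calc |D s₁| ^ 2 ≤ (C * (s₁ - e)) ^ 2 := by gcongr
      _ = _ := by ring
  have ht : Tendsto (fun s₁ => C ^ 2 * (s₁ - e)) (nhdsWithin e (Ioo e s)) (nhds 0) := by
    have : Continuous (fun s₁ => C ^ 2 * (s₁ - e)) := by fun_prop
    have := this.tendsto e
    simp only [sub_self, mul_zero] at this
    exact this.mono_left nhdsWithin_le_nhds
  haveI : (nhdsWithin e (Ioo e s)).NeBot := left_nhdsWithin_Ioo_neBot hes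
  have h := ge_of_tendsto ht hle
  have hpos : 0 < s - e := by linarith
  rw [div_le_iff₀ hpos] at h
  nlinarith [sq_nonneg (D s), pow_eq_zero_iff (two_ne_zero) (a := D s)]

lemma sol_lip {g : ℝ → ℝ → ℝ} {σ α β : ℝ} {y : ℝ → ℝ} (hσ : |σ| ≤ 1) (h : IsSol g σ α β y)
    {q a b : ℝ} (ha : α ≤ a) (hb : b ≤ β)
    (hq : ∀ s ∈ Icc a b, √(g s (y s)) ≤ q) : ∀ s ∈ Icc a b, ∀ s' ∈ Icc a b,
      |y s - y s'| ≤ q * |s - s'| := by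
  intro s hs s' hs'
  have := (convex_Icc a b).norm_image_sub_le_of_norm_hasDerivWithin_le (h.mono ha hb) (C := q)
    (fun x hx => by
      rw [Real.norm_eq_abs, abs_mul, abs_of_nonneg (Real.sqrt_nonneg _)]
      calc |σ| * √(g x (y x)) ≤ 1 * q := by gcongr; exact hq x hx
        _ = q := one_mul q) hs' hs
  simpa [Real.norm_eq_abs] using this

lemma UH.quant {g : ℝ → ℝ → ℝ} {σ α β : ℝ} {y : ℝ → ℝ} (H : UH g α β) (hσ : |σ| ≤ 1)
    (h : IsSol g σ α β y) {x₀ x : ℝ} (h0 : α ≤ x₀) (h1 : x₀ ≤ x) (h2 : x ≤ β)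
    (hG : 0 ≤ g x₀ (y x₀)) : (x - x₀) ^ 2 / 64 ≤ g x (y x) := by
  have hcG : ContinuousOn (fun s => g s (y s)) (Icc x₀ x) :=
    (contG H.cont h.continuousOn).mono (Icc_subset_Icc h0 h2)
  obtain ⟨x', hx', hmax⟩ := isCompact_Icc.exists_isMaxOn ⟨x₀, le_rfl, h1⟩ hcG
  have hmax' : ∀ s ∈ Icc x₀ x, g s (y s) ≤ g x' (y x') := fun s hs => hmax hs
  set q := √(g x' (y x')) with hq
  have hq0 : 0 ≤ q := Real.sqrt_nonneg _
  have hqq : q ^ 2 = g x' (y x') := Real.sq_sqrt (hG.trans (hmax' x₀ ⟨le_rfl, h1⟩))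
  have hl := sol_lip hσ h h0 h2 (q := q) (fun s hs => Real.sqrt_le_sqrt (hmax' s hs))
  have a1 := hl x' hx' x₀ ⟨le_rfl, h1⟩
  have a2 := hl x ⟨h1, le_rfl⟩ x' hx'
  rw [abs_of_nonneg (show (0:ℝ) ≤ x' - x₀ by linarith [hx'.1])] at a1
  rw [abs_of_nonneg (show (0:ℝ) ≤ x - x' by linarith [hx'.2])] at a2
  have b1 := H.mono x₀ x' (y x') h0 hx'.1 (hx'.2.trans h2)
  have b2 := H.mono x' x (y x) (h0.trans hx'.1) hx'.2 h2
  have c1 := (abs_le.1 (H.lip x₀ (y x') (y x₀))).1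
  have c2 := (abs_le.1 (H.lip x' (y x) (y x'))).1
  set δ := x' - x₀ with hδ
  set η := x - x' with hη
  have hδ0 : 0 ≤ δ := by linarith [hx'.1]
  have hη0 : 0 ≤ η := by linarith [hx'.2]
  have e1 : δ / 2 ≤ q := by
    by_contra hcon
    push Not at hcon
    nlinarith
  have e2 : x - x₀ = δ + η := by rw [hδ, hη]; ring
  rw [e2]
  nlinarith [sq_nonneg (q - η), mul_nonneg hq0 hη0, mul_nonneg hδ0 hη0]

lemma UH.const_left {g : ℝ → ℝ → ℝ} {σ α β : ℝ} {y : ℝ → ℝ} (H : UH g α β) (hσ : |σ| ≤ 1)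
    (h : IsSol g σ α β y) {x : ℝ} (h0 : α ≤ x) (h2 : x ≤ β) (hG : g x (y x) ≤ 0) :
    ∀ s ∈ Icc α x, y s = y x := by
  intro s hs
  have hn : ∀ s ∈ Icc α x, √(g s (y s)) ≤ 0 := by
    intro s hs
    rw [Real.sqrt_eq_zero_of_nonpos]
    by_contra hcon
    push Not at hcon
    have := H.quant hσ h hs.1 hs.2 h2 hcon.le
    rcases eq_or_lt_of_le hs.2 with rfl | hlt
    · linarith
    · nlinarith [pow_pos (sub_pos.2 hlt) 2]
  have := sol_lip hσ h le_rfl h2 hn s hs x ⟨h0, le_rfl⟩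
  rw [zero_mul] at this
  have := abs_nonpos_iff.1 this
  linarith

lemma sqrt_diff_le {G1 G2 d c : ℝ} (hc : 0 < c) (h1 : c ^ 2 ≤ G1) (h2 : c ^ 2 ≤ G2)
    (h : |G1 - G2| ≤ d) : |√G1 - √G2| ≤ d / (2 * c) := by
  have s1 : c ≤ √G1 := Real.le_sqrt_of_sq_le h1
  have s2 : c ≤ √G2 := Real.le_sqrt_of_sq_le h2
  have e : G1 - G2 = (√G1 - √G2) * (√G1 + √G2) := by
    have h1 := Real.mul_self_sqrt ((sq_nonneg c).trans h1)
    have h2 := Real.mul_self_sqrt ((sq_nonneg c).trans h2)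
    nlinarith
  rw [e, abs_mul, abs_of_pos (by linarith : 0 < √G1 + √G2)] at h
  rw [le_div_iff₀ (by positivity)]
  nlinarith [abs_nonneg (√G1 - √G2)]

lemma UH.forward {g : ℝ → ℝ → ℝ} {σ α β : ℝ} {y₁ y₂ : ℝ → ℝ} (H : UH g α β) (hσ : |σ| ≤ 1)
    (h₁ : IsSol g σ α β y₁) (h₂ : IsSol g σ α β y₂) {e : ℝ} (he : e ∈ Icc α β)
    (hag : y₁ e = y₂ e) (hG : 0 ≤ g e (y₁ e)) : ∀ s ∈ Icc e β, y₁ s = y₂ s := by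
  intro s hs
  have := nagumo (D := fun s => y₁ s - y₂ s) (e := e) (β := β)
    (fun s hs => ((h₁.mono he.1 le_rfl) s hs).sub ((h₂.mono he.1 le_rfl) s hs)) (by simp [hag]) ?_ s hs
  · simpa [sub_eq_zero] using this
  · intro s hs
    have q1 := H.quant hσ h₁ he.1 hs.1.le hs.2 hG
    have q2 := H.quant hσ h₂ he.1 hs.1.le hs.2 (hag ▸ hG)
    have hpos : 0 < s - e := sub_pos.2 hs.1
    have := sqrt_diff_le (c := (s - e) / 8) (by positivity) (by linarith) (by linarith)
      (H.lip s (y₁ s) (y₂ s))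
    rw [← mul_sub, abs_mul]
    calc |σ| * _ ≤ 1 * (|y₁ s - y₂ s| / 8 / (2 * ((s - e) / 8))) := by gcongr
      _ = _ := by field_simp

lemma IsSol.neg {g σ α β y} (h : IsSol g σ α β y) :
    IsSol (fun x y => g (-x) y) (-σ) (-β) (-α) (fun x => y (-x)) := by
  intro x hx
  have h1 := h (-x) ⟨by linarith [hx.2], by linarith [hx.1]⟩
  have h2 : HasDerivWithinAt (fun x : ℝ => -x) (-1) (Icc (-β) (-α)) x := (hasDerivAt_neg x).hasDerivWithinAt
  have := HasDerivWithinAt.scomp x h1 h2 (fun z hz => ⟨by linarith [hz.2], by linarith [hz.1]⟩)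
  exact this.congr_deriv (by simp)

lemma UH.backward {g : ℝ → ℝ → ℝ} {σ α β : ℝ} {y₁ y₂ : ℝ → ℝ} (H : UH g α β) (hσ : |σ| ≤ 1)
    (h₁ : IsSol g σ α β y₁) (h₂ : IsSol g σ α β y₂) {e : ℝ} (he : e ∈ Icc α β)
    (hag : y₁ e = y₂ e) : ∀ s ∈ Icc α e, y₁ s = y₂ s := by
  have hc : ContinuousOn (fun s => y₁ s - y₂ s) (Icc α e) :=
    (h₁.continuousOn.sub h₂.continuousOn).mono (Icc_subset_Icc le_rfl he.2)
  by_contra hcon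
  push Not at hcon
  obtain ⟨s₀, hs₀, hne⟩ := hcon
  -- the set of agreement points to the right of s₀
  have hc' : ContinuousOn (fun s => y₁ s - y₂ s) (Icc s₀ e) := hc.mono (Icc_subset_Icc hs₀.1 le_rfl)
  have hcl : IsCompact (Icc s₀ e ∩ (fun s => y₁ s - y₂ s) ⁻¹' {0}) :=
    isCompact_Icc.of_isClosed_subset (hc'.preimage_isClosed_of_isClosed isClosed_Icc isClosed_singleton)
      inter_subset_left
  obtain ⟨e', he', hmin⟩ := hcl.exists_isLeast ⟨e, ⟨hs₀.2, le_rfl⟩, by simp [hag]⟩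
  have hag' : y₁ e' = y₂ e' := by have := he'.2; simpa [sub_eq_zero] using this
  have hse : s₀ < e' := lt_of_le_of_ne he'.1.1 (by rintro rfl; exact hne hag')
  have hα : α ≤ s₀ := hs₀.1
  have heβ : e' ≤ β := he'.1.2.trans he.2
  rcases le_or_gt (g e' (y₁ e')) 0 with hG | hG
  · have a1 := H.const_left hσ h₁ (by linarith) heβ hG s₀ ⟨hα, hse.le⟩
    have a2 := H.const_left hσ h₂ (by linarith) heβ (hag' ▸ hG) s₀ ⟨hα, hse.le⟩
    exact hne (by rw [a1, a2, hag'])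
  · -- near e' both are positive
    have hsub : Icc s₀ e' ⊆ Icc α β := Icc_subset_Icc hα heβ
    have ev : ∀ y : ℝ → ℝ, IsSol g σ α β y → 0 < g e' (y e') → ∀ᶠ s in nhdsWithin e' (Icc s₀ e'),
        g e' (y e') / 2 < g s (y s) := by
      intro y hy hp
      have := (contG H.cont hy.continuousOn).mono hsub e' ⟨hse.le, le_rfl⟩
      exact this.eventually_const_lt (by linarith)
    set G0 := g e' (y₁ e') with hG0
    have hz : ∀ᶠ s in nhdsWithin e' (Icc s₀ e'), ((e' - s) / 8) ^ 2 < G0 / 2 := by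
      have : Continuous (fun s => ((e' - s) / 8) ^ 2) := by fun_prop
      have := this.tendsto e'
      simp only [sub_self, zero_div, ne_eq, OfNat.ofNat_ne_zero, not_false_eq_true, zero_pow] at this
      exact (this.mono_left nhdsWithin_le_nhds).eventually_lt_const (by linarith)
    have e2 := ev y₂ h₂ (by rw [← hag']; exact hG)
    rw [← hag'] at e2
    have hall := (ev y₁ h₁ hG).and (e2.and hz)
    rw [eventually_nhdsWithin_iff, Metric.eventually_nhds_iff] at hall
    obtain ⟨ε, hε, hall⟩ := hall
    set a := max s₀ (e' - ε / 2) with ha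
    have hae : a < e' := max_lt hse (by linarith)
    have hn := nagumo (D := fun s => y₁ (-s) - y₂ (-s)) (e := -e') (β := -a)
      (fun s hs => (((h₁.mono (hα.trans (le_max_left _ _)) heβ).neg) s hs).sub
        (((h₂.mono (hα.trans (le_max_left _ _)) heβ).neg) s hs)) (by simp [hag']) ?_
      (-a) ⟨by linarith, le_rfl⟩
    · simp only [neg_neg] at hn
      have := hmin ⟨⟨le_max_left _ _, hae.le.trans he'.1.2⟩, hn⟩
      linarith
    · intro s hs
      have hs1 : -s ∈ Icc s₀ e' := ⟨by linarith [hs.2, le_max_left s₀ (e' - ε / 2)], by linarith [hs.1]⟩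
      have hpos : 0 < s - -e' := by linarith [hs.1]
      obtain ⟨p1, p2, p3⟩ := hall (y := -s) (by
        rw [Real.dist_eq, abs_lt]
        constructor
        · linarith [hs.2, le_max_right s₀ (e' - ε / 2)]
        · linarith [hs.1]) hs1
      have := sqrt_diff_le (c := (s - -e') / 8) (by positivity) (G1 := g (-s) (y₁ (-s)))
        (G2 := g (-s) (y₂ (-s)))
        (by have : s - -e' = e' - -s := by ring
            rw [this]; linarith)
        (by have : s - -e' = e' - -s := by ring
            rw [this]; linarith)
        (H.lip (-s) (y₁ (-s)) (y₂ (-s)))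
      rw [← mul_sub, abs_mul, abs_neg]
      calc |σ| * _ ≤ 1 * (|y₁ (-s) - y₂ (-s)| / 8 / (2 * ((s - -e') / 8))) := by gcongr
        _ = _ := by field_simp

lemma UH.uniq {g : ℝ → ℝ → ℝ} {σ α β : ℝ} {y₁ y₂ : ℝ → ℝ} (H : UH g α β) (hσ : |σ| ≤ 1)
    (h₁ : IsSol g σ α β y₁) (h₂ : IsSol g σ α β y₂) {e : ℝ} (he : e ∈ Icc α β)
    (hag : y₁ e = y₂ e) : ∀ s ∈ Icc α β, y₁ s = y₂ s := by
  intro s hs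
  rcases le_total s e with hse | hse
  · exact H.backward hσ h₁ h₂ he hag s ⟨hs.1, hse⟩
  rcases le_or_gt 0 (g e (y₁ e)) with hG | hG
  · exact H.forward hσ h₁ h₂ he hag hG s ⟨hse, hs.2⟩
  set v := y₁ e with hv
  -- constancy claim
  have key : ∀ y : ℝ → ℝ, IsSol g σ α β y → y e = v → ∀ e' ∈ Icc e β, g e' v ≤ 0 → y e' = v := by
    intro y hy hyv e' he' hk
    rcases le_or_gt (g e' (y e')) 0 with hG' | hG'
    · rw [← H.const_left hσ hy (he.1.trans he'.1) he'.2 hG' e ⟨he.1, he'.1⟩, hyv]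
    · have hcG : ContinuousOn (fun s => g s (y s)) (Icc e e') :=
        (contG H.cont hy.continuousOn).mono (Icc_subset_Icc he.1 he'.2)
      obtain ⟨z, hz, hz0⟩ := intermediate_value_Icc he'.1 hcG
        (show (0:ℝ) ∈ Icc (g e (y e)) (g e' (y e')) from ⟨by rw [hyv]; exact hG.le, hG'.le⟩)
      simp only at hz0
      have hzv : y z = v := by
        rw [← H.const_left hσ hy (he.1.trans hz.1) (hz.2.trans he'.2) hz0.le e ⟨he.1, hz.1⟩, hyv]
      have := H.mono z e' v (he.1.trans hz.1) hz.2 he'.2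
      rw [hzv] at hz0
      have hze : z = e' := by
        have : (e' - z) ^ 2 ≤ 0 := by linarith
        have := pow_eq_zero_iff (two_ne_zero) |>.1 (le_antisymm this (sq_nonneg _))
        linarith
      rw [← hze, hzv]
  rcases le_or_gt (g s v) 0 with hs0 | hs0
  · rw [key y₁ h₁ rfl s ⟨hse, hs.2⟩ hs0, key y₂ h₂ hag.symm s ⟨hse, hs.2⟩ hs0]
  · have hcG : ContinuousOn (fun s => g s v) (Icc e s) := contG H.cont continuousOn_const
    obtain ⟨z, hz, hz0⟩ := intermediate_value_Icc hse hcG (show (0:ℝ) ∈ Icc (g e v) (g s v) from ⟨hG.le, hs0.le⟩)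
    simp only at hz0
    have hzI : z ∈ Icc e β := ⟨hz.1, hz.2.trans hs.2⟩
    have k1 := key y₁ h₁ rfl z hzI hz0.le
    have k2 := key y₂ h₂ hag.symm z hzI hz0.le
    exact H.forward hσ h₁ h₂ ⟨he.1.trans hz.1, hzI.2⟩ (k1.trans k2.symm) (by rw [k1, hz0]) s ⟨hz.2, hs.2⟩


structure Adm (g : ℝ → ℝ → ℝ) (r e : ℝ) : Prop where
  r_pos : 0 < r
  e_or : e = 1 ∨ e = -1
  lipK : ∃ K, 0 ≤ K ∧ ∀ x x' y y', |g x y - g x' y'| ≤ K * (|x - x'| + |y - y'|)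
  bdd : ∃ M, ∀ x y, |g x y| ≤ M
  lip : ∀ x y y', |g x y - g x y'| ≤ |y - y'| / 8
  mono : ∀ x x' y, 0 ≤ x → x ≤ x' → x' ≤ r → (x' ^ 2 - x ^ 2) / 2 ≤ e * (g x' y - g x y)

lemma Adm.cont {g r e} (H : Adm g r e) : Continuous (fun p : ℝ × ℝ => g p.1 p.2) := by
  obtain ⟨K, hK0, hK⟩ := H.lipK
  have : LipschitzWith (Real.toNNReal (2 * K)) (fun p : ℝ × ℝ => g p.1 p.2) := by
    apply LipschitzWith.of_dist_le_mul
    intro p q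
    rw [Real.dist_eq, Real.coe_toNNReal _ (by positivity)]
    have h1 : |p.1 - q.1| ≤ dist p q := by rw [← Real.dist_eq, Prod.dist_eq]; exact le_max_left _ _
    have h2 : |p.2 - q.2| ≤ dist p q := by rw [← Real.dist_eq, Prod.dist_eq]; exact le_max_right _ _
    have := hK p.1 q.1 p.2 q.2
    nlinarith
  exact this.continuous

lemma Adm.UH {g r e} (H : Adm g r e) (he : e = 1) {α β : ℝ} (h0 : 0 ≤ α) (hr : β ≤ r) : UH g α β where
  cont := H.cont
  lip := H.lip
  mono := by
    intro x x' y h1 h2 h3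
    have := H.mono x x' y (h0.trans h1) h2 (h3.trans hr)
    rw [he] at this
    nlinarith

lemma Adm.UHneg {g r e} (H : Adm g r e) (he : e = -1) {α β : ℝ} (h0 : 0 ≤ α) (hr : β ≤ r) :
    _root_.UH (fun x y => g (-x) y) (-β) (-α) where
  cont := H.cont.comp (continuous_fst.neg.prodMk continuous_snd)
  lip := fun x => H.lip (-x)
  mono := by
    intro x x' y h1 h2 h3
    have := H.mono (-x') (-x) y (by linarith) (by linarith) (by linarith)
    rw [he] at this
    nlinarith

lemma Adm.uniq {g r e} (H : Adm g r e) {σ α β : ℝ} {y₁ y₂ : ℝ → ℝ} (hσ : |σ| ≤ 1) (h0 : 0 ≤ α)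
    (hr : β ≤ r) (h₁ : IsSol g σ α β y₁) (h₂ : IsSol g σ α β y₂) {x₀ : ℝ} (hx : x₀ ∈ Icc α β)
    (hag : y₁ x₀ = y₂ x₀) : ∀ s ∈ Icc α β, y₁ s = y₂ s := by
  rcases H.e_or with he | he
  · exact (H.UH he h0 hr).uniq hσ h₁ h₂ hx hag
  · intro s hs
    have := (H.UHneg he h0 hr).uniq (by rwa [abs_neg]) h₁.neg h₂.neg (e := -x₀)
      ⟨by linarith [hx.2], by linarith [hx.1]⟩ (by simpa using hag) (-s)
      ⟨by linarith [hs.2], by linarith [hs.1]⟩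
    simpa using this

def clp (r x : ℝ) : ℝ := max 0 (min r x)

lemma clp_mem {r : ℝ} (hr : 0 ≤ r) (x : ℝ) : clp r x ∈ Icc 0 r :=
  ⟨le_max_left _ _, max_le hr (min_le_left _ _)⟩

lemma clp_eq {r x : ℝ} (hx : x ∈ Icc 0 r) : clp r x = x := by
  rw [clp, min_eq_right hx.2, max_eq_right hx.1]

lemma clp_cont (r : ℝ) : Continuous (clp r) := by unfold clp; fun_prop

lemma clp_lip {r : ℝ} (hr : 0 ≤ r) (x x' : ℝ) : |clp r x - clp r x'| ≤ |x - x'| := by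
  rw [clp, clp]
  rcases le_total x x' with h | h
  · rw [abs_sub_comm, abs_sub_comm x, abs_of_nonneg (sub_nonneg.2 h)]
    rw [abs_le]; constructor <;> grind
  · rw [abs_of_nonneg (sub_nonneg.2 h)]
    rw [abs_le]; constructor <;> grind

open Classical in
def T0 (g : ℝ → ℝ → ℝ) (r σ x₁ y₁ : ℝ) : ℝ → ℝ :=
  if h : ∃ y, IsSol g σ 0 r y ∧ y x₁ = y₁ then choose h else 0

/-- value at `x` of the leaf through `(x₁,y₁)` -/
def T (g : ℝ → ℝ → ℝ) (r σ x₁ y₁ x : ℝ) : ℝ := T0 g r σ (clp r x₁) y₁ (clp r x)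

section
variable {g : ℝ → ℝ → ℝ} {r e σ : ℝ}

lemma Adm.T0_spec (H : Adm g r e) (hσ : |σ| ≤ 1) {x₁ : ℝ} (hx : x₁ ∈ Icc 0 r) (y₁ : ℝ) :
    IsSol g σ 0 r (T0 g r σ x₁ y₁) ∧ T0 g r σ x₁ y₁ x₁ = y₁ := by
  obtain ⟨K, hK0, hK⟩ := H.lipK
  obtain ⟨M, hM⟩ := H.bdd
  have h := exists_sol g K M hK0 hK hM σ hσ r x₁ hx y₁
  rw [T0, dif_pos h]
  exact Classical.choose_spec h

lemma Adm.T_isSol (H : Adm g r e) (hσ : |σ| ≤ 1) (x₁ y₁ : ℝ) : IsSol g σ 0 r (T g r σ x₁ y₁) := by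
  have := (H.T0_spec hσ (clp_mem H.r_pos.le x₁) y₁).1
  intro x hx
  have h := this x hx
  rw [show T g r σ x₁ y₁ x = T0 g r σ (clp r x₁) y₁ x by rw [T, clp_eq hx]]
  exact h.congr (fun z hz => by rw [T, clp_eq hz]) (by rw [T, clp_eq hx])

lemma Adm.T_self (H : Adm g r e) (hσ : |σ| ≤ 1) (x₁ y₁ : ℝ) : T g r σ x₁ y₁ x₁ = y₁ :=
  (H.T0_spec hσ (clp_mem H.r_pos.le x₁) y₁).2

lemma Adm.T_uniq (H : Adm g r e) (hσ : |σ| ≤ 1) {y : ℝ → ℝ} (hy : IsSol g σ 0 r y) {x₁ x y₁ : ℝ}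
    (hx₁ : x₁ ∈ Icc 0 r) (hx : x ∈ Icc 0 r) (h : y x₁ = y₁) : T g r σ x₁ y₁ x = y x :=
  H.uniq hσ le_rfl le_rfl (H.T_isSol hσ x₁ y₁) hy hx₁ (by rw [H.T_self hσ, h]) x hx

lemma T_clp (hr : 0 ≤ r) (x₁ y x : ℝ) : T g r σ (clp r x₁) y (clp r x) = T g r σ x₁ y x := by
  unfold T; rw [clp_eq (clp_mem hr _), clp_eq (clp_mem hr _)]

lemma Adm.T_comp (H : Adm g r e) (hσ : |σ| ≤ 1) (x₀ y x₁ x : ℝ) :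
    T g r σ x₁ (T g r σ x₀ y x₁) x = T g r σ x₀ y x := by
  have h0 := H.r_pos.le
  rw [← T_clp h0 x₁, ← T_clp h0 x₀ _ x₁, ← T_clp h0 x₀ _ x]
  exact H.T_uniq hσ (H.T_isSol hσ _ _) (clp_mem h0 _) (clp_mem h0 _) rfl

lemma Adm.T_lip (H : Adm g r e) (hσ : |σ| ≤ 1) : ∃ L, 0 ≤ L ∧ ∀ x₁ y x x',
    |T g r σ x₁ y x - T g r σ x₁ y x'| ≤ L * |x - x'| := by
  obtain ⟨M, hM⟩ := H.bdd
  refine ⟨√M, Real.sqrt_nonneg _, fun x₁ y x x' => ?_⟩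
  have h0 := H.r_pos.le
  rw [← T_clp h0 x₁ _ x, ← T_clp h0 x₁ _ x']
  have := sol_lip hσ (H.T_isSol hσ (clp r x₁) y) le_rfl le_rfl (q := √M)
    (fun s _ => Real.sqrt_le_sqrt ((le_abs_self _).trans (hM _ _))) _ (clp_mem h0 x) _ (clp_mem h0 x')
  exact this.trans (mul_le_mul_of_nonneg_left (clp_lip h0 x x') (Real.sqrt_nonneg _))

lemma Adm.T_contx (H : Adm g r e) (hσ : |σ| ≤ 1) (x₁ y : ℝ) : Continuous (T g r σ x₁ y) := by
  obtain ⟨L, hL0, hL⟩ := H.T_lip hσ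
  have : LipschitzWith (Real.toNNReal L) (T g r σ x₁ y) := by
    apply LipschitzWith.of_dist_le_mul
    intro p q
    rw [Real.dist_eq, Real.coe_toNNReal _ hL0]
    exact hL x₁ y p q
  exact this.continuous

lemma Adm.T_smono (H : Adm g r e) (hσ : |σ| ≤ 1) (x₁ x : ℝ) :
    StrictMono (fun y => T g r σ x₁ y x) := by
  intro y y' hyy
  by_contra hcon
  simp only [not_lt] at hcon
  have hc : Continuous (fun x => T g r σ x₁ y' x - T g r σ x₁ y x) :=
    (H.T_contx hσ x₁ y').sub (H.T_contx hσ x₁ y)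
  obtain ⟨z, hz⟩ := mem_range_of_exists_le_of_exists_ge hc (c := 0)
    ⟨x, by simpa using hcon⟩ ⟨x₁, by simp only [H.T_self hσ]; linarith⟩
  simp only [sub_eq_zero] at hz
  have h1 := H.T_comp hσ x₁ y z x₁
  have h2 := H.T_comp hσ x₁ y' z x₁
  rw [H.T_self hσ] at h1 h2
  rw [hz, h1] at h2
  linarith

lemma Adm.T_conty (H : Adm g r e) (hσ : |σ| ≤ 1) (x₁ x : ℝ) :
    Continuous (fun y => T g r σ x₁ y x) := by
  apply (H.T_smono hσ x₁ x).monotone.continuous_of_surjective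
  intro z
  exact ⟨T g r σ x z x₁, by simp only [H.T_comp hσ, H.T_self hσ]⟩

lemma Adm.T_cont (H : Adm g r e) (hσ : |σ| ≤ 1) :
    Continuous (fun q : ℝ × ℝ × ℝ => T g r σ q.1 q.2.1 q.2.2) := by
  obtain ⟨L, hL0, hL⟩ := H.T_lip hσ
  rw [continuous_iff_continuousAt]
  rintro ⟨x₁, y, x⟩
  have h1 : Tendsto (fun q : ℝ × ℝ × ℝ => T g r σ q.1 q.2.1 x₁) (nhds (x₁, y, x)) (nhds y) := by
    have hq : ∀ q : ℝ × ℝ × ℝ, |T g r σ q.1 q.2.1 x₁ - q.2.1| ≤ L * |x₁ - q.1| := by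
      intro q
      have := hL q.1 q.2.1 x₁ q.1
      rwa [H.T_self hσ] at this
    have hz : Tendsto (fun q : ℝ × ℝ × ℝ => T g r σ q.1 q.2.1 x₁ - q.2.1) (nhds (x₁, y, x)) (nhds 0) := by
      apply squeeze_zero_norm hq
      have : Continuous (fun q : ℝ × ℝ × ℝ => L * |x₁ - q.1|) := by fun_prop
      simpa using this.tendsto (x₁, y, x)
    have h2 : Tendsto (fun q : ℝ × ℝ × ℝ => q.2.1) (nhds (x₁, y, x)) (nhds y) :=
      (continuous_fst.comp continuous_snd).tendsto (x₁, y, x)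
    simpa using hz.add h2
  have h2 : Tendsto (fun q : ℝ × ℝ × ℝ => T g r σ q.1 q.2.1 x) (nhds (x₁, y, x))
      (nhds (T g r σ x₁ y x)) := by
    have := ((H.T_conty hσ x₁ x).tendsto y).comp h1
    refine this.congr fun q => ?_
    simp only [Function.comp, H.T_comp hσ]
  have hz : Tendsto (fun q : ℝ × ℝ × ℝ => T g r σ q.1 q.2.1 q.2.2 - T g r σ q.1 q.2.1 x)
      (nhds (x₁, y, x)) (nhds 0) := by
    apply squeeze_zero_norm (fun q => hL q.1 q.2.1 q.2.2 x)
    have : Continuous (fun q : ℝ × ℝ × ℝ => L * |q.2.2 - x|) := by fun_prop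
    simpa using this.tendsto (x₁, y, x)
  have := hz.add h2
  simpa [ContinuousAt] using this

lemma Adm.T_mono (H : Adm g r e) (x₁ y : ℝ) : Monotone (T g r 1 x₁ y) := by
  have hσ : |(1:ℝ)| ≤ 1 := by simp
  have h0 := H.r_pos.le
  have hm : MonotoneOn (T g r 1 x₁ y) (Icc 0 r) :=
    monotoneOn_of_hasDerivWithinAt_nonneg (convex_Icc 0 r) (H.T_contx hσ x₁ y).continuousOn
      (fun z hz => (H.T_isSol hσ x₁ y z (interior_subset hz)).mono interior_subset)
      (fun z _ => by rw [one_mul]; exact Real.sqrt_nonneg _)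
  intro x x' hxx
  rw [← T_clp h0 x₁ _ x, ← T_clp h0 x₁ _ x']
  have hcl : clp r x ≤ clp r x' := max_le_max le_rfl (min_le_min le_rfl hxx)
  have := hm (clp_mem h0 x) (clp_mem h0 x') hcl
  rwa [← T_clp h0 x₁ _ (clp r x), ← T_clp h0 x₁ _ (clp r x'), clp_eq (clp_mem h0 x), clp_eq (clp_mem h0 x')] at this

lemma Adm.T_anti (H : Adm g r e) (x₁ y : ℝ) : Antitone (T g r (-1) x₁ y) := by
  have hσ : |(-1:ℝ)| ≤ 1 := by simp
  have h0 := H.r_pos.le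
  have hm : AntitoneOn (T g r (-1) x₁ y) (Icc 0 r) :=
    antitoneOn_of_hasDerivWithinAt_nonpos (convex_Icc 0 r) (H.T_contx hσ x₁ y).continuousOn
      (fun z hz => (H.T_isSol hσ x₁ y z (interior_subset hz)).mono interior_subset)
      (fun z _ => by have := Real.sqrt_nonneg (g z (T g r (-1) x₁ y z)); linarith)
  intro x x' hxx
  rw [← T_clp h0 x₁ _ x, ← T_clp h0 x₁ _ x']
  have hcl : clp r x ≤ clp r x' := max_le_max le_rfl (min_le_min le_rfl hxx)
  have := hm (clp_mem h0 x) (clp_mem h0 x') hcl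
  rwa [← T_clp h0 x₁ _ (clp r x), ← T_clp h0 x₁ _ (clp r x'), clp_eq (clp_mem h0 x), clp_eq (clp_mem h0 x')] at this

/-- leaf constant on an interval implies `g ≤ 0` there -/
lemma Adm.nonpos_of_const (H : Adm g r e) (hσ : |σ| = 1) {x₁ y x x' : ℝ} (h0 : 0 ≤ x) (hxx : x < x')
    (hr : x' ≤ r) {v : ℝ} (hc : ∀ s ∈ Icc x x', T g r σ x₁ y s = v) :
    ∀ s ∈ Icc x x', g s v ≤ 0 := by
  intro s hs
  have h1 := ((H.T_isSol hσ.le x₁ y).mono h0 hr) s hs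
  have h2 : HasDerivWithinAt (T g r σ x₁ y) 0 (Icc x x') s :=
    (hasDerivWithinAt_const s _ v).congr (fun z hz => hc z hz) (hc s hs)
  have h3 := (uniqueDiffOn_Icc hxx s hs).eq_deriv _ h1 h2
  rw [hc s hs] at h3
  have hσ0 : σ ≠ 0 := by rintro rfl; simp at hσ
  have h4 := (mul_eq_zero.1 h3).resolve_left hσ0
  exact Real.sqrt_eq_zero'.1 h4

/-- S-case: below the zero set leaves are constant to the left -/
lemma Adm.const_left (H : Adm g r 1) (hσ : |σ| ≤ 1) {x y : ℝ} (hx : x ∈ Icc 0 r) (hG : g x y ≤ 0) :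
    ∀ s ∈ Icc 0 x, T g r σ x y s = y := by
  intro s hs
  have := (H.UH rfl le_rfl le_rfl).const_left hσ (H.T_isSol hσ x y) hx.1 hx.2
    (by rwa [H.T_self hσ]) s hs
  rwa [H.T_self hσ] at this

lemma Adm.const_right (H : Adm g r (-1)) (hσ : |σ| ≤ 1) {x y : ℝ} (hx : x ∈ Icc 0 r) (hG : g x y ≤ 0) :
    ∀ s ∈ Icc x r, T g r σ x y s = y := by
  intro s hs
  have := (H.UHneg rfl le_rfl le_rfl).const_left (by rwa [abs_neg]) (H.T_isSol hσ x y).neg (x := -x)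
    (by linarith [hx.2]) (by linarith [hx.1]) (by simpa [H.T_self hσ] using hG) (-s)
    ⟨by linarith [hs.2], by linarith [hs.1]⟩
  simpa [H.T_self hσ] using this

end


lemma image_Ioo_of_injOn {f : ℝ → ℝ} {a b : ℝ} (hab : a < b) (hf : ContinuousOn f (Ioo a b))
    (hi : InjOn f (Ioo a b)) {R : ℝ} (hb : ∀ x ∈ Ioo a b, |f x| ≤ R) :
    ∃ c d, c < d ∧ f '' Ioo a b = Ioo c d := by
  set J := f '' Ioo a b with hJ
  have hne : J.Nonempty := (nonempty_Ioo.2 hab).image f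
  have hpre : IsPreconnected J := isPreconnected_Ioo.image f hf
  have hlo : BddBelow J := ⟨-R, by rintro _ ⟨x, hx, rfl⟩; exact (abs_le.1 (hb x hx)).1⟩
  have hhi : BddAbove J := ⟨R, by rintro _ ⟨x, hx, rfl⟩; exact (abs_le.1 (hb x hx)).2⟩
  have hex : ∀ z ∈ J, (∃ z' ∈ J, z' < z) ∧ (∃ z' ∈ J, z < z') := by
    rintro _ ⟨x, hx, rfl⟩
    obtain ⟨x1, h1, h1'⟩ := exists_between hx.1
    obtain ⟨x2, h2, h2'⟩ := exists_between hx.2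
    have m1 : x1 ∈ Ioo a b := ⟨h1, h1'.trans hx.2⟩
    have m2 : x2 ∈ Ioo a b := ⟨hx.1.trans h2, h2'⟩
    rcases hf.strictMonoOn_of_injOn_Ioo hab hi with h | h
    · exact ⟨⟨f x1, ⟨x1, m1, rfl⟩, h m1 hx h1'⟩, ⟨f x2, ⟨x2, m2, rfl⟩, h hx m2 h2⟩⟩
    · exact ⟨⟨f x2, ⟨x2, m2, rfl⟩, h hx m2 h2⟩, ⟨f x1, ⟨x1, m1, rfl⟩, h m1 hx h1'⟩⟩
  refine ⟨sInf J, sSup J, ?_, ?_⟩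
  · obtain ⟨z, hz⟩ := hne
    obtain ⟨⟨z', hz', hlt⟩, -⟩ := hex z hz
    exact lt_of_le_of_lt (csInf_le hlo hz') (lt_of_lt_of_le hlt (le_csSup hhi hz))
  · apply Subset.antisymm
    · intro z hz
      obtain ⟨⟨z', hz', hlt⟩, ⟨z'', hz'', hlt'⟩⟩ := hex z hz
      exact ⟨lt_of_le_of_lt (csInf_le hlo hz') hlt, lt_of_lt_of_le hlt' (le_csSup hhi hz'')⟩
    · exact IsConnected.Ioo_csInf_csSup_subset ⟨hne, hpre⟩ hlo hhi

/-- normal form BDE -/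
def NF (g : ℝ → ℝ → ℝ) : (ℝ × ℝ) → (ℝ × ℝ) → ℝ := fun p v => v.2 ^ 2 - g |p.1| p.2 * v.1 ^ 2

/-- every integral curve is a graph -/
lemma curve_graph {g : ℝ → ℝ → ℝ} {γ : ℝ → ℝ × ℝ} {I : Set ℝ}
    (h : IsIntegralCurveOnBDE (NF g) γ I) (hne : I.Nonempty) {r : ℝ} (hr : ∀ t ∈ I, |(γ t).1| < r) :
    ∃ c d η dη, c < d ∧ Ioo c d ⊆ Ioo (-r) r ∧ γ '' I = (fun x => (x, η x)) '' Ioo c d ∧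
      ContinuousOn dη (Ioo c d) ∧ ∀ x ∈ Ioo c d, HasDerivAt η (dη x) x ∧ dη x ^ 2 = g |x| (η x) := by
  obtain ⟨⟨a, b, rfl⟩, dγ, hdc, hd⟩ := h
  have hab : a < b := nonempty_Ioo.1 hne
  have hd1 : ∀ t ∈ Ioo a b, HasDerivAt (fun t => (γ t).1) (dγ t).1 t := fun t ht => (hd t ht).1.fst
  have hd2 : ∀ t ∈ Ioo a b, HasDerivAt (fun t => (γ t).2) (dγ t).2 t := fun t ht => (hd t ht).1.snd
  have hn : ∀ t ∈ Ioo a b, (dγ t).1 ≠ 0 := by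
    intro t ht h0
    have h1 := (hd t ht).2.2
    simp only [NF, h0] at h1
    apply (hd t ht).2.1
    ext
    · exact h0
    · have : (dγ t).2 ^ 2 = 0 := by linarith
      simpa using this
  have hc1 : ContinuousOn (fun t => (γ t).1) (Ioo a b) := fun t ht => (hd1 t ht).continuousAt.continuousWithinAt
  have hinj : InjOn (fun t => (γ t).1) (Ioo a b) := by
    intro t ht s hs hts
    by_contra hne'
    wlog hlt : t < s generalizing t s
    · exact this hs ht hts.symm (Ne.symm hne') (lt_of_le_of_ne (not_lt.1 hlt) (Ne.symm hne'))
    have hsub : Icc t s ⊆ Ioo a b := fun z hz => ⟨ht.1.trans_le hz.1, hz.2.trans_lt hs.2⟩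
    obtain ⟨z, hz, hz0⟩ := exists_hasDerivAt_eq_zero hlt (hc1.mono hsub) hts
      (fun z hz => hd1 z (hsub (Ioo_subset_Icc_self hz)))
    exact hn z (hsub (Ioo_subset_Icc_self hz)) hz0
  obtain ⟨c, d, hcd, himg⟩ := image_Ioo_of_injOn hab hc1 hinj (R := r) (fun t ht => (hr t ht).le)
  set τ := Function.invFunOn (fun t => (γ t).1) (Ioo a b) with hτ
  have hτm : ∀ x ∈ Ioo c d, τ x ∈ Ioo a b ∧ (γ (τ x)).1 = x := by
    intro x hx
    rw [← himg] at hx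
    exact ⟨Function.invFunOn_mem hx, Function.invFunOn_eq hx⟩
  have hτl : ∀ t ∈ Ioo a b, τ (γ t).1 = t := fun t ht => hinj.leftInvOn_invFunOn ht
  have hmt : ∀ t ∈ Ioo a b, (γ t).1 ∈ Ioo c d := fun t ht => himg ▸ mem_image_of_mem _ ht
  have hτimg : τ '' Ioo c d = Ioo a b := by
    apply Subset.antisymm
    · rintro _ ⟨x, hx, rfl⟩; exact (hτm x hx).1
    · intro t ht; exact ⟨_, hmt t ht, hτl t ht⟩
  have hτc : ∀ x ∈ Ioo c d, ContinuousAt τ x := by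
    intro x hx
    have hnh : τ '' Ioo c d ∈ nhds (τ x) := by rw [hτimg]; exact Ioo_mem_nhds (hτm x hx).1.1 (hτm x hx).1.2
    rcases hc1.strictMonoOn_of_injOn_Ioo hab hinj with hm | hm
    · apply continuousAt_of_monotoneOn_of_image_mem_nhds (s := Ioo c d) _ (Ioo_mem_nhds hx.1 hx.2) hnh
      intro x hx x' hx' hxx
      by_contra hcon
      have := hm (hτm x' hx').1 (hτm x hx).1 (not_le.1 hcon)
      simp only [(hτm x' hx').2, (hτm x hx).2] at this
      linarith
    · have hanti : AntitoneOn τ (Ioo c d) := by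
        intro x hx x' hx' hxx
        by_contra hcon
        have := hm (hτm x hx).1 (hτm x' hx').1 (not_le.1 hcon)
        simp only [(hτm x' hx').2, (hτm x hx).2] at this
        linarith
      have h2 : ContinuousAt (fun x => -τ x) x := by
        apply continuousAt_of_monotoneOn_of_image_mem_nhds (s := Ioo c d) _ (Ioo_mem_nhds hx.1 hx.2)
        · have : (fun x => -τ x) '' Ioo c d = Neg.neg '' (τ '' Ioo c d) := by rw [image_image]
          rw [this, hτimg, image_neg_Ioo]
          exact Ioo_mem_nhds (neg_lt_neg (hτm x hx).1.2) (neg_lt_neg (hτm x hx).1.1)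
        · intro x hx x' hx' hxx
          exact neg_le_neg (hanti hx hx' hxx)
      have h3 := h2.neg
      have h4 : (-fun x => -τ x) = τ := by funext z; simp
      rwa [h4] at h3
  have hτd : ∀ x ∈ Ioo c d, HasDerivAt τ ((dγ (τ x)).1)⁻¹ x := by
    intro x hx
    apply HasDerivAt.of_local_left_inverse (hτc x hx) (hd1 _ (hτm x hx).1) (hn _ (hτm x hx).1)
    filter_upwards [Ioo_mem_nhds hx.1 hx.2] with z hz
    exact (hτm z hz).2
  have hτcon : ContinuousOn τ (Ioo c d) := fun x hx => (hτc x hx).continuousWithinAt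
  have hdτ : ContinuousOn (fun x => dγ (τ x)) (Ioo c d) := hdc.comp hτcon (fun x hx => (hτm x hx).1)
  refine ⟨c, d, fun x => (γ (τ x)).2, fun x => (dγ (τ x)).2 * ((dγ (τ x)).1)⁻¹, hcd, ?_, ?_, ?_, ?_⟩
  · intro x hx
    have := hr _ (hτm x hx).1
    rw [(hτm x hx).2] at this
    exact abs_lt.1 this
  · apply Subset.antisymm
    · rintro _ ⟨t, ht, rfl⟩
      exact ⟨_, hmt t ht, by ext <;> simp [hτl t ht]⟩
    · rintro _ ⟨x, hx, rfl⟩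
      exact ⟨τ x, (hτm x hx).1, by ext <;> simp [(hτm x hx).2]⟩
  · exact (continuous_snd.comp_continuousOn hdτ).mul
      ((continuous_fst.comp_continuousOn hdτ).inv₀ (fun x hx => hn _ (hτm x hx).1))
  · intro x hx
    refine ⟨(hd2 _ (hτm x hx).1).comp x (hτd x hx), ?_⟩
    have h1 := (hd _ (hτm x hx).1).2.2
    have h2 := hn _ (hτm x hx).1
    simp only [NF, (hτm x hx).2] at h1
    field_simp
    linarith


section
variable {g : ℝ → ℝ → ℝ} {r e : ℝ}

lemma Adm.noZero (H : Adm g r e) {c d : ℝ} {η : ℝ → ℝ} (hc : 0 ≤ c) (hd : d ≤ r)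
    (hnn : ∀ x ∈ Ioo c d, 0 ≤ g x (η x)) {x₀ : ℝ} (hx : x₀ ∈ Ioo c d) (hη : HasDerivAt η 0 x₀)
    (hg : g x₀ (η x₀) = 0) : False := by
  have hx0 : 0 < x₀ := hc.trans_lt hx.1
  have hO := (hasDerivAt_iff_isLittleO.1 hη).def hx0
  simp only [smul_zero, sub_zero, Real.norm_eq_abs] at hO
  have hI : ∀ᶠ x in nhds x₀, x ∈ Ioo c d := Ioo_mem_nhds hx.1 hx.2
  have hall := hO.and hI
  rcases H.e_or with he | he
  · have hfr : ∃ᶠ x in nhds x₀, x < x₀ := frequently_lt_nhds x₀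
    obtain ⟨x, hlt, h1, h2⟩ := (hfr.and_eventually hall).exists
    have h3 := H.mono x x₀ (η x₀) (hc.trans h2.1.le) hlt.le (hx.2.le.trans hd)
    have h4 := (abs_le.1 (H.lip x (η x) (η x₀))).2
    have h5 := hnn x h2
    rw [abs_sub_comm x, abs_of_pos (sub_pos.2 hlt)] at h1
    rw [he] at h3
    nlinarith [hc.trans_lt h2.1]
  · have hfr : ∃ᶠ x in nhds x₀, x₀ < x := frequently_gt_nhds x₀
    obtain ⟨x, hlt, h1, h2⟩ := (hfr.and_eventually hall).exists
    have h3 := H.mono x₀ x (η x₀) hx0.le hlt.le (h2.2.le.trans hd)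
    have h4 := (abs_le.1 (H.lip x (η x) (η x₀))).2
    have h5 := hnn x h2
    rw [abs_of_pos (sub_pos.2 hlt)] at h1
    rw [he] at h3
    nlinarith [hc.trans_lt h2.1]

lemma Adm.right_leaf (H : Adm g r e) {c d : ℝ} {η dη : ℝ → ℝ} (hc : 0 ≤ c) (hcd : c < d) (hd : d ≤ r)
    (hcont : ContinuousOn dη (Ioo c d))
    (hη : ∀ x ∈ Ioo c d, HasDerivAt η (dη x) x ∧ dη x ^ 2 = g x (η x)) :
    ∃ σ, (σ = 1 ∨ σ = -1) ∧ ∃ a, ∀ x ∈ Ioo c d, η x = T g r σ 0 a x ∧ dη x = σ * √(g x (η x)) := by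
  have hne : ∀ x ∈ Ioo c d, dη x ≠ 0 := by
    intro x hx h0
    refine H.noZero hc hd (η := η) (fun z hz => by rw [← (hη z hz).2]; positivity) hx
      (h0 ▸ (hη x hx).1) ?_
    rw [← (hη x hx).2, h0]; simp
  have hsgn : ∃ σ : ℝ, (σ = 1 ∨ σ = -1) ∧ ∀ x ∈ Ioo c d, dη x = σ * √(g x (η x)) := by
    have hsq : ∀ x ∈ Ioo c d, √(g x (η x)) = |dη x| := fun x hx => by
      rw [← (hη x hx).2, Real.sqrt_sq_eq_abs]
    have hpre : IsPreconnected (dη '' Ioo c d) := isPreconnected_Ioo.image _ hcont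
    by_cases hp : ∃ x ∈ Ioo c d, 0 < dη x
    · refine ⟨1, Or.inl rfl, fun x hx => ?_⟩
      rw [hsq x hx, one_mul, abs_of_pos]
      by_contra hcon
      obtain ⟨z, hz, hz0⟩ := hp
      have := hpre.ordConnected.out ⟨x, hx, rfl⟩ ⟨z, hz, rfl⟩ (⟨not_lt.1 hcon, hz0.le⟩ : (0:ℝ) ∈ Icc _ _)
      obtain ⟨w, hw, hw0⟩ := this
      exact hne w hw hw0
    · push Not at hp
      refine ⟨-1, Or.inr rfl, fun x hx => ?_⟩
      rw [hsq x hx, abs_of_nonpos (hp x hx)]; ring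
  obtain ⟨σ, hσ, hs⟩ := hsgn
  have hσ1 : |σ| ≤ 1 := by rcases hσ with rfl | rfl <;> simp
  obtain ⟨x₀, hx₀⟩ := exists_between hcd
  have hx₀' : x₀ ∈ Ioo c d := hx₀
  refine ⟨σ, hσ, T g r σ x₀ (η x₀) 0, fun x hx => ⟨?_, hs x hx⟩⟩
  rw [H.T_comp hσ1]
  have hsub : Icc (min x x₀) (max x x₀) ⊆ Ioo c d := fun z hz =>
    ⟨(lt_min hx.1 hx₀'.1).trans_le hz.1, hz.2.trans_lt (max_lt hx.2 hx₀'.2)⟩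
  have h0 : 0 ≤ min x x₀ := hc.trans (lt_min hx.1 hx₀'.1).le
  have hr : max x x₀ ≤ r := (max_lt hx.2 hx₀'.2).le.trans hd
  refine H.uniq hσ1 h0 hr (y₁ := η) ?_ ((H.T_isSol hσ1 x₀ (η x₀)).mono h0 hr)
    (x₀ := x₀) ⟨min_le_right _ _, le_max_right _ _⟩ (H.T_self hσ1 _ _).symm x ⟨min_le_left _ _, le_max_left _ _⟩
  intro z hz
  have := (hη z (hsub hz)).1
  rw [hs z (hsub hz)] at this
  exact this.hasDerivWithinAt

def gr (g : ℝ → ℝ → ℝ) (r σp σm a x : ℝ) : ℝ := if 0 ≤ x then T g r σp 0 a x else T g r σm 0 a (-x)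

structure LeafData (g : ℝ → ℝ → ℝ) (r c d σp σm a : ℝ) : Prop where
  hp : σp = 1 ∨ σp = -1
  hm : σm = 1 ∨ σm = -1
  sub : Ioo c d ⊆ Ioo (-r) r
  nn : ∀ x ∈ Ioo c d, 0 ≤ g |x| (gr g r σp σm a x)
  zero : 0 ∈ Ioo c d → σp = -σm ∨ g 0 a = 0

lemma abs_le_of_or {σ : ℝ} (h : σ = 1 ∨ σ = -1) : |σ| ≤ 1 := by rcases h with rfl | rfl <;> simp
lemma abs_eq_of_or {σ : ℝ} (h : σ = 1 ∨ σ = -1) : |σ| = 1 := by rcases h with rfl | rfl <;> simp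

lemma Adm.leaf_of_graph (H : Adm g r e) {c d : ℝ} {η dη : ℝ → ℝ} (hcd : c < d)
    (hsub : Ioo c d ⊆ Ioo (-r) r) (hcont : ContinuousOn dη (Ioo c d))
    (hη : ∀ x ∈ Ioo c d, HasDerivAt η (dη x) x ∧ dη x ^ 2 = g |x| (η x)) :
    ∃ σp σm a, LeafData g r c d σp σm a ∧ ∀ x ∈ Ioo c d, η x = gr g r σp σm a x := by
  have hr0 := H.r_pos
  have hcr : -r ≤ c := by
    by_contra hcon
    push Not at hcon
    obtain ⟨z, hz⟩ := exists_between (lt_min hcd hcon)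
    have := (hsub ⟨hz.1, hz.2.trans_le (min_le_left _ _)⟩).1
    linarith [hz.2.trans_le (min_le_right d (-r))]
  have hdr : d ≤ r := by
    by_contra hcon
    push Not at hcon
    obtain ⟨z, hz⟩ := exists_between (max_lt hcd hcon)
    have := (hsub ⟨(le_max_left _ _).trans_lt hz.1, hz.2⟩).2
    linarith [(le_max_right c r).trans_lt hz.1]
  have hnn : ∀ x ∈ Ioo c d, 0 ≤ g |x| (η x) := fun x hx => by rw [← (hη x hx).2]; positivity
  have fin : ∀ {σp σm a : ℝ}, (σp = 1 ∨ σp = -1) → (σm = 1 ∨ σm = -1) →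
      (0 ∈ Ioo c d → σp = -σm ∨ g 0 a = 0) → (∀ x ∈ Ioo c d, η x = gr g r σp σm a x) →
      ∃ σp σm a, LeafData g r c d σp σm a ∧ ∀ x ∈ Ioo c d, η x = gr g r σp σm a x :=
    fun {σp σm a} h1 h2 h3 h4 => ⟨σp, σm, a, ⟨h1, h2, hsub, fun x hx => h4 x hx ▸ hnn x hx, h3⟩, h4⟩
  -- right part
  have right : ∀ c', c ≤ c' → 0 ≤ c' → c' < d → ∃ σ, (σ = 1 ∨ σ = -1) ∧ ∃ a, ∀ x ∈ Ioo c' d,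
      η x = T g r σ 0 a x ∧ dη x = σ * √(g x (η x)) := by
    intro c' h1 h2 h3
    have hs : Ioo c' d ⊆ Ioo c d := Ioo_subset_Ioo h1 le_rfl
    refine H.right_leaf h2 h3 hdr (hcont.mono hs) (fun x hx => ⟨(hη x (hs hx)).1, ?_⟩)
    rw [(hη x (hs hx)).2, abs_of_pos (h2.trans_lt hx.1)]
  have left : ∀ d', d' ≤ d → d' ≤ 0 → c < d' → ∃ σ, (σ = 1 ∨ σ = -1) ∧ ∃ a, ∀ x ∈ Ioo c d',
      η x = T g r σ 0 a (-x) ∧ -dη x = σ * √(g (-x) (η x)) := by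
    intro d' h1 h2 h3
    have hs : ∀ x ∈ Ioo (-d') (-c), -x ∈ Ioo c d := fun x hx => ⟨by linarith [hx.2], by linarith [hx.1]⟩
    obtain ⟨σ, hσ, a, ha⟩ := H.right_leaf (c := -d') (d := -c) (η := fun x => η (-x)) (dη := fun x => -dη (-x))
      (by linarith) (by linarith) (by linarith)
      ((hcont.comp continuousOn_neg hs).neg) (fun x hx => ⟨by
        have := (hη _ (hs x hx)).1.scomp x (hasDerivAt_neg x)
        exact this.congr_deriv (by simp), by
        have hx0 : 0 < x := by linarith [hx.1]
        rw [neg_sq, (hη _ (hs x hx)).2, abs_neg, abs_of_pos hx0]⟩)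
    refine ⟨σ, hσ, a, fun x hx => ?_⟩
    have := ha (-x) ⟨by linarith [hx.2], by linarith [hx.1]⟩
    simpa using this
  by_cases h0 : 0 ≤ c
  · obtain ⟨σ, hσ, a, ha⟩ := right c le_rfl h0 hcd
    exact fin (σm := 1) (a := a) hσ (Or.inl rfl) (fun h => absurd h.1 (not_lt.2 h0)) (fun x hx => by
      rw [gr, if_pos (h0.trans hx.1.le)]; exact (ha x hx).1)
  by_cases h1 : d ≤ 0
  · obtain ⟨σ, hσ, a, ha⟩ := left d le_rfl h1 hcd
    exact fin (σp := 1) (a := a) (Or.inl rfl) hσ (fun h => absurd h.2 (not_lt.2 h1)) (fun x hx => by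
      rw [gr, if_neg (not_le.2 (hx.2.trans_le h1))]; exact (ha x hx).1)
  push Not at h0 h1
  obtain ⟨σp, hσp, ap, hp⟩ := right 0 h0.le le_rfl h1
  obtain ⟨σm, hσm, am, hm⟩ := left 0 h1.le le_rfl h0
  have hσp1 := abs_le_of_or hσp
  have hσm1 := abs_le_of_or hσm
  have hmem : (0:ℝ) ∈ Ioo c d := ⟨h0, h1⟩
  have hηc : ContinuousAt η 0 := (hη 0 hmem).1.continuousAt
  have hdc : ContinuousAt dη 0 := hcont.continuousAt (Ioo_mem_nhds h0 h1)
  have e1 : ∀ᶠ x in nhdsWithin (0:ℝ) (Ioi 0), x ∈ Ioo 0 d := Ioo_mem_nhdsGT h1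
  have e2 : ∀ᶠ x in nhdsWithin (0:ℝ) (Iio 0), x ∈ Ioo c 0 := Ioo_mem_nhdsLT h0
  have hsq : ContinuousAt (fun x => √(g x (η x))) 0 := by
    have : ContinuousAt (fun x => g x (η x)) 0 :=
      (H.cont.continuousAt (x := ((0:ℝ), η 0))).comp (f := fun x => (x, η x)) (continuousAt_id.prodMk hηc)
    exact Real.continuous_sqrt.continuousAt.comp this
  have hsq' : ContinuousAt (fun x => √(g (-x) (η x))) 0 := by
    have hc' : Continuous (fun p : ℝ × ℝ => g (-p.1) p.2) :=
      H.cont.comp (continuous_fst.neg.prodMk continuous_snd)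
    have : ContinuousAt (fun x => g (-x) (η x)) 0 :=
      (hc'.continuousAt (x := ((0:ℝ), η 0))).comp (f := fun x => (x, η x)) (continuousAt_id.prodMk hηc)
    exact Real.continuous_sqrt.continuousAt.comp this
  have hap : η 0 = ap := by
    have t1 : Tendsto η (nhdsWithin 0 (Ioi 0)) (nhds (η 0)) := hηc.tendsto.mono_left nhdsWithin_le_nhds
    have t2 : Tendsto (T g r σp 0 ap) (nhdsWithin 0 (Ioi 0)) (nhds (T g r σp 0 ap 0)) :=
      ((H.T_contx hσp1 0 ap).tendsto 0).mono_left nhdsWithin_le_nhds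
    rw [H.T_self hσp1] at t2
    exact tendsto_nhds_unique t1 (t2.congr' (e1.mono fun x hx => (hp x hx).1.symm))
  have ham : η 0 = am := by
    have t1 : Tendsto η (nhdsWithin 0 (Iio 0)) (nhds (η 0)) := hηc.tendsto.mono_left nhdsWithin_le_nhds
    have t2 : Tendsto (fun x => T g r σm 0 am (-x)) (nhdsWithin 0 (Iio 0)) (nhds (T g r σm 0 am (-0))) :=
      (((H.T_contx hσm1 0 am).comp continuous_neg).tendsto 0).mono_left nhdsWithin_le_nhds
    rw [neg_zero, H.T_self hσm1] at t2
    exact tendsto_nhds_unique t1 (t2.congr' (e2.mono fun x hx => (hm x hx).1.symm))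
  have hdp : dη 0 = σp * √(g 0 (η 0)) := by
    have t1 : Tendsto dη (nhdsWithin 0 (Ioi 0)) (nhds (dη 0)) := hdc.tendsto.mono_left nhdsWithin_le_nhds
    have t2 : Tendsto (fun x => σp * √(g x (η x))) (nhdsWithin 0 (Ioi 0)) (nhds (σp * √(g 0 (η 0)))) :=
      (hsq.tendsto.const_mul σp).mono_left nhdsWithin_le_nhds
    exact tendsto_nhds_unique t1 (t2.congr' (e1.mono fun x hx => (hp x hx).2.symm))
  have hdm : -dη 0 = σm * √(g 0 (η 0)) := by
    have t1 : Tendsto (fun x => -dη x) (nhdsWithin 0 (Iio 0)) (nhds (-dη 0)) :=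
      hdc.neg.tendsto.mono_left nhdsWithin_le_nhds
    have t2 : Tendsto (fun x => σm * √(g (-x) (η x))) (nhdsWithin 0 (Iio 0)) (nhds (σm * √(g (-0) (η 0)))) :=
      (hsq'.tendsto.const_mul σm).mono_left nhdsWithin_le_nhds
    rw [neg_zero] at t2
    exact tendsto_nhds_unique t1 (t2.congr' (e2.mono fun x hx => (hm x hx).2.symm))
  refine fin (a := ap) hσp hσm ?_ ?_
  · intro _
    rw [← hap]
    by_cases hz : √(g 0 (η 0)) = 0
    · right
      exact le_antisymm (Real.sqrt_eq_zero'.1 hz) (by simpa using hnn 0 hmem)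
    · left
      apply mul_right_cancel₀ hz
      linarith
  · intro x hx
    rw [gr]
    split_ifs with hx0
    · rcases eq_or_lt_of_le hx0 with rfl | hlt
      · rw [H.T_self hσp1]; exact hap
      · exact (hp x ⟨hlt, hx.2⟩).1
    · rw [← hap, ham]
      exact (hm x ⟨hx.1, not_le.1 hx0⟩).1

lemma Adm.gr_cont (H : Adm g r e) {σp σm : ℝ} (hp : |σp| ≤ 1) (hm : |σm| ≤ 1) (a : ℝ) :
    Continuous (gr g r σp σm a) := by
  unfold gr
  refine Continuous.if_le (H.T_contx hp 0 a) ((H.T_contx hm 0 a).comp continuous_neg)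
    continuous_const continuous_id ?_
  rintro x rfl
  simp [H.T_self hp, H.T_self hm]

lemma Adm.curve_of_leaf (H : Adm g r e) {c d σp σm a : ℝ} (h : LeafData g r c d σp σm a) :
    IsIntegralCurveOnBDE (NF g) (fun x => (x, gr g r σp σm a x)) (Ioo c d) := by
  have hp := abs_le_of_or h.hp
  have hm := abs_le_of_or h.hm
  set s : ℝ → ℝ := fun x => if 0 ≤ x then σp else -σm with hs
  set w : ℝ → ℝ := fun x => √(g |x| (gr g r σp σm a x)) with hw
  have hgc := H.gr_cont hp hm a
  have hwc : Continuous w := Real.continuous_sqrt.comp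
    (H.cont.comp (continuous_abs.prodMk hgc))
  have hss : ∀ x, s x ^ 2 = 1 := by
    intro x; simp only [hs]; split_ifs
    · rcases h.hp with h | h <;> rw [h] <;> norm_num
    · rcases h.hm with h | h <;> rw [h] <;> norm_num
  have hsa : ∀ x, |s x| = 1 := fun x => by
    have := sq_abs (s x); rw [hss] at this
    exact (pow_eq_one_iff_of_nonneg (abs_nonneg _) two_ne_zero).1 this
  have hR : ∀ x ∈ Ico 0 r, HasDerivWithinAt (gr g r σp σm a) (σp * w x) (Ici x) x := by
    intro x hx
    have h1 := H.T_isSol hp 0 a x ⟨hx.1, hx.2.le⟩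
    have e1 : T g r σp 0 a x = gr g r σp σm a x := by rw [gr, if_pos hx.1]
    have h2 : HasDerivWithinAt (T g r σp 0 a) (σp * w x) (Ici x) x := by
      simp only [hw, abs_of_nonneg hx.1, ← e1]
      exact h1.mono_of_mem_nhdsWithin (mem_of_superset (Icc_mem_nhdsGE hx.2)
        (Icc_subset_Icc hx.1 le_rfl))
    exact h2.congr (fun z hz => by rw [gr, if_pos (hx.1.trans hz)]) e1.symm
  have hL : ∀ x ∈ Ioc (-r) 0, HasDerivWithinAt (gr g r σp σm a) (-σm * w x) (Iic x) x := by
    intro x hx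
    have h1 := H.T_isSol hm 0 a (-x) ⟨by linarith [hx.2], by linarith [hx.1]⟩
    have egr : ∀ z ≤ 0, gr g r σp σm a z = T g r σm 0 a (-z) := by
      intro z hz
      rw [gr]; split_ifs with h0
      · have : z = 0 := le_antisymm hz h0
        rw [this, neg_zero, H.T_self hp, H.T_self hm]
      · rfl
    have h2 : HasDerivWithinAt (fun z => T g r σm 0 a (-z)) (-σm * w x) (Iic x) x := by
      have h3 := h1.scomp_of_eq x (s := Ioc (-r) x) (h := fun z => -z)
        (hasDerivAt_neg x).hasDerivWithinAt (fun z hz => ⟨by linarith [hz.2, hx.2], by linarith [hz.1]⟩) rfl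
      have h4 := h3.mono_of_mem_nhdsWithin (Ioc_mem_nhdsLE hx.1)
      refine h4.congr_deriv ?_
      simp only [hw, abs_of_nonpos hx.2, egr x hx.2, smul_eq_mul]; ring
    exact h2.congr (fun z hz => egr z (le_trans hz hx.2)) (egr x hx.2)
  refine ⟨⟨c, d, rfl⟩, fun x => (1, s x * w x), ?_, ?_⟩
  · apply continuousOn_const.prodMk
    intro x hx
    apply ContinuousAt.continuousWithinAt
    rcases lt_trichotomy x 0 with h0 | h0 | h0
    · have : (fun x => s x * w x) =ᶠ[nhds x] fun x => -σm * w x := by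
        filter_upwards [Iio_mem_nhds h0] with z hz
        simp only [hs, if_neg (not_le.2 (mem_Iio.1 hz))]
      exact (continuousAt_const.mul hwc.continuousAt).congr this.symm
    · subst h0
      rcases h.zero hx with hz | hz
      · have : s = fun _ => σp := by
          funext z; simp only [hs]; split_ifs
          · rfl
          · exact hz.symm
        rw [this]
        exact continuousAt_const.mul hwc.continuousAt
      · have hw0 : w 0 = 0 := by
          simp only [hw, abs_zero, gr, le_refl, if_true, H.T_self hp, hz, Real.sqrt_zero]
        have : Tendsto (fun x => s x * w x) (nhds 0) (nhds 0) := by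
          apply squeeze_zero_norm (a := fun x => |w x|)
          · intro x; rw [Real.norm_eq_abs, abs_mul, hsa, one_mul]
          · have := hwc.abs.tendsto 0
            simpa [hw0] using this
        simpa [ContinuousAt, hw0] using this
    · have : (fun x => s x * w x) =ᶠ[nhds x] fun x => σp * w x := by
        filter_upwards [Ioi_mem_nhds h0] with z hz
        simp only [hs, if_pos (le_of_lt (mem_Ioi.1 hz))]
      exact (continuousAt_const.mul hwc.continuousAt).congr this.symm
  · intro x hx
    have hxr := h.sub hx
    refine ⟨?_, by simp, ?_⟩
    · apply (hasDerivAt_id x).prodMk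
      rcases lt_trichotomy x 0 with h0 | h0 | h0
      · have h1 := H.T_isSol hm 0 a (-x) ⟨by linarith, by linarith [hxr.1]⟩
        have h2 := h1.hasDerivAt (Icc_mem_nhds (by linarith) (by linarith [hxr.1]))
        have h3 := h2.scomp x (hasDerivAt_neg x)
        have e1 : gr g r σp σm a x = T g r σm 0 a (-x) := by rw [gr, if_neg (not_le.2 h0)]
        have h4 : gr g r σp σm a =ᶠ[nhds x] (T g r σm 0 a ∘ Neg.neg) := by
          filter_upwards [Iio_mem_nhds h0] with z hz
          rw [gr, if_neg (not_le.2 (mem_Iio.1 hz))]; rfl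
        refine (h3.congr_of_eventuallyEq h4).congr_deriv ?_
        simp only [hs, hw, if_neg (not_le.2 h0), abs_of_neg h0, e1, smul_eq_mul]; ring
      · subst h0
        have h1 := hR 0 ⟨le_rfl, H.r_pos⟩
        have h2 := hL 0 ⟨by linarith [H.r_pos], le_rfl⟩
        have e1 : -σm * w 0 = σp * w 0 := by
          rcases h.zero hx with hz | hz
          · rw [hz]
          · have hw0 : w 0 = 0 := by
              simp only [hw, abs_zero, gr, le_refl, if_true, H.T_self hp, hz, Real.sqrt_zero]
            rw [hw0]; ring
        rw [e1] at h2
        have h3 := h1.union h2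
        rw [union_comm, Iic_union_Ici, hasDerivWithinAt_univ] at h3
        simpa [hs] using h3
      · have h1 := H.T_isSol hp 0 a x ⟨h0.le, hxr.2.le⟩
        have h2 := h1.hasDerivAt (Icc_mem_nhds h0 hxr.2)
        have e1 : gr g r σp σm a x = T g r σp 0 a x := by rw [gr, if_pos h0.le]
        have h4 : gr g r σp σm a =ᶠ[nhds x] (T g r σp 0 a) := by
          filter_upwards [Ioi_mem_nhds h0] with z hz
          rw [gr, if_pos (le_of_lt (mem_Ioi.1 hz))]
        refine (h2.congr_of_eventuallyEq h4).congr_deriv ?_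
        simp only [hs, hw, if_pos h0.le, abs_of_pos h0, e1]
    · simp only [NF]
      have := Real.sq_sqrt (h.nn x hx)
      have h1 : (s x * w x) ^ 2 = g |x| (gr g r σp σm a x) := by
        rw [mul_pow, hss, one_mul]; exact this
      rw [h1]; ring
end


def Psi (g : ℝ → ℝ → ℝ) (r x y : ℝ) : ℝ × ℝ × ℝ := (T g r 1 x y 0, T g r (-1) x y 0, max (-g x y) 0)

section
variable {g : ℝ → ℝ → ℝ} {r e : ℝ}

lemma Adm.Psi_cont (H : Adm g r e) : Continuous (fun p : ℝ × ℝ => Psi g r p.1 p.2) := by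
  unfold Psi
  have h1 : Continuous (fun p : ℝ × ℝ => T g r 1 p.1 p.2 0) :=
    (H.T_cont (by simp)).comp (continuous_fst.prodMk (continuous_snd.prodMk continuous_const))
  have h2 : Continuous (fun p : ℝ × ℝ => T g r (-1) p.1 p.2 0) :=
    (H.T_cont (by simp)).comp (continuous_fst.prodMk (continuous_snd.prodMk continuous_const))
  exact h1.prodMk (h2.prodMk (H.cont.neg.max continuous_const))

lemma Adm.T_back (H : Adm g r e) {σ : ℝ} (hσ : |σ| ≤ 1) (x y : ℝ) : T g r σ 0 (T g r σ x y 0) x = y := by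
  rw [H.T_comp hσ, H.T_self hσ]

lemma Adm.T_forth (H : Adm g r e) {σ : ℝ} (hσ : |σ| ≤ 1) (x a : ℝ) : T g r σ x (T g r σ 0 a x) 0 = a := by
  rw [H.T_comp hσ, H.T_self hσ]

lemma Adm.strict (H : Adm g r e) {x x' y : ℝ} (h0 : 0 ≤ x) (hx : x < x') (hr : x' ≤ r) : g x y ≠ g x' y := by
  intro h
  have := H.mono x x' y h0 hx.le hr
  rw [h] at this
  nlinarith

lemma Adm.Psi_inj (H : Adm g r e) {x y x' y' : ℝ} (hx : x ∈ Icc 0 r) (hx' : x' ∈ Icc 0 r)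
    (h : Psi g r x y = Psi g r x' y') : x = x' ∧ y = y' := by
  have s1 : |(1:ℝ)| ≤ 1 := by simp
  have s2 : |(-1:ℝ)| ≤ 1 := by simp
  simp only [Psi, Prod.mk.injEq] at h
  by_cases hxx : x = x'
  · subst hxx
    refine ⟨rfl, ?_⟩
    rw [← H.T_back s1 x y, ← H.T_back s1 x y', h.1]
  exfalso
  wlog hlt : x < x' generalizing x y x' y'
  · exact this hx' hx ⟨h.1.symm, h.2.1.symm, h.2.2.symm⟩ (Ne.symm hxx) (lt_of_le_of_ne (not_lt.1 hlt) (Ne.symm hxx))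
  set a := T g r 1 x y 0 with ha
  set b := T g r (-1) x y 0 with hb
  have e1 : T g r 1 0 a x = y := H.T_back s1 x y
  have e2 : T g r 1 0 a x' = y' := by rw [h.1]; exact H.T_back s1 x' y'
  have e3 : T g r (-1) 0 b x = y := H.T_back s2 x y
  have e4 : T g r (-1) 0 b x' = y' := by rw [h.2.1]; exact H.T_back s2 x' y'
  have m1 := H.T_mono 0 a hlt.le
  have m2 := H.T_anti 0 b hlt.le
  have hy : y = y' := by linarith
  have hc : ∀ s ∈ Icc x x', T g r 1 0 a s = y := by
    intro s hs
    have n1 := H.T_mono 0 a hs.1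
    have n2 := H.T_mono 0 a hs.2
    linarith
  have hneg := H.nonpos_of_const (by simp) hx.1 hlt hx'.2 hc
  have q1 := hneg x ⟨le_rfl, hlt.le⟩
  have q2 := hneg x' ⟨hlt.le, le_rfl⟩
  have h3 := h.2.2
  rw [← hy, max_eq_left (by linarith), max_eq_left (by linarith)] at h3
  exact H.strict (y := y) hx.1 hlt hx'.2 (by linarith)

lemma Adm.Psi_zero (H : Adm g r e) (a : ℝ) : Psi g r 0 a = (a, a, max (-g 0 a) 0) := by
  simp [Psi, H.T_self]

end

structure MatchD (g₁ : ℝ → ℝ → ℝ) (r₁ : ℝ) (g₂ : ℝ → ℝ → ℝ) (r₂ : ℝ) (θ θ' : ℝ → ℝ) (δ : ℝ) : Prop where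
  δ_pos : 0 < δ
  δ_le : δ ≤ r₁
  cont : Continuous θ
  inv : ∀ a, θ' (θ a) = a
  inv' : ∀ a, θ (θ' a) = a
  θ0 : θ 0 = 0
  axis : ∀ a, (g₁ 0 a ≤ 0 ∨ g₂ 0 (θ a) ≤ 0) → g₁ 0 a = g₂ 0 (θ a)
  mat : ∀ x ∈ Icc 0 δ, ∀ y, |y| ≤ δ → ∃ x' ∈ Icc 0 r₂, ∃ y', Psi g₂ r₂ x' y' =
    (θ (T g₁ r₁ 1 x y 0), θ (T g₁ r₁ (-1) x y 0), max (-g₁ x y) 0)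

def BRel (g₁ : ℝ → ℝ → ℝ) (r₁ : ℝ) (g₂ : ℝ → ℝ → ℝ) (r₂ : ℝ) (θ : ℝ → ℝ) (p q : ℝ × ℝ) : Prop :=
  |p.1| ≤ r₁ ∧ |q.1| ≤ r₂ ∧ Psi g₂ r₂ |q.1| q.2 =
    (θ (T g₁ r₁ 1 |p.1| p.2 0), θ (T g₁ r₁ (-1) |p.1| p.2 0), max (-g₁ |p.1| p.2) 0) ∧ 0 ≤ p.1 * q.1

section
variable {g₁ g₂ : ℝ → ℝ → ℝ} {r₁ r₂ e₁ e₂ δ : ℝ} {θ θ' : ℝ → ℝ}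

lemma BRel.symm (hinv : ∀ a, θ' (θ a) = a) {p q : ℝ × ℝ} (h : BRel g₁ r₁ g₂ r₂ θ p q) :
    BRel g₂ r₂ g₁ r₁ θ' q p := by
  obtain ⟨h1, h2, h3, h4⟩ := h
  refine ⟨h2, h1, ?_, by rwa [mul_comm]⟩
  simp only [Psi, Prod.mk.injEq] at h3 ⊢
  obtain ⟨a1, a2, a3⟩ := h3
  rw [a1, a2, a3, hinv, hinv]
  exact ⟨rfl, rfl, rfl⟩

lemma MatchD.rel_axis (H₁ : Adm g₁ r₁ e₁) (H₂ : Adm g₂ r₂ e₂) (M : MatchD g₁ r₁ g₂ r₂ θ θ' δ) (a : ℝ) :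
    BRel g₁ r₁ g₂ r₂ θ (0, a) (0, θ a) := by
  refine ⟨by simpa using H₁.r_pos.le, by simpa using H₂.r_pos.le, ?_, by simp⟩
  simp only [abs_zero, H₂.Psi_zero, Prod.mk.injEq]
  rw [H₁.T_self (by simp), H₁.T_self (by simp)]
  refine ⟨rfl, rfl, ?_⟩
  by_cases h : g₁ 0 a ≤ 0 ∨ g₂ 0 (θ a) ≤ 0
  · rw [M.axis a h]
  · push Not at h
    rw [max_eq_right (by linarith), max_eq_right (by linarith)]

lemma BRel.snd_zero (H₁ : Adm g₁ r₁ e₁) (H₂ : Adm g₂ r₂ e₂) (M : MatchD g₁ r₁ g₂ r₂ θ θ' δ) {p q : ℝ × ℝ}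
    (h : BRel g₁ r₁ g₂ r₂ θ p q) (hp : p.1 = 0) : q.1 = 0 := by
  have h0 := (M.rel_axis H₁ H₂ p.2).2.2.1
  have h1 := h.2.2.1
  rw [hp] at h1
  rw [← h0] at h1
  have := (H₂.Psi_inj ⟨abs_nonneg _, h.2.1⟩ ⟨abs_nonneg _, by simpa using H₂.r_pos.le⟩ h1).1
  simpa using this

lemma BRel.fst_zero (H₁ : Adm g₁ r₁ e₁) (H₂ : Adm g₂ r₂ e₂) (M : MatchD g₁ r₁ g₂ r₂ θ θ' δ) {p q : ℝ × ℝ}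
    (h : BRel g₁ r₁ g₂ r₂ θ p q) (hq : q.1 = 0) : p.1 = 0 := by
  have h0 := ((M.rel_axis H₁ H₂ (θ' q.2)).symm M.inv).2.2.1
  have h1 := (h.symm M.inv).2.2.1
  rw [M.inv'] at h0
  rw [hq] at h1
  rw [← h0] at h1
  have := (H₁.Psi_inj ⟨abs_nonneg _, h.1⟩ ⟨abs_nonneg _, by simpa using H₁.r_pos.le⟩ h1).1
  simpa using this

lemma BRel.uniq (H₁ : Adm g₁ r₁ e₁) (H₂ : Adm g₂ r₂ e₂) (M : MatchD g₁ r₁ g₂ r₂ θ θ' δ) {p q q' : ℝ × ℝ}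
    (h : BRel g₁ r₁ g₂ r₂ θ p q) (h' : BRel g₁ r₁ g₂ r₂ θ p q') : q = q' := by
  obtain ⟨k1, k2⟩ := H₂.Psi_inj ⟨abs_nonneg _, h.2.1⟩ ⟨abs_nonneg _, h'.2.1⟩ (h.2.2.1.trans h'.2.2.1.symm)
  refine Prod.ext ?_ k2
  by_cases hp : p.1 = 0
  · rw [h.snd_zero H₁ H₂ M hp, h'.snd_zero H₁ H₂ M hp]
  · rcases abs_eq_abs.1 k1 with hk | hk
    · exact hk
    · have h4 := h.2.2.2
      have h5 := h'.2.2.2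
      rw [hk] at h4
      have : p.1 * q'.1 = 0 := by linarith
      have := (mul_eq_zero.1 this).resolve_left hp
      rw [hk, this]; simp

lemma BRel.uniq' (H₁ : Adm g₁ r₁ e₁) (H₂ : Adm g₂ r₂ e₂) (M : MatchD g₁ r₁ g₂ r₂ θ θ' δ) {p p' q : ℝ × ℝ}
    (h : BRel g₁ r₁ g₂ r₂ θ p q) (h' : BRel g₁ r₁ g₂ r₂ θ p' q) : p = p' := by
  obtain ⟨k1, k2⟩ := H₁.Psi_inj ⟨abs_nonneg _, h.1⟩ ⟨abs_nonneg _, h'.1⟩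
    ((h.symm M.inv).2.2.1.trans (h'.symm M.inv).2.2.1.symm)
  refine Prod.ext ?_ k2
  by_cases hp : q.1 = 0
  · rw [h.fst_zero H₁ H₂ M hp, h'.fst_zero H₁ H₂ M hp]
  · rcases abs_eq_abs.1 k1 with hk | hk
    · exact hk
    · have h4 := h.2.2.2
      have h5 := h'.2.2.2
      rw [hk] at h4
      have : p'.1 * q.1 = 0 := by linarith
      have := (mul_eq_zero.1 this).resolve_right hp
      rw [hk, this]; simp

lemma BRel.closed (H₁ : Adm g₁ r₁ e₁) (H₂ : Adm g₂ r₂ e₂) (hθ : Continuous θ) :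
    IsClosed {z : (ℝ × ℝ) × (ℝ × ℝ) | BRel g₁ r₁ g₂ r₂ θ z.1 z.2} := by
  have c1 : Continuous (fun z : (ℝ × ℝ) × (ℝ × ℝ) => (|z.1.1|, z.1.2)) := by fun_prop
  have c2 : Continuous (fun z : (ℝ × ℝ) × (ℝ × ℝ) => (|z.2.1|, z.2.2)) := by fun_prop
  have p1 := H₁.Psi_cont.comp c1
  have p2 := H₂.Psi_cont.comp c2
  have hΘ : Continuous (fun w : ℝ × ℝ × ℝ => (θ w.1, θ w.2.1, w.2.2)) := by fun_prop
  have p3 := hΘ.comp p1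
  have k1 : IsClosed {z : (ℝ × ℝ) × (ℝ × ℝ) | |z.1.1| ≤ r₁} := isClosed_le (by fun_prop) continuous_const
  have k2 : IsClosed {z : (ℝ × ℝ) × (ℝ × ℝ) | |z.2.1| ≤ r₂} := isClosed_le (by fun_prop) continuous_const
  have k3 : IsClosed {z : (ℝ × ℝ) × (ℝ × ℝ) | 0 ≤ z.1.1 * z.2.1} := isClosed_le continuous_const (by fun_prop)
  exact k1.inter (k2.inter ((isClosed_eq p2 p3).inter k3))

def sqc (δ : ℝ) : Set (ℝ × ℝ) := {p | |p.1| ≤ δ ∧ |p.2| ≤ δ}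
def sqo (δ : ℝ) : Set (ℝ × ℝ) := {p | |p.1| < δ ∧ |p.2| < δ}

lemma sqo_open (δ : ℝ) : IsOpen (sqo δ) :=
  (isOpen_lt (f := fun p : ℝ × ℝ => |p.1|) (by fun_prop) continuous_const).inter
    (isOpen_lt (f := fun p : ℝ × ℝ => |p.2|) (by fun_prop) continuous_const)
lemma sqo_sub (δ : ℝ) : sqo δ ⊆ sqc δ := fun _ hp => ⟨hp.1.le, hp.2.le⟩
lemma zero_mem_sqo (h : 0 < δ) : (0 : ℝ × ℝ) ∈ sqo δ := by simp [sqo, h]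

lemma MatchD.exists_h (H₁ : Adm g₁ r₁ e₁) (H₂ : Adm g₂ r₂ e₂) (M : MatchD g₁ r₁ g₂ r₂ θ θ' δ) :
    ∃ h : ℝ × ℝ → ℝ × ℝ, ContinuousOn h (sqc δ) ∧ ∀ p ∈ sqc δ, BRel g₁ r₁ g₂ r₂ θ p (h p) := by
  have hex : ∀ p : ℝ × ℝ, ∃ q, p ∈ sqc δ → BRel g₁ r₁ g₂ r₂ θ p q := by
    intro p
    by_cases hp : p ∈ sqc δ
    · obtain ⟨x', hx', y', h⟩ := M.mat |p.1| ⟨abs_nonneg _, hp.1⟩ p.2 hp.2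
      rcases le_total 0 p.1 with h0 | h0
      · refine ⟨(x', y'), fun _ => ⟨hp.1.trans M.δ_le, ?_, ?_, mul_nonneg h0 hx'.1⟩⟩
        · simpa [abs_of_nonneg hx'.1] using hx'.2
        · simpa [abs_of_nonneg hx'.1] using h
      · refine ⟨(-x', y'), fun _ => ⟨hp.1.trans M.δ_le, ?_, ?_, mul_nonneg_of_nonpos_of_nonpos h0 (by simpa using hx'.1)⟩⟩
        · simpa [abs_of_nonneg hx'.1] using hx'.2
        · simpa [abs_of_nonneg hx'.1] using h
    · exact ⟨0, fun h => absurd h hp⟩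
  choose h hh using hex
  refine ⟨h, ?_, hh⟩
  -- boundedness
  have hcomp : IsCompact (sqc δ) := by
    have : sqc δ = Icc (-δ) δ ×ˢ Icc (-δ) δ := by
      ext p; simp only [sqc, abs_le, Set.mem_prod, mem_setOf_eq, mem_Icc]
    rw [this]; exact isCompact_Icc.prod isCompact_Icc
  have ca : Continuous (fun p : ℝ × ℝ => θ (T g₁ r₁ 1 |p.1| p.2 0)) :=
    M.cont.comp ((H₁.T_cont (by simp)).comp
      ((continuous_abs.comp continuous_fst).prodMk (continuous_snd.prodMk continuous_const)))
  have cb : Continuous (fun p : ℝ × ℝ => θ (T g₁ r₁ (-1) |p.1| p.2 0)) :=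
    M.cont.comp ((H₁.T_cont (by simp)).comp
      ((continuous_abs.comp continuous_fst).prodMk (continuous_snd.prodMk continuous_const)))
  obtain ⟨Ra, hRa⟩ := hcomp.exists_bound_of_continuousOn ca.continuousOn
  obtain ⟨Rb, hRb⟩ := hcomp.exists_bound_of_continuousOn cb.continuousOn
  have hK : IsCompact (Icc (-r₂) r₂ ×ˢ Icc (-Ra) Rb) := isCompact_Icc.prod isCompact_Icc
  have hmem : ∀ p ∈ sqc δ, h p ∈ Icc (-r₂) r₂ ×ˢ Icc (-Ra) Rb := by
    intro p hp
    have hR := hh p hp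
    refine ⟨abs_le.1 hR.2.1, ?_⟩
    have h3 := hR.2.2.1
    simp only [Psi, Prod.mk.injEq] at h3
    have q1 := (abs_le.1 (hRa p hp)).1
    have q2 := (abs_le.1 (hRb p hp)).2
    simp only [← h3.1] at q1
    simp only [← h3.2.1] at q2
    have m1 := H₂.T_mono |(h p).1| (h p).2 (abs_nonneg (h p).1)
    have m2 := H₂.T_anti |(h p).1| (h p).2 (abs_nonneg (h p).1)
    rw [H₂.T_self (by simp)] at m1 m2
    exact ⟨q1.trans m1, m2.trans q2⟩
  intro p hp
  refine hK.tendsto_nhds_of_unique_mapClusterPt (eventually_nhdsWithin_of_forall hmem) ?_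
  intro q _ hq
  have hcl := BRel.closed (r₁ := r₁) (r₂ := r₂) H₁ H₂ M.cont
  have : (p, q) ∈ {z : (ℝ × ℝ) × (ℝ × ℝ) | BRel g₁ r₁ g₂ r₂ θ z.1 z.2} := by
    rw [← hcl.closure_eq, mem_closure_iff_nhds]
    intro s hs
    rw [nhds_prod_eq, mem_prod_iff] at hs
    obtain ⟨u, hu, v, hv, huv⟩ := hs
    have hf := (mapClusterPt_iff_frequently.1 hq) v hv
    have hev : ∀ᶠ x in nhdsWithin p (sqc δ), x ∈ u ∧ x ∈ sqc δ :=
      inter_mem (mem_nhdsWithin_of_mem_nhds hu) self_mem_nhdsWithin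
    obtain ⟨z, hz1, hz2, hz3⟩ := (hf.and_eventually hev).exists
    exact ⟨(z, h z), huv ⟨hz2, hz1⟩, hh z hz3⟩
  exact BRel.uniq H₁ H₂ M this (hh p hp)

lemma Adm.T_of_E {g r e σ} (H : Adm g r e) (hσ : |σ| ≤ 1) {x y a : ℝ} (h : T g r σ x y 0 = a) :
    y = T g r σ 0 a x := by rw [← h, H.T_back hσ]

lemma MatchD.transport (H₁ : Adm g₁ r₁ e₁) (H₂ : Adm g₂ r₂ e₂) (M : MatchD g₁ r₁ g₂ r₂ θ θ' δ)
    {h : ℝ × ℝ → ℝ × ℝ} {U : Set (ℝ × ℝ)} (hc : ContinuousOn h U)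
    (hU : ∀ p ∈ U, |p.1| < r₁ ∧ |(h p).1| < r₂ ∧ BRel g₁ r₁ g₂ r₂ θ p (h p))
    {γ : ℝ → ℝ × ℝ} {I : Set ℝ} (hγ : IsIntegralCurveOnBDE (NF g₁) γ I) (hm : MapsTo γ I U) :
    ∃ σ J, IsIntegralCurveOnBDE (NF g₂) σ J ∧ h '' (γ '' I) = σ '' J := by
  rcases I.eq_empty_or_nonempty with rfl | hne
  · refine ⟨fun _ => 0, ∅, ⟨⟨0, 0, by simp⟩, fun _ => 0, continuousOn_empty _, by simp⟩, by simp⟩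
  obtain ⟨c, d, η, dη, hcd, hsub, himg, hdc, hη⟩ := curve_graph hγ hne (fun t ht => (hU _ (hm ht)).1)
  obtain ⟨σp, σm, a, hL, hgr⟩ := H₁.leaf_of_graph hcd hsub hdc hη
  have hp := abs_le_of_or hL.hp
  have hm' := abs_le_of_or hL.hm
  have himg' : γ '' I = (fun x => (x, gr g₁ r₁ σp σm a x)) '' Ioo c d := by
    rw [himg]; exact image_congr (fun x hx => by rw [hgr x hx])
  set P : ℝ → ℝ × ℝ := fun x => (x, gr g₁ r₁ σp σm a x) with hP
  have hPU : ∀ x ∈ Ioo c d, P x ∈ U := by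
    intro x hx
    have : P x ∈ γ '' I := himg' ▸ mem_image_of_mem _ hx
    obtain ⟨t, ht, hte⟩ := this
    exact hte ▸ hm ht
  have hsE : ∀ {σ : ℝ} {p q : ℝ × ℝ}, (σ = 1 ∨ σ = -1) → BRel g₁ r₁ g₂ r₂ θ p q →
      T g₂ r₂ σ |q.1| q.2 0 = θ (T g₁ r₁ σ |p.1| p.2 0) := by
    intro σ p q hσ hR
    have h3 := hR.2.2.1
    simp only [Psi, Prod.mk.injEq] at h3
    rcases hσ with rfl | rfl
    · exact h3.1
    · exact h3.2.1
  have hX0 : ∀ x ∈ Ioo c d, (h (P x)).1 = 0 → x = 0 := fun x hx h0 =>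
    (hU _ (hPU x hx)).2.2.fst_zero H₁ H₂ M h0
  have hkey : ∀ x ∈ Ioo c d, (h (P x)).2 = gr g₂ r₂ σp σm (θ a) (h (P x)).1 := by
    intro x hx
    have hR := (hU _ (hPU x hx)).2.2
    have hs : 0 ≤ x * (h (P x)).1 := hR.2.2.2
    rcases le_or_gt 0 x with h0 | h0
    · have hX : 0 ≤ (h (P x)).1 := by
        rcases eq_or_lt_of_le h0 with h00 | h00
        · exact (hR.snd_zero H₁ H₂ M h00.symm).ge
        · by_contra hcon
          nlinarith
      have := hsE hL.hp hR
      rw [abs_of_nonneg hX] at this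
      simp only [hP, abs_of_nonneg h0] at this
      rw [gr, if_pos h0, H₁.T_forth hp, ] at this
      rw [gr, if_pos hX]
      refine H₂.T_of_E hp ?_
      simp only [hP]
      rw [gr, if_pos h0]
      exact this
    · have hX : (h (P x)).1 < 0 := by
        rcases lt_trichotomy (h (P x)).1 0 with h1 | h1 | h1
        · exact h1
        · have := hX0 x hx h1; linarith
        · nlinarith
      have := hsE hL.hm hR
      rw [abs_of_neg hX] at this
      simp only [hP, abs_of_neg h0] at this
      rw [gr, if_neg (not_le.2 h0), H₁.T_forth hm'] at this
      rw [gr, if_neg (not_le.2 hX)]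
      refine H₂.T_of_E hm' ?_
      simp only [hP]
      rw [gr, if_neg (not_le.2 h0)]
      exact this
  have hPc : Continuous P := continuous_id.prodMk (H₁.gr_cont hp hm' a)
  have hXc : ContinuousOn (fun x => (h (P x)).1) (Ioo c d) :=
    continuous_fst.comp_continuousOn (hc.comp hPc.continuousOn hPU)
  have hXi : InjOn (fun x => (h (P x)).1) (Ioo c d) := by
    intro x hx x' hx' hxx
    have hxx' : (h (P x)).1 = (h (P x')).1 := hxx
    have : h (P x) = h (P x') := by
      refine Prod.ext hxx' ?_
      rw [hkey x hx, hkey x' hx', hxx']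
    have h1 := (hU _ (hPU x hx)).2.2
    rw [this] at h1
    have := BRel.uniq' H₁ H₂ M h1 (hU _ (hPU x' hx')).2.2
    exact congrArg Prod.fst this
  obtain ⟨c', d', hcd', hJ⟩ := image_Ioo_of_injOn hcd hXc hXi (R := r₂)
    (fun x hx => (hU _ (hPU x hx)).2.1.le)
  have hL2 : LeafData g₂ r₂ c' d' σp σm (θ a) := by
    refine ⟨hL.hp, hL.hm, ?_, ?_, ?_⟩
    · rw [← hJ]
      rintro _ ⟨x, hx, rfl⟩
      exact abs_lt.1 (hU _ (hPU x hx)).2.1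
    · rw [← hJ]
      rintro _ ⟨x, hx, rfl⟩
      simp only
      rw [← hkey x hx]
      have h3 := (hU _ (hPU x hx)).2.2.2.2.1
      simp only [Psi, Prod.mk.injEq] at h3
      have h4 := h3.2.2
      have h5 := hL.nn x hx
      simp only [hP] at h4 ⊢
      rw [max_eq_right (a := -g₁ _ _) (by linarith)] at h4
      have := le_max_left (-g₂ |(h (x, gr g₁ r₁ σp σm a x)).1| (h (x, gr g₁ r₁ σp σm a x)).2) 0
      rw [h4] at this
      linarith
    · rw [← hJ]
      rintro ⟨x, hx, hx0⟩
      have hx00 := hX0 x hx hx0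
      subst hx00
      rcases hL.zero hx with hz | hz
      · exact Or.inl hz
      · right
        rw [← M.axis a (Or.inl hz.le), hz]
  refine ⟨_, _, H₂.curve_of_leaf hL2, ?_⟩
  rw [himg', ← hJ, image_image, image_image]
  exact image_congr (fun x hx => Prod.ext rfl (hkey x hx))

theorem topEquiv_of_match {δ₁ δ₂ : ℝ} (H₁ : Adm g₁ r₁ e₁) (H₂ : Adm g₂ r₂ e₂)
    (M : MatchD g₁ r₁ g₂ r₂ θ θ' δ₁) (M' : MatchD g₂ r₂ g₁ r₁ θ' θ δ₂) :
    TopEquivAt0 (NF g₁) (NF g₂) := by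
  obtain ⟨h, hc, hR⟩ := M.exists_h H₁ H₂
  obtain ⟨k, kc, kR⟩ := M'.exists_h H₂ H₁
  have h0 : h 0 = 0 := by
    have := M.rel_axis H₁ H₂ 0
    rw [M.θ0] at this
    exact BRel.uniq H₁ H₂ M (hR 0 (sqo_sub _ (zero_mem_sqo M.δ_pos))) this
  have k0 : k 0 = 0 := by
    have := M'.rel_axis H₂ H₁ 0
    rw [M'.θ0] at this
    exact BRel.uniq H₂ H₁ M' (kR 0 (sqo_sub _ (zero_mem_sqo M'.δ_pos))) this
  have hkh : ∀ p ∈ sqc δ₁, h p ∈ sqc δ₂ → k (h p) = p := fun p hp hp2 =>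
    BRel.uniq' H₁ H₂ M ((kR _ hp2).symm M.inv') (hR p hp)
  have hhk : ∀ q ∈ sqc δ₂, k q ∈ sqc δ₁ → h (k q) = q := fun q hq hq2 =>
    BRel.uniq H₁ H₂ M (hR _ hq2) ((kR q hq).symm M.inv')
  have hc' := hc.mono (sqo_sub δ₁)
  have kc' := kc.mono (sqo_sub δ₂)
  refine ⟨sqo δ₁ ∩ h ⁻¹' sqo δ₂, sqo δ₂ ∩ k ⁻¹' sqo δ₁, h, k,
    hc'.isOpen_inter_preimage (sqo_open _) (sqo_open _), kc'.isOpen_inter_preimage (sqo_open _) (sqo_open _),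
    ⟨zero_mem_sqo M.δ_pos, by simp only [mem_preimage, h0]; exact zero_mem_sqo M'.δ_pos⟩,
    ⟨zero_mem_sqo M'.δ_pos, by simp only [mem_preimage, k0]; exact zero_mem_sqo M.δ_pos⟩, h0,
    hc'.mono inter_subset_left, kc'.mono inter_subset_left, ?_, ?_, ?_, ?_⟩
  · refine InvOn.bijOn (f' := k) ⟨?_, ?_⟩ ?_ ?_
    · exact fun p hp => hkh p (sqo_sub _ hp.1) (sqo_sub _ hp.2)
    · exact fun p hp => hhk p (sqo_sub _ hp.1) (sqo_sub _ hp.2)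
    · exact fun p hp => ⟨hp.2, by rw [mem_preimage, hkh p (sqo_sub _ hp.1) (sqo_sub _ hp.2)]; exact hp.1⟩
    · exact fun p hp => ⟨hp.2, by rw [mem_preimage, hhk p (sqo_sub _ hp.1) (sqo_sub _ hp.2)]; exact hp.1⟩
  · exact ⟨fun p hp => hkh p (sqo_sub _ hp.1) (sqo_sub _ hp.2),
      fun p hp => hhk p (sqo_sub _ hp.1) (sqo_sub _ hp.2)⟩
  · intro γ I hγ hm
    exact M.transport H₁ H₂ (hc'.mono inter_subset_left) (fun p hp => ⟨hp.1.1.trans_le M.δ_le,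
      lt_of_lt_of_le hp.2.1 M'.δ_le, hR p (sqo_sub _ hp.1)⟩) hγ hm
  · intro γ I hγ hm
    exact M'.transport H₂ H₁ (kc'.mono inter_subset_left) (fun p hp => ⟨hp.1.1.trans_le M'.δ_le,
      lt_of_lt_of_le hp.2.1 M.δ_le, kR p (sqo_sub _ hp.1)⟩) hγ hm
end


section
variable {g : ℝ → ℝ → ℝ} {r e : ℝ}

lemma Adm.A_le (H : Adm g r e) {x : ℝ} (hx : 0 ≤ x) (y : ℝ) : T g r 1 x y 0 ≤ y := by
  have := H.T_mono x y hx
  rwa [H.T_self (by simp)] at this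

lemma Adm.B_ge (H : Adm g r e) {x : ℝ} (hx : 0 ≤ x) (y : ℝ) : y ≤ T g r (-1) x y 0 := by
  have := H.T_anti x y hx
  rwa [H.T_self (by simp)] at this

lemma Adm.F_ge (H : Adm g r e) {x : ℝ} (hx : 0 ≤ x) (a : ℝ) : a ≤ T g r 1 0 a x := by
  have := H.T_mono 0 a hx
  rwa [H.T_self (by simp)] at this

lemma Adm.F_le (H : Adm g r e) {x : ℝ} (hx : 0 ≤ x) (a : ℝ) : T g r (-1) 0 a x ≤ a := by
  have := H.T_anti 0 a hx
  rwa [H.T_self (by simp)] at this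

lemma Adm.AB_cont (H : Adm g r e) (σ : ℝ) (hσ : |σ| ≤ 1) : Continuous (fun p : ℝ × ℝ => T g r σ p.1 p.2 0) :=
  (H.T_cont hσ).comp (continuous_fst.prodMk (continuous_snd.prodMk continuous_const))

lemma box_of_ev {P : ℝ × ℝ → Prop} (hr : 0 < r) (h : ∀ᶠ p : ℝ × ℝ in nhds 0, P p) :
    ∃ δ, 0 < δ ∧ δ ≤ r ∧ ∀ x ∈ Icc 0 δ, ∀ y, |y| ≤ δ → P (x, y) := by
  obtain ⟨η, hη, hb⟩ := Metric.eventually_nhds_iff.1 h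
  refine ⟨min (η / 2) r, by positivity, min_le_right _ _, fun x hx y hy => ?_⟩
  refine hb (y := (x, y)) ?_
  have h1 : |x| ≤ η / 2 := by rw [abs_of_nonneg hx.1]; exact hx.2.trans (min_le_left _ _)
  have h2 : |y| ≤ η / 2 := hy.trans (min_le_left _ _)
  have : dist (x, y) (0 : ℝ × ℝ) = max |x| |y| := by
    simp
  rw [this]
  exact (max_le h1 h2).trans_lt (by linarith)

/-- eventual statements for (A,B) -/
lemma Adm.ev_AB (H : Adm g r e) {Q : ℝ → ℝ → Prop} (h : ∀ᶠ p : ℝ × ℝ in nhds 0, Q p.1 p.2) :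
    ∀ᶠ p : ℝ × ℝ in nhds 0, Q (T g r 1 p.1 p.2 0) (T g r (-1) p.1 p.2 0) := by
  have c : Continuous (fun p : ℝ × ℝ => (T g r 1 p.1 p.2 0, T g r (-1) p.1 p.2 0)) :=
    (H.AB_cont 1 (by simp)).prodMk (H.AB_cont (-1) (by simp))
  have := c.tendsto 0
  rw [show (T g r 1 (0 : ℝ × ℝ).1 (0 : ℝ × ℝ).2 0, T g r (-1) (0 : ℝ × ℝ).1 (0 : ℝ × ℝ).2 0) = (0 : ℝ × ℝ) by
    simp [H.T_self]] at this
  exact this.eventually h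

end

section S
variable {g₁ g₂ : ℝ → ℝ → ℝ} {r₁ r₂ : ℝ}

lemma Adm.S_nonneg {g : ℝ → ℝ → ℝ} {r : ℝ} (H : Adm g r 1) {x y : ℝ} (hx : x ∈ Icc 0 r)
    (h : T g r 1 x y 0 ≠ T g r (-1) x y 0) : 0 ≤ g x y := by
  by_contra hc
  push Not at hc
  apply h
  have hr := H.r_pos
  rw [H.const_left (by simp) hx hc.le 0 ⟨le_rfl, hx.1⟩,
    H.const_left (by simp) hx hc.le 0 ⟨le_rfl, hx.1⟩]

lemma match_S (H₁ : Adm g₁ r₁ 1) (H₂ : Adm g₂ r₂ 1) (hax : ∀ a, g₁ 0 a = g₂ 0 a) (h0 : 0 ≤ g₁ 0 0) :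
    ∃ δ, MatchD g₁ r₁ g₂ r₂ id id δ := by
  have hr2 := H₂.r_pos
  have hpos : 0 < g₂ r₂ 0 := by
    have := H₂.mono 0 r₂ 0 le_rfl hr2.le le_rfl
    rw [← hax] at this
    nlinarith
  have hD : T g₂ r₂ (-1) 0 0 r₂ < T g₂ r₂ 1 0 0 r₂ := by
    by_contra hc
    push Not at hc
    have i1 := H₂.F_ge hr2.le 0
    have i2 := H₂.F_le hr2.le 0
    have hconst : ∀ s ∈ Icc 0 r₂, T g₂ r₂ 1 0 0 s = 0 := by
      intro s hs
      have j1 := H₂.F_ge hs.1 0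
      have j2 := H₂.T_mono 0 0 hs.2
      linarith
    have := H₂.nonpos_of_const (by simp) le_rfl hr2 le_rfl hconst r₂ ⟨hr2.le, le_rfl⟩
    linarith
  have e1 : ∀ᶠ p : ℝ × ℝ in nhds 0, 0 < g₂ r₂ p.1 := by
    have c : Continuous (fun p : ℝ × ℝ => g₂ r₂ p.1) := H₂.cont.comp (continuous_const.prodMk continuous_fst)
    exact c.continuousAt.eventually (lt_mem_nhds hpos)
  have e2 : ∀ᶠ p : ℝ × ℝ in nhds 0, T g₂ r₂ (-1) 0 p.2 r₂ < T g₂ r₂ 1 0 p.1 r₂ := by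
    have c1 : Continuous (fun p : ℝ × ℝ => T g₂ r₂ (-1) 0 p.2 r₂) :=
      (H₂.T_cont (by simp)).comp (continuous_const.prodMk (continuous_snd.prodMk continuous_const))
    have c2 : Continuous (fun p : ℝ × ℝ => T g₂ r₂ 1 0 p.1 r₂) :=
      (H₂.T_cont (by simp)).comp (continuous_const.prodMk (continuous_fst.prodMk continuous_const))
    exact c1.continuousAt.eventually_lt c2.continuousAt hD
  obtain ⟨δ, hδ, hδr, hb⟩ := box_of_ev H₁.r_pos (H₁.ev_AB (Q := fun a b => 0 < g₂ r₂ a ∧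
    T g₂ r₂ (-1) 0 b r₂ < T g₂ r₂ 1 0 a r₂) (e1.and e2))
  refine ⟨δ, hδ, hδr, continuous_id, fun _ => rfl, fun _ => rfl, rfl, fun a _ => hax a, ?_⟩
  intro x hx y hy
  obtain ⟨q1, q2⟩ := hb x hx y hy
  have hx1 : x ∈ Icc 0 r₁ := ⟨hx.1, hx.2.trans hδr⟩
  have ha := H₁.A_le hx.1 y
  have hb := H₁.B_ge hx.1 y
  simp only [id]
  set a := T g₁ r₁ 1 x y 0 with hadef
  set b := T g₁ r₁ (-1) x y 0 with hbdef
  by_cases hab : a = b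
  · have hya : y = a := by linarith
    rcases eq_or_lt_of_le hx.1 with hx0 | hx0
    · refine ⟨0, ⟨le_rfl, hr2.le⟩, a, ?_⟩
      rw [H₂.Psi_zero, ← hab, ← hx0, ← hax, hya]
    · have hconst : ∀ s ∈ Icc 0 x, T g₁ r₁ 1 x y s = y := by
        intro s hs
        have j1 := H₁.T_mono x y hs.1
        have j2 := H₁.T_mono x y hs.2
        rw [H₁.T_self (by simp)] at j2
        linarith
      have hn : g₁ x y ≤ 0 := H₁.nonpos_of_const (by simp) le_rfl hx0 hx1.2 hconst x ⟨hx0.le, le_rfl⟩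
      have hm := H₁.mono 0 x y le_rfl hx.1 hx1.2
      have hcg : ContinuousOn (fun s => g₂ s a) (Icc 0 r₂) :=
        (H₂.cont.comp (continuous_id.prodMk continuous_const)).continuousOn
      have := intermediate_value_Icc hr2.le hcg
      obtain ⟨x', hx', hgx⟩ := this (⟨by rw [← hax, ← hya]; nlinarith, by linarith⟩ : g₁ x y ∈ Icc _ _)
      simp only at hgx
      refine ⟨x', hx', a, ?_⟩
      have hn2 : g₂ x' a ≤ 0 := by rw [hgx]; exact hn
      simp only [Psi]
      rw [H₂.const_left (by simp) hx' hn2 0 ⟨le_rfl, hx'.1⟩,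
        H₂.const_left (by simp) hx' hn2 0 ⟨le_rfl, hx'.1⟩, hgx, ← hab]
  · have hc1 : 0 ≤ g₁ x y := H₁.S_nonneg hx1 hab
    have hcg : ContinuousOn (fun s => T g₂ r₂ 1 0 a s - T g₂ r₂ (-1) 0 b s) (Icc 0 r₂) :=
      ((H₂.T_contx (by simp) 0 a).sub (H₂.T_contx (by simp) 0 b)).continuousOn
    have := intermediate_value_Icc hr2.le hcg
    obtain ⟨x', hx', hgx⟩ := this (⟨by
      rw [H₂.T_self (by simp), H₂.T_self (by simp)]; linarith, by linarith⟩ : (0:ℝ) ∈ Icc _ _)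
    simp only at hgx
    refine ⟨x', hx', T g₂ r₂ 1 0 a x', ?_⟩
    have k1 : T g₂ r₂ 1 x' (T g₂ r₂ 1 0 a x') 0 = a := H₂.T_forth (by simp) _ _
    have k2 : T g₂ r₂ (-1) x' (T g₂ r₂ 1 0 a x') 0 = b := by
      rw [show T g₂ r₂ 1 0 a x' = T g₂ r₂ (-1) 0 b x' by linarith]
      exact H₂.T_forth (by simp) _ _
    have hc2 := H₂.S_nonneg (y := T g₂ r₂ 1 0 a x') hx' (by rw [k1, k2]; exact hab)
    simp only [Psi]
    rw [k1, k2, max_eq_right (by linarith), max_eq_right (by linarith)]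

end S

section F
variable {g g₁ g₂ : ℝ → ℝ → ℝ} {r r₁ r₂ : ℝ}

def rho (g : ℝ → ℝ → ℝ) (r x a : ℝ) : ℝ := T g r (-1) x (T g r 1 0 a x) 0

lemma Adm.rho_contx {e} (H : Adm g r e) (a : ℝ) : Continuous (fun x => rho g r x a) :=
  (H.AB_cont (-1) (by simp)).comp (continuous_id.prodMk (H.T_contx (by simp) 0 a))

lemma Adm.rho_conta {e} (H : Adm g r e) (x : ℝ) : Continuous (fun a => rho g r x a) :=
  (H.AB_cont (-1) (by simp)).comp (continuous_const.prodMk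
    ((H.T_cont (by simp)).comp (continuous_const.prodMk (continuous_id.prodMk continuous_const))))

lemma Adm.rho_zero {e} (H : Adm g r e) (a : ℝ) : rho g r 0 a = a := by
  simp [rho, H.T_self]

lemma Adm.rho_mono {e} (H : Adm g r e) {x x' : ℝ} (hxx : x ≤ x') (a : ℝ) : rho g r x a ≤ rho g r x' a := by
  unfold rho
  have s : |(-1:ℝ)| ≤ 1 := by simp
  rw [← H.T_comp s x' (T g r 1 0 a x') x 0]
  apply (H.T_smono s x 0).monotone
  have h1 := H.T_anti x' (T g r 1 0 a x') hxx
  rw [H.T_self s] at h1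
  exact (H.T_mono 0 a hxx).trans h1

/-- once nonpositive, stays -/
lemma Adm.rho_halt (H : Adm g r (-1)) {x a : ℝ} (hx : x ∈ Icc 0 r) (h : g x (T g r 1 0 a x) ≤ 0) :
    rho g r x a = rho g r r a := by
  have s1 : |(1:ℝ)| ≤ 1 := by simp
  have s2 : |(-1:ℝ)| ≤ 1 := by simp
  set y := T g r 1 0 a x with hy
  have h1 := H.const_right s1 hx h r ⟨hx.2, le_rfl⟩
  have h2 := H.const_right s2 hx h r ⟨hx.2, le_rfl⟩
  rw [hy, H.T_comp s1] at h1
  unfold rho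
  rw [h1, ← hy]
  conv_rhs => rw [← h2, H.T_comp s2]

lemma Adm.rho_fix (H : Adm g r (-1)) {a : ℝ} (h : g 0 a ≤ 0) : rho g r r a = a := by
  rw [← H.rho_halt (x := 0) ⟨le_rfl, H.r_pos.le⟩ (by rwa [H.T_self (by simp)]), H.rho_zero]

lemma Adm.rho_gt (H : Adm g r (-1)) {a : ℝ} (h : 0 < g 0 a) : a < rho g r r a := by
  have hr := H.r_pos
  by_contra hc
  push Not at hc
  unfold rho at hc
  have i1 := H.B_ge hr.le (T g r 1 0 a r)
  have hconst : ∀ s ∈ Icc 0 r, T g r 1 0 a s = a := by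
    intro s hs
    have j1 := H.F_ge hs.1 a
    have j2 := H.T_mono 0 a hs.2
    linarith
  have := H.nonpos_of_const (by simp) le_rfl hr le_rfl hconst 0 ⟨le_rfl, hr.le⟩
  linarith

lemma Adm.F_lt (H : Adm g r (-1)) {a b : ℝ} (h1 : a ≤ b) (h2 : b < rho g r r a) :
    ∃ x ∈ Icc 0 r, ∃ y, Psi g r x y = (a, b, 0) := by
  have := intermediate_value_Icc H.r_pos.le (H.rho_contx a).continuousOn
  obtain ⟨x, hx, hk⟩ := this ⟨by rwa [H.rho_zero], h2.le⟩
  simp only at hk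
  refine ⟨x, hx, T g r 1 0 a x, ?_⟩
  have hg : 0 ≤ g x (T g r 1 0 a x) := by
    by_contra hc
    push Not at hc
    have := H.rho_halt hx hc.le
    linarith
  simp only [Psi]
  rw [H.T_forth (by simp), max_eq_right (by linarith)]
  rw [rho] at hk
  rw [hk]

lemma Adm.F_eq (H : Adm g r (-1)) {a c : ℝ} (hc : 0 ≤ c) (h1 : -c ≤ g 0 a) (h2 : g r (T g r 1 0 a r) ≤ -c) :
    ∃ x ∈ Icc 0 r, ∃ y, Psi g r x y = (a, rho g r r a, c) := by
  have hcont : ContinuousOn (fun x => g x (T g r 1 0 a x)) (Icc 0 r) :=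
    (H.cont.comp (continuous_id.prodMk (H.T_contx (by simp) 0 a))).continuousOn
  have := intermediate_value_Icc' H.r_pos.le hcont
  obtain ⟨x, hx, hk⟩ := this (⟨h2, by rwa [H.T_self (by simp)]⟩ : -c ∈ Icc _ _)
  simp only at hk
  refine ⟨x, hx, T g r 1 0 a x, ?_⟩
  have h3 := H.rho_halt hx (by linarith)
  simp only [Psi]
  rw [H.T_forth (by simp), hk, ← h3, rho]
  simp [hc]

lemma Adm.rho_of_pt {e} (H : Adm g r e) (x y : ℝ) :
    rho g r x (T g r 1 x y 0) = T g r (-1) x y 0 := by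
  rw [rho, H.T_back (by simp)]

lemma Adm.c_ge (H : Adm g r (-1)) {x y : ℝ} (hx : x ∈ Icc 0 r) :
    -(max (-g x y) 0) ≤ g 0 (T g r 1 x y 0) := by
  have hm0 := le_max_right (-g x y) 0
  by_contra hc
  push Not at hc
  set a := T g r 1 x y 0 with ha
  have h2 : g 0 a ≤ 0 := by linarith
  have h1 := H.const_right (σ := 1) (by simp) ⟨le_rfl, H.r_pos.le⟩ h2 x hx
  rw [ha, H.T_back (by simp), ← ha] at h1
  have := H.mono 0 x a le_rfl hx.1 hx.2
  have hm := le_max_left (-g x y) 0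
  rw [← h1] at this hc
  nlinarith

lemma match_F_neg (H₁ : Adm g₁ r₁ (-1)) (H₂ : Adm g₂ r₂ (-1)) (hax : ∀ a, g₁ 0 a = g₂ 0 a) (h0 : 0 < g₁ 0 0) :
    ∃ δ, MatchD g₁ r₁ g₂ r₂ id id δ := by
  have e1 : ∀ᶠ p : ℝ × ℝ in nhds 0, 0 < g₁ p.1 p.2 := H₁.cont.continuousAt.eventually (lt_mem_nhds h0)
  have e2 : ∀ᶠ p : ℝ × ℝ in nhds 0, p.2 < rho g₂ r₂ r₂ p.1 := by
    have c1 : Continuous (fun p : ℝ × ℝ => rho g₂ r₂ r₂ p.1) := (H₂.rho_conta r₂).comp continuous_fst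
    exact continuous_snd.continuousAt.eventually_lt c1.continuousAt (H₂.rho_gt (by rw [← hax]; exact h0))
  obtain ⟨δ, hδ, hδr, hb⟩ := box_of_ev H₁.r_pos (e1.and (H₁.ev_AB (Q := fun a b => b < rho g₂ r₂ r₂ a) e2))
  refine ⟨δ, hδ, hδr, continuous_id, fun _ => rfl, fun _ => rfl, rfl, fun a _ => hax a, ?_⟩
  intro x hx y hy
  obtain ⟨q1, q2⟩ := hb x hx y hy
  have ha := H₁.A_le hx.1 y
  have hb := H₁.B_ge hx.1 y
  simp only at q1
  rw [max_eq_right (by linarith)]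
  exact H₂.F_lt (ha.trans hb) q2

lemma match_F_zero (H₁ : Adm g₁ r₁ (-1)) (H₂ : Adm g₂ r₂ (-1)) (θ : ℝ ≃o ℝ) (hθ0 : θ 0 = 0)
    (hax : ∀ a, (g₁ 0 a ≤ 0 ∨ g₂ 0 (θ a) ≤ 0) → g₁ 0 a = g₂ 0 (θ a)) (h0 : g₁ 0 0 = 0)
    (hconj : ∀ a, θ (rho g₁ r₁ r₁ a) = rho g₂ r₂ r₂ (θ a)) :
    ∃ δ, MatchD g₁ r₁ g₂ r₂ θ θ.symm δ := by
  have h02 : g₂ 0 0 = 0 := by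
    have := hax 0 (Or.inl h0.le)
    rw [hθ0] at this; linarith
  have hr2 := H₂.r_pos
  have hF0 : T g₂ r₂ 1 0 0 r₂ = 0 := H₂.const_right (by simp) ⟨le_rfl, hr2.le⟩ h02.le r₂ ⟨hr2.le, le_rfl⟩
  have e1 : ∀ᶠ p : ℝ × ℝ in nhds 0, g₂ r₂ (T g₂ r₂ 1 0 (θ (T g₁ r₁ 1 p.1 p.2 0)) r₂) <
      -(max (-g₁ p.1 p.2) 0) := by
    have c0 : Continuous (fun a => T g₂ r₂ 1 0 a r₂) :=
      (H₂.T_cont (by simp)).comp (continuous_const.prodMk (continuous_id.prodMk continuous_const))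
    have c1 : Continuous (fun p : ℝ × ℝ => g₂ r₂ (T g₂ r₂ 1 0 (θ (T g₁ r₁ 1 p.1 p.2 0)) r₂)) :=
      H₂.cont.comp (continuous_const.prodMk (c0.comp (θ.continuous.comp (H₁.AB_cont 1 (by simp)))))
    have c2 : Continuous (fun p : ℝ × ℝ => -(max (-g₁ p.1 p.2) 0)) := (H₁.cont.neg.max continuous_const).neg
    refine c1.continuousAt.eventually_lt c2.continuousAt ?_
    have := H₂.mono 0 r₂ 0 le_rfl hr2.le le_rfl
    simp only [Prod.fst_zero, Prod.snd_zero, h0, H₁.T_self (σ := 1) (by simp), hθ0, hF0]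
    simp
    nlinarith
  obtain ⟨δ, hδ, hδr, hb⟩ := box_of_ev H₁.r_pos e1
  refine ⟨δ, hδ, hδr, θ.continuous, θ.symm_apply_apply, θ.apply_symm_apply, hθ0, hax, ?_⟩
  intro x hx y hy
  have q1 := hb x hx y hy
  simp only at q1
  have hx1 : x ∈ Icc 0 r₁ := ⟨hx.1, hx.2.trans hδr⟩
  have ha := H₁.A_le hx.1 y
  have hb := H₁.B_ge hx.1 y
  have hcge := H₁.c_ge (y := y) hx1
  have hle : T g₁ r₁ (-1) x y 0 ≤ rho g₁ r₁ r₁ (T g₁ r₁ 1 x y 0) := by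
    rw [← H₁.rho_of_pt]; exact H₁.rho_mono hx1.2 _
  have hst : g₁ x y ≤ 0 → T g₁ r₁ (-1) x y 0 = rho g₁ r₁ r₁ (T g₁ r₁ 1 x y 0) := by
    intro h
    rw [← H₁.rho_of_pt]
    exact H₁.rho_halt hx1 (by rwa [H₁.T_back (by simp)])
  set a := T g₁ r₁ 1 x y 0 with hadef
  set b := T g₁ r₁ (-1) x y 0 with hbdef
  rcases eq_or_lt_of_le hle with heq | hlt
  · rw [heq, hconj]
    refine H₂.F_eq (le_max_right _ _) ?_ q1.le
    by_cases h : g₂ 0 (θ a) ≤ 0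
    · rw [← hax a (Or.inr h)]; exact hcge
    · have := le_max_right (-g₁ x y) 0
      linarith
  · have hg : 0 ≤ g₁ x y := by
      by_contra hc
      push Not at hc
      exact hlt.ne (hst hc.le)
    rw [max_eq_right (by linarith)]
    refine H₂.F_lt (θ.monotone (ha.trans hb)) ?_
    rw [← hconj]
    exact θ.strictMono hlt

def Adm.rhoIso {e} (H : Adm g r e) : ℝ ≃o ℝ :=
  StrictMono.orderIsoOfRightInverse (rho g r r)
    (fun _ _ h => H.T_smono (by simp) _ _ (H.T_smono (by simp) _ _ h))
    (fun b => T g r 1 r (T g r (-1) 0 b r) 0)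
    (fun b => by
      have s1 : |(1:ℝ)| ≤ 1 := by simp
      have s2 : |(-1:ℝ)| ≤ 1 := by simp
      rw [rho, H.T_back s1, H.T_forth s2])

lemma Adm.rhoIso_apply {e} (H : Adm g r e) (a : ℝ) : H.rhoIso a = rho g r r a := rfl

end F


section Abel
variable (ρ : ℝ ≃o ℝ)

lemma orb_succ (a : ℝ) (n : ℤ) : (ρ ^ (n+1)) a = ρ ((ρ ^ n) a) := by
  rw [add_comm, zpow_add, zpow_one]; rfl

lemma orb_succ' (a : ℝ) (n : ℤ) : (ρ ^ (n+1)) a = (ρ ^ n) (ρ a) := by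
  rw [zpow_add, zpow_one]; rfl

variable {ρ} (h0 : ∀ a, 0 ≤ a → ρ a = a) (h1 : ∀ a, a < 0 → a < ρ a)
include h0 h1

lemma orb_neg {a : ℝ} (ha : a < 0) (n : ℤ) : (ρ ^ n) a < 0 := by
  have hz : ∀ n : ℤ, (ρ ^ n) 0 = 0 := by
    intro n
    induction n using Int.induction_on with
    | zero => rfl
    | succ n ih => rw [orb_succ, ih, h0 0 le_rfl]
    | pred n ih =>
      have := orb_succ ρ 0 (-n - 1)
      rw [sub_add_cancel, ih] at this
      exact ρ.injective (by rw [← this, h0 0 le_rfl])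
  rw [← hz n]
  exact (ρ ^ n).strictMono ha

lemma orb_mono {a : ℝ} (ha : a < 0) : StrictMono (fun n : ℤ => (ρ ^ n) a) :=
  strictMono_int_of_lt_succ fun n => by rw [orb_succ]; exact h1 _ (orb_neg h0 h1 ha n)

lemma orb_above {a b : ℝ} (ha : a < 0) (hb : b < 0) : ∃ n : ℤ, b < (ρ ^ n) a := by
  by_contra hc
  push Not at hc
  have hbd : BddAbove (range fun n : ℤ => (ρ ^ n) a) := ⟨b, by rintro _ ⟨n, rfl⟩; exact hc n⟩
  have h2 : ρ (⨆ n : ℤ, (ρ ^ n) a) = ⨆ n : ℤ, (ρ ^ n) a := by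
    rw [ρ.map_ciSup hbd]
    simp_rw [← orb_succ]
    exact (Equiv.addRight (1:ℤ)).surjective.iSup_comp (fun n : ℤ => (ρ ^ n) a)
  have h3 : (⨆ n : ℤ, (ρ ^ n) a) ≤ b := ciSup_le hc
  have := h1 _ (h3.trans_lt hb)
  linarith

lemma orb_below {a : ℝ} (ha : a < 0) (b : ℝ) : ∃ n : ℤ, (ρ ^ n) a ≤ b := by
  by_contra hc
  push Not at hc
  have hbd : BddBelow (range fun n : ℤ => (ρ ^ n) a) := ⟨b, by rintro _ ⟨n, rfl⟩; exact (hc n).le⟩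
  have h2 : ρ (⨅ n : ℤ, (ρ ^ n) a) = ⨅ n : ℤ, (ρ ^ n) a := by
    rw [ρ.map_ciInf hbd]
    simp_rw [← orb_succ]
    exact (Equiv.addRight (1:ℤ)).surjective.iInf_comp (fun n : ℤ => (ρ ^ n) a)
  have h3 : (⨅ n : ℤ, (ρ ^ n) a) ≤ a := ciInf_le hbd 0
  have := h1 _ (h3.trans_lt ha)
  linarith

lemma orb_loc {b : ℝ} (hb : b < 0) : ∃ n : ℤ, (ρ ^ n) (-1) ≤ b ∧ b < (ρ ^ (n+1)) (-1) := by
  have hm := orb_mono h0 h1 (a := -1) (by norm_num)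
  obtain ⟨N, hN⟩ := orb_above h0 h1 (a := -1) (by norm_num) hb
  obtain ⟨n, hn, hmax⟩ := Int.exists_greatest_of_bdd (P := fun n : ℤ => (ρ ^ n) (-1) ≤ b)
    ⟨N, fun z hz => by
      by_contra hc
      have := hm (not_le.1 hc)
      simp only at this
      linarith⟩ (orb_below h0 h1 (by norm_num) b)
  refine ⟨n, hn, ?_⟩
  by_contra hc
  have := hmax _ (not_lt.1 hc)
  omega

omit h0 h1 in
variable (ρ) in
/-- the parametrisation -/
def abl (x : ℝ) : ℝ := (ρ ^ ⌊x⌋) (-1 + Int.fract x * (ρ (-1) + 1))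

omit h0 h1 in
lemma abl_succ (x : ℝ) : abl ρ (x + 1) = ρ (abl ρ x) := by
  rw [abl, abl, Int.floor_add_one, Int.fract_add_one, orb_succ]

lemma abl_ge (x : ℝ) : (ρ ^ ⌊x⌋) (-1) ≤ abl ρ x := by
  apply (ρ ^ ⌊x⌋).monotone
  have := h1 (-1) (by norm_num)
  nlinarith [Int.fract_nonneg x]

lemma abl_lt (x : ℝ) : abl ρ x < (ρ ^ (⌊x⌋ + 1)) (-1) := by
  rw [orb_succ']
  apply (ρ ^ ⌊x⌋).strictMono
  have := h1 (-1) (by norm_num)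
  nlinarith [Int.fract_lt_one x]

lemma abl_neg (x : ℝ) : abl ρ x < 0 := (abl_lt h0 h1 x).trans (orb_neg h0 h1 (by norm_num) _)

lemma abl_mono : StrictMono (abl ρ) := by
  intro x y hxy
  rcases eq_or_lt_of_le (Int.floor_mono hxy.le) with h | h
  · unfold abl
    rw [← h]
    apply (ρ ^ ⌊x⌋).strictMono
    have := h1 (-1) (by norm_num)
    have h2 := Int.floor_add_fract x
    have h3 := Int.floor_add_fract y
    rw [← h] at h3
    have : Int.fract x < Int.fract y := by linarith
    nlinarith
  · have hm := (orb_mono h0 h1 (a := -1) (by norm_num)).monotone (show ⌊x⌋ + 1 ≤ ⌊y⌋ by omega)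
    exact (abl_lt h0 h1 x).trans_le (hm.trans (abl_ge h0 h1 y))

lemma abl_surj {b : ℝ} (hb : b < 0) : ∃ x, abl ρ x = b := by
  obtain ⟨n, hn1, hn2⟩ := orb_loc h0 h1 hb
  have hp := h1 (-1) (by norm_num)
  set c := (ρ ^ n).symm b with hc
  have hcb : (ρ ^ n) c = b := (ρ ^ n).apply_symm_apply b
  have c1 : -1 ≤ c := by rw [← (ρ ^ n).le_iff_le, hcb]; exact hn1
  have c2 : c < ρ (-1) := by rw [← (ρ ^ n).lt_iff_lt, hcb, ← orb_succ']; exact hn2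
  set s := (c + 1) / (ρ (-1) + 1) with hs
  have hs0 : 0 ≤ s := div_nonneg (by linarith) (by linarith)
  have hs1 : s < 1 := (div_lt_one (by linarith)).2 (by linarith)
  refine ⟨n + s, ?_⟩
  unfold abl
  have hf : ⌊(n:ℝ) + s⌋ = n := by
    rw [Int.floor_eq_iff]; constructor <;> linarith
  have hfr : Int.fract ((n:ℝ) + s) = s := by
    rw [Int.fract, hf]; ring
  rw [hf, hfr, ← hcb, hs, div_mul_cancel₀ _ (by linarith)]
  congr 1; ring

end Abel

theorem conj_exists (ρ₁ ρ₂ : ℝ ≃o ℝ) (h01 : ∀ a, 0 ≤ a → ρ₁ a = a) (h11 : ∀ a, a < 0 → a < ρ₁ a)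
    (h02 : ∀ a, 0 ≤ a → ρ₂ a = a) (h12 : ∀ a, a < 0 → a < ρ₂ a) :
    ∃ θ : ℝ ≃o ℝ, (∀ a, 0 ≤ a → θ a = a) ∧ (∀ a, a < 0 → θ a < 0) ∧ ∀ a, θ (ρ₁ a) = ρ₂ (θ a) := by
  have hex : ∀ a : ℝ, ∃ x, a < 0 → abl ρ₁ x = a := by
    intro a
    by_cases ha : a < 0
    · obtain ⟨x, hx⟩ := abl_surj h01 h11 ha
      exact ⟨x, fun _ => hx⟩
    · exact ⟨0, fun h => absurd h ha⟩
  choose α hα using hex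
  have hαabl : ∀ x, α (abl ρ₁ x) = x := fun x =>
    (abl_mono h01 h11).injective (hα _ (abl_neg h01 h11 x))
  let f : ℝ → ℝ := fun a => if a < 0 then abl ρ₂ (α a) else a
  have fneg : ∀ a, a < 0 → f a = abl ρ₂ (α a) := fun a ha => if_pos ha
  have fpos : ∀ a, 0 ≤ a → f a = a := fun a ha => if_neg (not_lt.2 ha)
  have fn : ∀ a, a < 0 → f a < 0 := fun a ha => by rw [fneg a ha]; exact abl_neg h02 h12 _
  have hm : StrictMono f := by
    intro a b hab
    rcases lt_or_ge b 0 with hb | hb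
    · rw [fneg a (hab.trans hb), fneg b hb]
      apply abl_mono h02 h12
      rw [← (abl_mono h01 h11).lt_iff_lt, hα a (hab.trans hb), hα b hb]
      exact hab
    · rcases lt_or_ge a 0 with ha | ha
      · rw [fpos b hb]; exact (fn a ha).trans_le hb
      · rw [fpos a ha, fpos b hb]; exact hab
  have hs : Function.Surjective f := by
    intro b
    rcases lt_or_ge b 0 with hb | hb
    · obtain ⟨x, hx⟩ := abl_surj h02 h12 hb
      refine ⟨abl ρ₁ x, ?_⟩
      rw [fneg _ (abl_neg h01 h11 x), hαabl, hx]
    · exact ⟨b, fpos b hb⟩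
  refine ⟨hm.orderIsoOfSurjective f hs, fpos, fn, ?_⟩
  intro a
  change f (ρ₁ a) = ρ₂ (f a)
  rcases lt_or_ge a 0 with ha | ha
  · have : ρ₁ a = abl ρ₁ (α a + 1) := by rw [abl_succ, hα a ha]
    rw [this, fneg _ (abl_neg h01 h11 _), hαabl, abl_succ, fneg a ha]
  · rw [h01 a ha, fpos a ha, h02 a ha]

section
variable {g₁ g₂ : ℝ → ℝ → ℝ} {r₁ r₂ : ℝ}

lemma match_F_zero' (H₁ : Adm g₁ r₁ (-1)) (H₂ : Adm g₂ r₂ (-1)) (hax : ∀ a, g₁ 0 a = g₂ 0 a)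
    (h0 : g₁ 0 0 = 0) {P : ℝ → Prop} (θ : ℝ ≃o ℝ) (hp : ∀ a, P a → g₁ 0 a ≤ 0) (hn : ∀ a, ¬ P a → 0 < g₁ 0 a)
    (hP0 : P 0)
    (hθ : ∀ a, P a → θ a = a) (hθ' : ∀ a, ¬ P a → ¬ P (θ a))
    (hconj : ∀ a, θ (rho g₁ r₁ r₁ a) = rho g₂ r₂ r₂ (θ a)) :
    TopEquivAt0 (NF g₁) (NF g₂) := by
  have ax1 : ∀ a, (g₁ 0 a ≤ 0 ∨ g₂ 0 (θ a) ≤ 0) → g₁ 0 a = g₂ 0 (θ a) := by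
    intro a h
    by_cases ha : P a
    · rw [hθ a ha, hax]
    · have k1 := hn a ha
      have k2 := hn _ (hθ' a ha)
      rw [hax (θ a)] at k2
      rcases h with h | h <;> linarith
  have hs0 : θ 0 = 0 := hθ 0 hP0
  obtain ⟨δ₁, M₁⟩ := match_F_zero H₁ H₂ θ hs0 ax1 h0 hconj
  obtain ⟨δ₂, M₂⟩ := match_F_zero H₂ H₁ θ.symm (by rw [θ.symm_apply_eq, hs0])
    (by
      intro a h
      have := ax1 (θ.symm a)
      rw [θ.apply_symm_apply] at this
      exact (this h.symm).symm) (by rw [← hax, h0])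
    (by
      intro a
      rw [θ.symm_apply_eq, hconj, θ.apply_symm_apply])
  exact topEquiv_of_match H₁ H₂ M₁ M₂

theorem equiv_F (H₁ : Adm g₁ r₁ (-1)) (H₂ : Adm g₂ r₂ (-1)) (hax : ∀ a, g₁ 0 a = g₂ 0 a)
    (h : 0 < g₁ 0 0 ∨ (g₁ 0 0 = 0 ∧ ((∀ a, 0 < g₁ 0 a ↔ a < 0) ∨ (∀ a, 0 < g₁ 0 a ↔ 0 < a)))) :
    TopEquivAt0 (NF g₁) (NF g₂) := by
  rcases h with h | ⟨h0, h | h⟩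
  · obtain ⟨δ₁, M₁⟩ := match_F_neg H₁ H₂ hax h
    obtain ⟨δ₂, M₂⟩ := match_F_neg H₂ H₁ (fun a => (hax a).symm) (by rw [← hax]; exact h)
    exact topEquiv_of_match H₁ H₂ M₁ M₂
  · have hf : ∀ a, 0 ≤ a → g₁ 0 a ≤ 0 := fun a ha => not_lt.1 (fun hc => by
      have := (h a).1 hc; linarith)
    obtain ⟨θ, t1, t2, t3⟩ := conj_exists H₁.rhoIso H₂.rhoIso
      (fun a ha => H₁.rho_fix (hf a ha)) (fun a ha => H₁.rho_gt ((h a).2 ha))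
      (fun a ha => H₂.rho_fix (by rw [← hax]; exact hf a ha)) (fun a ha => H₂.rho_gt (by rw [← hax]; exact (h a).2 ha))
    exact match_F_zero' H₁ H₂ hax h0 (P := fun a => 0 ≤ a) θ hf (fun a ha => (h a).2 (not_le.1 ha)) le_rfl t1
      (fun a ha => not_le.2 (t2 a (not_le.1 ha))) t3
  · have hf : ∀ a, a ≤ 0 → g₁ 0 a ≤ 0 := fun a ha => not_lt.1 (fun hc => by
      have := (h a).1 hc; linarith)
    have f1 : ∀ a, a ≤ 0 → H₁.rhoIso a = a := fun a ha => H₁.rho_fix (hf a ha)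
    have f2 : ∀ a, a ≤ 0 → H₂.rhoIso a = a := fun a ha => H₂.rho_fix (by rw [← hax]; exact hf a ha)
    have k1 : ∀ a, 0 < a → a < H₁.rhoIso a := fun a ha => H₁.rho_gt ((h a).2 ha)
    have k2 : ∀ a, 0 < a → a < H₂.rhoIso a := fun a ha => H₂.rho_gt (by rw [← hax]; exact (h a).2 ha)
    let N : (ℝ ≃o ℝ) → (ℝ ≃o ℝ) := fun ρ =>
      StrictMono.orderIsoOfRightInverse (fun a => -(ρ (-a))) (fun a b hab => neg_lt_neg (ρ.strictMono (neg_lt_neg hab)))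
        (fun a => -(ρ.symm (-a))) (fun a => by simp)
    have hN : ∀ ρ a, N ρ a = -(ρ (-a)) := fun _ _ => rfl
    have n1 : ∀ ρ : ℝ ≃o ℝ, (∀ a, a ≤ 0 → ρ a = a) → ∀ a, 0 ≤ a → N ρ.symm a = a := by
      intro ρ hρ a ha
      rw [hN, neg_eq_iff_eq_neg, ρ.symm_apply_eq, hρ _ (by linarith)]
    have n2 : ∀ ρ : ℝ ≃o ℝ, (∀ a, 0 < a → a < ρ a) → ∀ a, a < 0 → a < N ρ.symm a := by
      intro ρ hρ a ha
      rw [hN]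
      have : ρ.symm (-a) < -a := by
        rw [← ρ.lt_iff_lt, ρ.apply_symm_apply]
        exact hρ _ (by linarith)
      linarith
    obtain ⟨θ, t1, t2, t3⟩ := conj_exists (N H₁.rhoIso.symm) (N H₂.rhoIso.symm) (n1 _ f1) (n2 _ k1) (n1 _ f2) (n2 _ k2)
    refine match_F_zero' H₁ H₂ hax h0 (P := fun a => a ≤ 0) (N θ) hf (fun a ha => (h a).2 (not_le.1 ha)) le_rfl
      (fun a ha => by rw [hN, t1 _ (by linarith)]; ring)
      (fun a ha => by
        have := t2 (-a) (by linarith [not_le.1 ha])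
        rw [hN]; intro hc; linarith) ?_
    intro a
    have := t3 (-(H₁.rhoIso a))
    rw [hN, hN, neg_neg, OrderIso.symm_apply_apply] at this
    rw [← H₁.rhoIso_apply, ← H₂.rhoIso_apply, hN, hN]
    rw [this, neg_neg, OrderIso.apply_symm_apply]

theorem equiv_S (H₁ : Adm g₁ r₁ 1) (H₂ : Adm g₂ r₂ 1) (hax : ∀ a, g₁ 0 a = g₂ 0 a) (h0 : 0 ≤ g₁ 0 0) :
    TopEquivAt0 (NF g₁) (NF g₂) := by
  obtain ⟨δ₁, M₁⟩ := match_S H₁ H₂ hax h0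
  obtain ⟨δ₂, M₂⟩ := match_S H₂ H₁ (fun a => (hax a).symm) (by rw [← hax]; exact h0)
  exact topEquiv_of_match H₁ H₂ M₁ M₂
end


lemma TopEquivAt0.trans {ω Ω Λ : (ℝ × ℝ) → (ℝ × ℝ) → ℝ} (h₁ : TopEquivAt0 ω Ω) (h₂ : TopEquivAt0 Ω Λ) :
    TopEquivAt0 ω Λ := by
  obtain ⟨U, V, h, k, hU, hV, U0, V0, h0, hc, kc, hb, hi, hf, hg⟩ := h₁
  obtain ⟨U₂, V₂, h2, k2, hU2, hV2, U02, V02, h02, hc2, kc2, hb2, hi2, hf2, hg2⟩ := h₂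
  have k20 : k2 0 = 0 := by
    have := hi2.1 U02
    rwa [h02] at this
  have km : MapsTo k V U := fun q hq => by
    obtain ⟨p, hp, rfl⟩ := hb.surjOn hq
    rw [hi.1 hp]; exact hp
  have km2 : MapsTo k2 V₂ U₂ := fun q hq => by
    obtain ⟨p, hp, rfl⟩ := hb2.surjOn hq
    rw [hi2.1 hp]; exact hp
  have hm := hb.mapsTo
  have hm2 := hb2.mapsTo
  have l1 : ∀ p ∈ U ∩ h ⁻¹' U₂, k (k2 (h2 (h p))) = p := fun p hp => by
    rw [hi2.1 hp.2, hi.1 hp.1]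
  have l2 : ∀ q ∈ V₂ ∩ k2 ⁻¹' V, h2 (h (k (k2 q))) = q := fun q hq => by
    rw [hi.2 hq.2, hi2.2 hq.1]
  have m1 : MapsTo (h2 ∘ h) (U ∩ h ⁻¹' U₂) (V₂ ∩ k2 ⁻¹' V) := fun p hp =>
    ⟨hm2 hp.2, by simp only [mem_preimage, Function.comp]; rw [hi2.1 hp.2]; exact hm hp.1⟩
  have m2 : MapsTo (k ∘ k2) (V₂ ∩ k2 ⁻¹' V) (U ∩ h ⁻¹' U₂) := fun q hq =>
    ⟨km hq.2, by simp only [mem_preimage, Function.comp]; rw [hi.2 hq.2]; exact km2 hq.1⟩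
  refine ⟨U ∩ h ⁻¹' U₂, V₂ ∩ k2 ⁻¹' V, h2 ∘ h, k ∘ k2, hc.isOpen_inter_preimage hU hU2,
    kc2.isOpen_inter_preimage hV2 hV, ⟨U0, by simp only [mem_preimage, h0]; exact U02⟩,
    ⟨V02, by simp only [mem_preimage, k20]; exact V0⟩, by simp [h0, h02],
    hc2.comp (hc.mono inter_subset_left) (fun p hp => hp.2),
    kc.comp (kc2.mono inter_subset_left) (fun p hp => hp.2), InvOn.bijOn (f' := k ∘ k2) ⟨l1, l2⟩ m1 m2, ⟨l1, l2⟩, ?_, ?_⟩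
  · intro γ I hγ hmγ
    obtain ⟨σ, J, hσ, e1⟩ := hf γ I hγ (fun t ht => (hmγ ht).1)
    obtain ⟨τ, K, hτ, e2⟩ := hf2 σ J hσ (fun t ht => by
      have : σ t ∈ h '' (γ '' I) := e1 ▸ mem_image_of_mem _ ht
      obtain ⟨_, ⟨s, hs, rfl⟩, hz⟩ := this
      rw [← hz]; exact (hmγ hs).2)
    exact ⟨τ, K, hτ, by rw [image_comp, e1, e2]⟩
  · intro γ I hγ hmγ
    obtain ⟨σ, J, hσ, e1⟩ := hg2 γ I hγ (fun t ht => (hmγ ht).1)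
    obtain ⟨τ, K, hτ, e2⟩ := hg σ J hσ (fun t ht => by
      have : σ t ∈ k2 '' (γ '' I) := e1 ▸ mem_image_of_mem _ ht
      obtain ⟨_, ⟨s, hs, rfl⟩, hz⟩ := this
      rw [← hz]; exact (hmγ hs).2)
    exact ⟨τ, K, hτ, by rw [image_comp, e1, e2]⟩

lemma curve_map {ω Ω : (ℝ × ℝ) → (ℝ × ℝ) → ℝ} {U : Set (ℝ × ℝ)} {Φ : ℝ × ℝ → ℝ × ℝ} (hU : IsOpen U)
    (hΦ : ContDiffOn ℝ 1 Φ U)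
    (hω : ∀ p ∈ U, ∀ v, v ≠ 0 → ω p v = 0 → fderiv ℝ Φ p v ≠ 0 ∧ Ω (Φ p) (fderiv ℝ Φ p v) = 0)
    (γ : ℝ → ℝ × ℝ) (I : Set ℝ) (hγ : IsIntegralCurveOnBDE ω γ I) (hm : MapsTo γ I U) :
    ∃ σ J, IsIntegralCurveOnBDE Ω σ J ∧ Φ '' (γ '' I) = σ '' J := by
  obtain ⟨hI, dγ, hdc, hd⟩ := hγ
  refine ⟨Φ ∘ γ, I, ⟨hI, fun t => fderiv ℝ Φ (γ t) (dγ t), ?_, ?_⟩, by rw [image_comp]⟩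
  · have h1 : ContinuousOn (fderiv ℝ Φ) U := hΦ.continuousOn_fderiv_of_isOpen hU le_rfl
    have h2 : ContinuousOn γ I := fun t ht => (hd t ht).1.continuousAt.continuousWithinAt
    exact (h1.comp h2 hm).clm_apply hdc
  · intro t ht
    obtain ⟨a1, a2, a3⟩ := hd t ht
    obtain ⟨b1, b2⟩ := hω _ (hm ht) _ a2 a3
    have hdiff : DifferentiableAt ℝ Φ (γ t) :=
      (hΦ.differentiableOn one_ne_zero).differentiableAt (hU.mem_nhds (hm ht))
    exact ⟨hdiff.hasFDerivAt.comp_hasDerivAt t a1, b1, b2⟩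

lemma topEquiv_of_diffeo {ω Ω : (ℝ × ℝ) → (ℝ × ℝ) → ℝ} {U V : Set (ℝ × ℝ)} {Φ Ψ : ℝ × ℝ → ℝ × ℝ}
    (hU : IsOpen U) (hV : IsOpen V) (U0 : (0 : ℝ × ℝ) ∈ U) (V0 : (0 : ℝ × ℝ) ∈ V) (h0 : Φ 0 = 0)
    (hΦ : ContDiffOn ℝ 1 Φ U) (hΨ : ContDiffOn ℝ 1 Ψ V) (m1 : MapsTo Φ U V) (m2 : MapsTo Ψ V U)
    (hi : InvOn Ψ Φ U V) (hω : ∀ p ∈ U, ∀ v, ω p v = 0 ↔ Ω (Φ p) (fderiv ℝ Φ p v) = 0) :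
    TopEquivAt0 ω Ω := by
  have d1 : ∀ p ∈ U, DifferentiableAt ℝ Φ p := fun p hp =>
    (hΦ.differentiableOn one_ne_zero).differentiableAt (hU.mem_nhds hp)
  have d2 : ∀ p ∈ V, DifferentiableAt ℝ Ψ p := fun p hp =>
    (hΨ.differentiableOn one_ne_zero).differentiableAt (hV.mem_nhds hp)
  have c1 : ∀ p ∈ U, ∀ v, fderiv ℝ Ψ (Φ p) (fderiv ℝ Φ p v) = v := by
    intro p hp v
    have e1 := (d2 _ (m1 hp)).hasFDerivAt.comp p (d1 p hp).hasFDerivAt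
    have e2 : HasFDerivAt (Ψ ∘ Φ) (ContinuousLinearMap.id ℝ (ℝ × ℝ)) p :=
      (hasFDerivAt_id p).congr_of_eventuallyEq (by
        filter_upwards [hU.mem_nhds hp] with z hz using hi.1 hz)
    exact congrArg (fun L => L v) (e1.unique e2)
  have c2 : ∀ q ∈ V, ∀ v, fderiv ℝ Φ (Ψ q) (fderiv ℝ Ψ q v) = v := by
    intro p hp v
    have e1 := (d1 _ (m2 hp)).hasFDerivAt.comp p (d2 p hp).hasFDerivAt
    have e2 : HasFDerivAt (Φ ∘ Ψ) (ContinuousLinearMap.id ℝ (ℝ × ℝ)) p :=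
      (hasFDerivAt_id p).congr_of_eventuallyEq (by
        filter_upwards [hV.mem_nhds hp] with z hz using hi.2 hz)
    exact congrArg (fun L => L v) (e1.unique e2)
  refine ⟨U, V, Φ, Ψ, hU, hV, U0, V0, h0, hΦ.continuousOn, hΨ.continuousOn, InvOn.bijOn hi m1 m2, hi, ?_, ?_⟩
  · exact fun γ I hγ hm => curve_map hU hΦ (fun p hp v hv h => ⟨fun hc => hv (by
      rw [← c1 p hp v, hc, map_zero]), (hω p hp v).1 h⟩) γ I hγ hm
  · exact fun γ I hγ hm => curve_map hV hΨ (fun q hq v hv h => ⟨fun hc => hv (by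
      rw [← c2 q hq v, hc, map_zero]), by
        rw [hω _ (m2 hq), c2 q hq, hi.2 hq]; exact h⟩) γ I hγ hm

lemma topEquiv_of_eq {ω Ω : (ℝ × ℝ) → (ℝ × ℝ) → ℝ} {U : Set (ℝ × ℝ)} (hU : IsOpen U) (U0 : (0 : ℝ × ℝ) ∈ U)
    (h : ∀ p ∈ U, ∀ v, ω p v = Ω p v) : TopEquivAt0 ω Ω :=
  topEquiv_of_diffeo (Φ := id) (Ψ := id) hU hU U0 U0 rfl contDiffOn_id contDiffOn_id (mapsTo_id _) (mapsTo_id _)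
    ⟨fun _ _ => rfl, fun _ _ => rfl⟩ (fun p hp v => by simp [h p hp])

lemma topEquiv_empty {g₁ g₂ : ℝ → ℝ → ℝ} {r₁ r₂ e₁ e₂ : ℝ} (H₁ : Adm g₁ r₁ e₁) (H₂ : Adm g₂ r₂ e₂)
    (h1 : g₁ 0 0 < 0) (h2 : g₂ 0 0 < 0) : TopEquivAt0 (NF g₁) (NF g₂) := by
  have key : ∀ {g : ℝ → ℝ → ℝ} {γ : ℝ → ℝ × ℝ} {I : Set ℝ} {U : Set (ℝ × ℝ)}, (∀ p ∈ U, g |p.1| p.2 < 0) →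
      IsIntegralCurveOnBDE (NF g) γ I → MapsTo γ I U → I = ∅ := by
    intro g γ I U hg ⟨_, dγ, _, hd⟩ hm
    rw [eq_empty_iff_forall_notMem]
    intro t ht
    obtain ⟨_, a2, a3⟩ := hd t ht
    have := hg _ (hm ht)
    simp only [NF] at a3
    apply a2
    have k1 : (dγ t).1 ^ 2 = 0 := by
      by_contra hc
      have : 0 < (dγ t).1 ^ 2 := lt_of_le_of_ne (sq_nonneg _) (Ne.symm hc)
      nlinarith [sq_nonneg (dγ t).2]
    have k2 : (dγ t).2 ^ 2 = 0 := by rw [k1] at a3; linarith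
    exact Prod.ext (pow_eq_zero_iff two_ne_zero |>.1 k1) (pow_eq_zero_iff two_ne_zero |>.1 k2)
  have c1 : Continuous (fun p : ℝ × ℝ => g₁ |p.1| p.2) :=
    H₁.cont.comp ((continuous_abs.comp continuous_fst).prodMk continuous_snd)
  have c2 : Continuous (fun p : ℝ × ℝ => g₂ |p.1| p.2) :=
    H₂.cont.comp ((continuous_abs.comp continuous_fst).prodMk continuous_snd)
  set U : Set (ℝ × ℝ) := {p | g₁ |p.1| p.2 < 0} ∩ {p | g₂ |p.1| p.2 < 0} with hU
  have hUo : IsOpen U := (isOpen_lt c1 continuous_const).inter (isOpen_lt c2 continuous_const)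
  have h0 : (0 : ℝ × ℝ) ∈ U := ⟨by simpa using h1, by simpa using h2⟩
  have hemp : ∀ ω, IsIntegralCurveOnBDE ω (fun _ => 0) ∅ := fun ω =>
    ⟨⟨0, 0, by simp⟩, fun _ => 0, continuousOn_empty _, by simp⟩
  refine ⟨U, U, id, id, hUo, hUo, h0, h0, rfl, continuousOn_id, continuousOn_id, bijOn_id _,
    ⟨fun _ _ => rfl, fun _ _ => rfl⟩, ?_, ?_⟩
  · intro γ I hγ hm
    have := key (fun p (hp : p ∈ U) => hp.1) hγ hm
    subst this
    exact ⟨_, ∅, hemp _, by simp⟩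
  · intro γ I hγ hm
    have := key (fun p (hp : p ∈ U) => hp.2) hγ hm
    subst this
    exact ⟨_, ∅, hemp _, by simp⟩

/-- symmetric clamp -/
def cl (s y : ℝ) : ℝ := max (-s) (min s y)

lemma cl_mem {s : ℝ} (hs : 0 ≤ s) (y : ℝ) : |cl s y| ≤ s := by
  rw [abs_le, cl]; grind

lemma cl_eq {s y : ℝ} (hy : |y| ≤ s) : cl s y = y := by
  rw [abs_le] at hy
  rw [cl]; grind

lemma cl_lip {s : ℝ} (hs : 0 ≤ s) (x x' : ℝ) : |cl s x - cl s x'| ≤ |x - x'| := by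
  rw [cl, cl]
  rcases le_total x x' with h | h
  · rw [abs_sub_comm, abs_sub_comm x, abs_of_nonneg (sub_nonneg.2 h)]
    rw [abs_le]; constructor <;> grind
  · rw [abs_of_nonneg (sub_nonneg.2 h)]
    rw [abs_le]; constructor <;> grind

def clamped (k : ℝ × ℝ → ℝ) (r s : ℝ) : ℝ → ℝ → ℝ := fun x y => k ((clp r x) ^ 2, cl s y)

lemma adm_of_C1 {k : ℝ × ℝ → ℝ} {L : ℝ × ℝ →L[ℝ] ℝ} (h : HasStrictFDerivAt k L 0) {e : ℝ}
    (he : e = 1 ∨ e = -1) (h1 : 1 ≤ e * L (1, 0)) (h2 : |L (0, 1)| ≤ 1 / 16) :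
    ∃ η > 0, ∀ r s, 0 < r → r ^ 2 ≤ η → 0 < s → s ≤ η → Adm (clamped k r s) r e := by
  obtain ⟨N, hN, hap⟩ := h.approximates_deriv_on_nhds (c := 1 / 16) (Or.inr (by positivity))
  obtain ⟨η, hη, hb⟩ := Metric.mem_nhds_iff.1 hN
  refine ⟨η / 2, by positivity, fun r s hr hrη hs hsη => ?_⟩
  have hmem : ∀ x y, ((clp r x) ^ 2, cl s y) ∈ N := by
    intro x y
    apply hb
    have m := clp_mem hr.le x
    have m2 := cl_mem hs.le y
    have q1 : (clp r x) ^ 2 ≤ r ^ 2 := pow_le_pow_left₀ m.1 m.2 2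
    rw [mem_ball_zero_iff, Prod.norm_def]
    apply max_lt
    · simp only [Real.norm_eq_abs]
      rw [abs_of_nonneg (sq_nonneg _)]; linarith
    · simp only [Real.norm_eq_abs]; linarith
  have hA : ∀ x y x' y', |clamped k r s x y - clamped k r s x' y' -
      (((clp r x) ^ 2 - (clp r x') ^ 2) * L (1, 0) + (cl s y - cl s y') * L (0, 1))| ≤
      1 / 16 * max |(clp r x) ^ 2 - (clp r x') ^ 2| |cl s y - cl s y'| := by
    intro x y x' y'
    have := hap _ (hmem x y) _ (hmem x' y')
    have hL : L (((clp r x) ^ 2, cl s y) - ((clp r x') ^ 2, cl s y')) =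
        ((clp r x) ^ 2 - (clp r x') ^ 2) * L (1, 0) + (cl s y - cl s y') * L (0, 1) := by
      have : (((clp r x) ^ 2, cl s y) - ((clp r x') ^ 2, cl s y') : ℝ × ℝ) =
        ((clp r x) ^ 2 - (clp r x') ^ 2) • ((1:ℝ), (0:ℝ)) + (cl s y - cl s y') • ((0:ℝ), (1:ℝ)) := by
        ext <;> simp
      rw [this, map_add, map_smul, map_smul, smul_eq_mul, smul_eq_mul]
    rw [hL] at this
    simpa [Prod.norm_def, clamped] using this
  set C : ℝ := |L (1, 0)| + |L (0, 1)| + 1 with hC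
  have hC0 : 0 ≤ C := by positivity
  have hB : ∀ x y x' y', |clamped k r s x y - clamped k r s x' y'| ≤
      C * (|(clp r x) ^ 2 - (clp r x') ^ 2| + |cl s y - cl s y'|) := by
    intro x y x' y'
    have := hA x y x' y'
    set P := (clp r x) ^ 2 - (clp r x') ^ 2
    set Q := cl s y - cl s y'
    have t1 := abs_sub_abs_le_abs_sub (clamped k r s x y - clamped k r s x' y') (P * L (1, 0) + Q * L (0, 1))
    have t2 := abs_add_le (P * L (1, 0)) (Q * L (0, 1))
    rw [abs_mul, abs_mul] at t2
    have t3 : max |P| |Q| ≤ |P| + |Q| := max_le (by linarith [abs_nonneg Q]) (by linarith [abs_nonneg P])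
    have p0 := abs_nonneg P
    have q0 := abs_nonneg Q
    have l0 := abs_nonneg (L (1, 0))
    have l1 := abs_nonneg (L (0, 1))
    have m1 := mul_nonneg p0 l1
    have m2 := mul_nonneg q0 l0
    have : C * (|P| + |Q|) = |P| * |L (1, 0)| + |P| * |L (0, 1)| + |P| + |Q| * |L (1, 0)| + |Q| * |L (0, 1)| + |Q| := by
      rw [hC]; ring
    linarith
  refine ⟨hr, he, ⟨C * (2 * r + 1), by positivity, ?_⟩, ⟨|clamped k r s 0 0| + C * (2 * r ^ 2 + 2 * s), ?_⟩, ?_, ?_⟩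
  · intro x x' y y'
    refine (hB x y x' y').trans ?_
    rw [mul_assoc]
    apply mul_le_mul_of_nonneg_left _ hC0
    have a1 := clp_lip hr.le x x'
    have a2 := cl_lip hs.le y y'
    have m := clp_mem hr.le x
    have m' := clp_mem hr.le x'
    have : |(clp r x) ^ 2 - (clp r x') ^ 2| ≤ 2 * r * |x - x'| := by
      rw [sq_sub_sq, abs_mul]
      apply mul_le_mul _ a1 (abs_nonneg _) (by positivity)
      rw [abs_of_nonneg (by linarith [m.1, m'.1])]
      linarith [m.2, m'.2]
    have := abs_nonneg (x - x')
    have := mul_nonneg hr.le (abs_nonneg (y - y'))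
    nlinarith
  · intro x y
    have := hB x y 0 0
    have t1 := abs_sub_abs_le_abs_sub (clamped k r s x y) (clamped k r s 0 0)
    have m := clp_mem hr.le x
    have m' := clp_mem hr.le 0
    have u1 := cl_mem hs.le y
    have u2 := cl_mem hs.le 0
    have q1 : (clp r x) ^ 2 ≤ r ^ 2 := pow_le_pow_left₀ m.1 m.2 2
    have q2 : (clp r 0) ^ 2 ≤ r ^ 2 := pow_le_pow_left₀ m'.1 m'.2 2
    have v1 : |(clp r x) ^ 2 - (clp r 0) ^ 2| ≤ 2 * r ^ 2 := by
      rw [abs_le]; constructor <;> nlinarith [sq_nonneg (clp r x), sq_nonneg (clp r 0)]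
    have v2 : |cl s y - cl s 0| ≤ 2 * s := (abs_sub _ _).trans (by linarith)
    have := mul_le_mul_of_nonneg_left (add_le_add v1 v2) hC0
    linarith
  · intro x y y'
    have := hA x y x y'
    rw [sub_self, abs_zero, zero_mul, zero_add, max_eq_right (abs_nonneg _)] at this
    have a2 := cl_lip hs.le y y'
    have t1 := abs_sub_abs_le_abs_sub (clamped k r s x y - clamped k r s x y') ((cl s y - cl s y') * L (0, 1))
    rw [abs_mul] at t1
    have := mul_le_mul_of_nonneg_left h2 (abs_nonneg (cl s y - cl s y'))
    linarith
  · intro x x' y hx hxx hxr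
    have := hA x' y x y
    rw [sub_self, abs_zero, zero_mul, add_zero, clp_eq ⟨hx, hxx.trans hxr⟩, clp_eq ⟨hx.trans hxx, hxr⟩,
      max_eq_left (abs_nonneg _)] at this
    have hp : 0 ≤ x' ^ 2 - x ^ 2 := by nlinarith
    rw [abs_of_nonneg hp, abs_le] at this
    have := mul_le_mul_of_nonneg_left h1 hp
    rcases he with rfl | rfl <;> nlinarith


def k2f (ε t u : ℝ) (p : ℝ × ℝ) : ℝ := -(ε * p.1 + p.2 ^ 3 + u * p.2 + t)
def zz (u : ℝ) (p : ℝ × ℝ) : ℝ := p.2 - u * p.1 / 2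
def yy (u : ℝ) (p : ℝ × ℝ) : ℝ := 2 * zz u p / (1 + √(1 + 6 * p.1 * zz u p))
def k1y (ε t u s y : ℝ) : ℝ := -((1 + 3 * s * y) * (6 * ε * s + y ^ 3 + u * y + t) - s * (3 * y ^ 2 + u) ^ 2)
def k1f (ε t u : ℝ) (p : ℝ × ℝ) : ℝ := k1y ε t u p.1 (yy u p)

lemma contDiff_zz (u : ℝ) : ContDiff ℝ 1 (zz u) := by unfold zz; fun_prop

lemma contDiffAt_yy (u : ℝ) {p : ℝ × ℝ} (h : 0 < 1 + 6 * p.1 * zz u p) : ContDiffAt ℝ 1 (yy u) p := by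
  have hz := (contDiff_zz u).contDiffAt (x := p)
  unfold yy
  refine ContDiffAt.div (by fun_prop) (contDiffAt_const.add (ContDiffAt.sqrt (by fun_prop) h.ne')) ?_
  positivity

lemma contDiffAt_k1f (ε t u : ℝ) : ContDiffAt ℝ 1 (k1f ε t u) 0 := by
  have := contDiffAt_yy u (p := 0) (by simp)
  unfold k1f k1y
  fun_prop

lemma line_s {k : ℝ × ℝ → ℝ} {d : ℝ} (h : ContDiffAt ℝ 1 k 0) (hd : HasDerivAt (fun s => k (s, 0)) d 0) :
    fderiv ℝ k 0 (1, 0) = d := by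
  have h1 : HasFDerivAt k (fderiv ℝ k 0) ((fun s : ℝ => ((s, 0) : ℝ × ℝ)) 0) :=
    (h.differentiableAt one_ne_zero).hasFDerivAt
  have h2 : HasDerivAt (fun s : ℝ => ((s, 0) : ℝ × ℝ)) (1, 0) 0 := (hasDerivAt_id 0).prodMk (hasDerivAt_const 0 0)
  exact (HasFDerivAt.comp_hasDerivAt (f := fun s : ℝ => ((s, 0) : ℝ × ℝ)) (0:ℝ) h1 h2).unique hd

lemma line_y {k : ℝ × ℝ → ℝ} {d : ℝ} (h : ContDiffAt ℝ 1 k 0) (hd : HasDerivAt (fun s => k (0, s)) d 0) :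
    fderiv ℝ k 0 (0, 1) = d := by
  have h1 : HasFDerivAt k (fderiv ℝ k 0) ((fun s : ℝ => ((0, s) : ℝ × ℝ)) 0) :=
    (h.differentiableAt one_ne_zero).hasFDerivAt
  have h2 : HasDerivAt (fun s : ℝ => ((0, s) : ℝ × ℝ)) (0, 1) 0 := (hasDerivAt_const 0 0).prodMk (hasDerivAt_id 0)
  exact (HasFDerivAt.comp_hasDerivAt (f := fun s : ℝ => ((0, s) : ℝ × ℝ)) (0:ℝ) h1 h2).unique hd

lemma k1f_zero (ε t u y : ℝ) : k1f ε t u (0, y) = -(y ^ 3 + u * y + t) := by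
  have : yy u (0, y) = y := by simp [yy, zz]; ring
  simp [k1f, k1y, this]

lemma k2f_zero (ε t u y : ℝ) : k2f ε t u (0, y) = -(y ^ 3 + u * y + t) := by
  simp [k2f]

lemma deriv_cub (t u : ℝ) : HasDerivAt (fun y : ℝ => -(y ^ 3 + u * y + t)) (-u) 0 := by
  have := ((((hasDerivAt_pow 3 (0:ℝ)).add ((hasDerivAt_id (0:ℝ)).const_mul u))).add_const t).neg
  exact this.congr_deriv (by simp)

lemma k1f_s (ε t u : ℝ) : HasDerivAt (fun s => k1f ε t u (s, 0)) (-6 * ε + 3 * u ^ 2 / 2) 0 := by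
  have hy : HasDerivAt (fun s : ℝ => yy u (s, 0)) (-u / 2) 0 := by
    have hz : HasDerivAt (fun s : ℝ => zz u (s, 0)) (-u / 2) 0 := by
      have := ((hasDerivAt_id (0:ℝ)).const_mul (-u / 2))
      have e : (fun s : ℝ => zz u (s, 0)) = fun y => -u / 2 * id y := by
        funext s; simp [zz]; ring
      rw [e]
      exact this.congr_deriv (by simp)
    have hw : HasDerivAt (fun s : ℝ => 1 + 6 * s * zz u (s, 0)) 0 0 := by
      have := (((hasDerivAt_id (0:ℝ)).const_mul 6).mul hz).const_add 1
      exact this.congr_deriv (by simp [zz])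
    have hq := (hw.sqrt (by simp)).const_add 1
    have := (hz.const_mul 2).div hq (by positivity)
    exact this.congr_deriv (by simp [zz]; ring)
  have y0 : yy u (0, 0) = 0 := by simp [yy, zz]
  have hs := hasDerivAt_id (0:ℝ)
  have := (((((hs.const_mul 3).mul hy).const_add 1).mul
    (((((hs.const_mul (6 * ε)).add (hy.pow 3)).add (hy.const_mul u)).add_const t))).sub
    (hs.mul ((((hy.pow 2).const_mul 3).add_const u).pow 2))).neg
  exact this.congr_deriv (by simp [y0]; ring)

lemma adm_pair (ε : ℝ) (hε : ε = 1 ∨ ε = -1) (t u : ℝ) (hu : |u| ≤ 1 / 16) :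
    ∃ η > 0, ∀ r s, 0 < r → r ^ 2 ≤ η → 0 < s → s ≤ η →
      Adm (clamped (k1f ε t u) r s) r (-ε) ∧ Adm (clamped (k2f ε t u) r s) r (-ε) := by
  have he : -ε = 1 ∨ -ε = -1 := by rcases hε with rfl | rfl <;> simp
  have c1 := contDiffAt_k1f ε t u
  have c2 : ContDiffAt ℝ 1 (k2f ε t u) 0 := by unfold k2f; fun_prop
  have y1 : fderiv ℝ (k1f ε t u) 0 (0, 1) = -u := line_y c1 (by simp_rw [k1f_zero]; exact deriv_cub t u)
  have y2 : fderiv ℝ (k2f ε t u) 0 (0, 1) = -u := line_y c2 (by simp_rw [k2f_zero]; exact deriv_cub t u)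
  have s1 := line_s c1 (k1f_s ε t u)
  have s2 : fderiv ℝ (k2f ε t u) 0 (1, 0) = -ε := line_s c2 (by
    have := (((hasDerivAt_id (0:ℝ)).const_mul ε).add_const t).neg
    have e : (fun s : ℝ => k2f ε t u (s, 0)) = -fun x => ε * id x + t := by
      funext s; simp [k2f]
    rw [e]
    exact this.congr_deriv (by simp))
  have hu2 : u ^ 2 ≤ 1 := by rw [abs_le] at hu; nlinarith
  obtain ⟨η₁, p1, a1⟩ := adm_of_C1 (c1.hasStrictFDerivAt one_ne_zero) he
    (by rw [s1]; rcases hε with rfl | rfl <;> nlinarith) (by rw [y1, abs_neg]; exact hu)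
  obtain ⟨η₂, p2, a2⟩ := adm_of_C1 (c2.hasStrictFDerivAt one_ne_zero) he
    (by rw [s2]; rcases hε with rfl | rfl <;> norm_num) (by rw [y2, abs_neg]; exact hu)
  exact ⟨min η₁ η₂, by positivity, fun r s hr hrη hs hsη =>
    ⟨a1 r s hr (hrη.trans (min_le_left _ _)) hs (hsη.trans (min_le_left _ _)),
     a2 r s hr (hrη.trans (min_le_right _ _)) hs (hsη.trans (min_le_right _ _))⟩⟩

lemma clamped_zero {k : ℝ × ℝ → ℝ} {r s : ℝ} (hr : 0 ≤ r) (y : ℝ) : clamped k r s 0 y = k (0, cl s y) := by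
  rw [clamped, clp_eq ⟨le_rfl, hr⟩]; simp

lemma cl_neg_iff {s : ℝ} (hs : 0 < s) (y : ℝ) : cl s y < 0 ↔ y < 0 := by rw [cl]; grind
lemma cl_pos_iff {s : ℝ} (hs : 0 < s) (y : ℝ) : 0 < cl s y ↔ 0 < y := by rw [cl]; grind

lemma nf_equiv (ε : ℝ) (hε : ε = 1 ∨ ε = -1) (t u : ℝ) (hu : |u| ≤ 1 / 16) :
    ∃ r s, 0 < r ∧ 0 < s ∧ TopEquivAt0 (NF (clamped (k1f ε t u) r s)) (NF (clamped (k2f ε t u) r s)) := by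
  obtain ⟨η, hη, hA⟩ := adm_pair ε hε t u hu
  obtain ⟨s, hs, hsη, hsu⟩ : ∃ s : ℝ, 0 < s ∧ s ≤ η ∧ (u < 0 → s ^ 2 < -u) := by
    by_cases h : u < 0
    · refine ⟨min η (min 1 (-u / 2)), ?_, min_le_left _ _, fun _ => ?_⟩
      · have : 0 < -u / 2 := by linarith
        positivity
      · have h1 : min η (min 1 (-u / 2)) ≤ 1 := (min_le_right _ _).trans (min_le_left _ _)
        have h2 : min η (min 1 (-u / 2)) ≤ -u / 2 := (min_le_right _ _).trans (min_le_right _ _)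
        have h3 : 0 < min η (min 1 (-u / 2)) := by
          have : 0 < -u / 2 := by linarith
          positivity
        nlinarith
    · exact ⟨η, hη, le_rfl, fun h' => absurd h' h⟩
  obtain ⟨r, hr, hrη⟩ : ∃ r : ℝ, 0 < r ∧ r ^ 2 ≤ η := ⟨√η, Real.sqrt_pos.2 hη, (Real.sq_sqrt hη.le).le⟩
  obtain ⟨H₁, H₂⟩ := hA r s hr hrη hs hsη
  refine ⟨r, s, hr, hs, ?_⟩
  have z1 : ∀ a, clamped (k1f ε t u) r s 0 a = -((cl s a) ^ 3 + u * cl s a + t) := fun a => by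
    rw [clamped_zero hr.le, k1f_zero]
  have z2 : ∀ a, clamped (k2f ε t u) r s 0 a = -((cl s a) ^ 3 + u * cl s a + t) := fun a => by
    rw [clamped_zero hr.le, k2f_zero]
  have hax : ∀ a, clamped (k1f ε t u) r s 0 a = clamped (k2f ε t u) r s 0 a := fun a => by rw [z1, z2]
  have hcl0 : cl s 0 = 0 := cl_eq (by simpa using hs.le)
  have z0 : clamped (k1f ε t u) r s 0 0 = -t := by rw [z1, hcl0]; simp
  rcases lt_or_ge 0 t with ht | ht
  · exact topEquiv_empty H₁ H₂ (by linarith) (by rw [← hax]; linarith)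
  rcases hε with rfl | rfl
  · refine equiv_F H₁ H₂ hax ?_
    rcases lt_or_eq_of_le ht with ht | rfl
    · left; linarith
    · right
      refine ⟨by linarith, ?_⟩
      rcases lt_or_ge u 0 with hu0 | hu0
      · right
        intro a
        rw [z1, ← cl_pos_iff hs a]
        have h1 := hsu hu0
        have h2 := cl_mem hs.le a
        set c := cl s a
        have h3 : c ^ 2 < -u := lt_of_le_of_lt (by rw [← sq_abs]; exact pow_le_pow_left₀ (abs_nonneg _) h2 2) h1
        have : -(c ^ 3 + u * c + 0) = c * (-u - c ^ 2) := by ring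
        rw [this]
        have h4 : 0 < -u - c ^ 2 := by linarith
        exact ⟨fun h => by by_contra hc; push Not at hc; nlinarith, fun h => mul_pos h h4⟩
      · left
        intro a
        rw [z1, ← cl_neg_iff hs]
        set c := cl s a
        have : -(c ^ 3 + u * c + 0) = (-c) * (c ^ 2 + u) := by ring
        rw [this]
        constructor
        · intro h
          by_contra hc
          push Not at hc
          nlinarith [mul_nonneg hc (add_nonneg (sq_nonneg c) hu0)]
        · intro h
          exact mul_pos (by linarith) (by nlinarith)
  · rw [neg_neg] at H₁ H₂
    exact equiv_S H₁ H₂ hax (by linarith)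

lemma second_derivs (ε t u : ℝ) (p : ℝ × ℝ) :
    let f : ℝ × ℝ → ℝ := fun p => p.2 ^ 2 + ε * p.1 ^ 4 + p.1 ^ 2 * p.2 ^ 3 + t * p.1 ^ 2 + u * p.1 ^ 2 * p.2
    fyy f p = 2 * (1 + 3 * p.1 ^ 2 * p.2) ∧ fxy f p = 2 * (p.1 * (3 * p.2 ^ 2 + u)) ∧
    fxx f p = 2 * (6 * ε * p.1 ^ 2 + p.2 ^ 3 + u * p.2 + t) := by
  intro f
  have hx : pdx f = fun p => 4 * ε * p.1 ^ 3 + 2 * p.1 * p.2 ^ 3 + 2 * t * p.1 + 2 * u * p.1 * p.2 := by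
    ext q
    have h := hasDerivAt_id q.1
    have := ((((hasDerivAt_const q.1 (q.2 ^ 2)).add ((h.pow 4).const_mul ε)).add ((h.pow 2).mul_const (q.2 ^ 3))).add
      ((h.pow 2).const_mul t)).add (((h.pow 2).const_mul u).mul_const q.2)
    rw [pdx]
    refine (HasDerivAt.deriv this).trans ?_
    simp; ring
  have hy : pdy f = fun p => 2 * p.2 + 3 * p.1 ^ 2 * p.2 ^ 2 + u * p.1 ^ 2 := by
    ext q
    have h := hasDerivAt_id q.2
    have := ((((h.pow 2).add_const (ε * q.1 ^ 4)).add ((h.pow 3).const_mul (q.1 ^ 2))).add_const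
      (t * q.1 ^ 2)).add (h.const_mul (u * q.1 ^ 2))
    rw [pdy]
    refine (HasDerivAt.deriv this).trans ?_
    simp; ring
  refine ⟨?_, ?_, ?_⟩
  · rw [fyy, hy, pdy]
    have h := hasDerivAt_id p.2
    have := ((h.const_mul 2).add ((h.pow 2).const_mul (3 * p.1 ^ 2))).add_const (u * p.1 ^ 2)
    refine (HasDerivAt.deriv this).trans ?_
    simp; ring
  · rw [fxy, hx, pdy]
    have h := hasDerivAt_id p.2
    have := ((((h.pow 3).const_mul (2 * p.1)).const_add (4 * ε * p.1 ^ 3)).add_const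
      (2 * t * p.1)).add (h.const_mul (2 * u * p.1))
    refine (HasDerivAt.deriv this).trans ?_
    simp; ring
  · rw [fxx, hx, pdx]
    have h := hasDerivAt_id p.1
    have := ((((h.pow 3).const_mul (4 * ε)).add ((h.const_mul 2).mul_const (p.2 ^ 3))).add
      (h.const_mul (2 * t))).add ((h.const_mul (2 * u)).mul_const p.2)
    refine (HasDerivAt.deriv this).trans ?_
    simp; ring

def Phi (u : ℝ) (p : ℝ × ℝ) : ℝ × ℝ := (p.1, p.2 + 3 / 2 * p.1 ^ 2 * p.2 ^ 2 + u * p.1 ^ 2 / 2)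
def Phinv (u : ℝ) (q : ℝ × ℝ) : ℝ × ℝ := (q.1, yy u (q.1 ^ 2, q.2))

lemma fderiv_Phi (u : ℝ) (p v : ℝ × ℝ) : fderiv ℝ (Phi u) p v =
    (v.1, (1 + 3 * p.1 ^ 2 * p.2) * v.2 + p.1 * (3 * p.2 ^ 2 + u) * v.1) := by
  have h1 : HasFDerivAt (fun p : ℝ × ℝ => p.1) (ContinuousLinearMap.fst ℝ ℝ ℝ) p := hasFDerivAt_fst
  have h2 : HasFDerivAt (fun p : ℝ × ℝ => p.2) (ContinuousLinearMap.snd ℝ ℝ ℝ) p := hasFDerivAt_snd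
  have := h1.prodMk ((h2.add (((h1.pow 2).const_mul (3 / 2)).mul (h2.pow 2))).add (((h1.pow 2).const_mul (u / 2))))
  have e : Phi u = fun p : ℝ × ℝ => (p.1, p.2 + 3 / 2 * p.1 ^ 2 * p.2 ^ 2 + u / 2 * p.1 ^ 2) := by
    ext q
    · rfl
    · simp [Phi]; ring
  rw [e]
  have e2 := HasFDerivAt.fderiv this
  refine (congrArg (fun L => L v) e2).trans ?_
  ext
  · simp
  · simp; ring

lemma yy_Phi (u : ℝ) {p : ℝ × ℝ} (hp : 0 < 1 + 3 * p.1 ^ 2 * p.2) : yy u ((Phi u p).1 ^ 2, (Phi u p).2) = p.2 := by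
  have hz : zz u ((Phi u p).1 ^ 2, (Phi u p).2) = p.2 + 3 / 2 * p.1 ^ 2 * p.2 ^ 2 := by
    simp [zz, Phi]
  rw [yy, hz]
  have : 1 + 6 * (Phi u p).1 ^ 2 * (p.2 + 3 / 2 * p.1 ^ 2 * p.2 ^ 2) = (1 + 3 * p.1 ^ 2 * p.2) ^ 2 := by
    simp [Phi]; ring
  simp only [this]
  rw [Real.sqrt_sq hp.le, div_eq_iff (by linarith)]
  ring

lemma Phinv_spec (u : ℝ) {q : ℝ × ℝ} (hq : 0 < 1 + 6 * q.1 ^ 2 * zz u (q.1 ^ 2, q.2)) :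
    0 < 1 + 3 * (Phinv u q).1 ^ 2 * (Phinv u q).2 ∧ Phi u (Phinv u q) = q := by
  set Z := zz u (q.1 ^ 2, q.2) with hZ
  set w := √(1 + 6 * q.1 ^ 2 * Z) with hw
  have hw0 : 0 < w := Real.sqrt_pos.2 hq
  have hw2 : w ^ 2 = 1 + 6 * q.1 ^ 2 * Z := Real.sq_sqrt hq.le
  set y := yy u (q.1 ^ 2, q.2) with hy
  have hy1 : y * (1 + w) = 2 * Z := by
    rw [hy, yy]
    simp only [← hZ, ← hw]
    exact div_mul_cancel₀ _ (by linarith)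
  have h3 : 3 * q.1 ^ 2 * y = w - 1 := by
    have : (3 * q.1 ^ 2 * y) * (1 + w) = (w - 1) * (1 + w) := by
      linear_combination (3 * q.1 ^ 2) * hy1 - hw2
    exact mul_right_cancel₀ (by linarith) this
  refine ⟨by simp only [Phinv]; rw [h3]; linarith, ?_⟩
  have hZe : Z = q.2 - u * q.1 ^ 2 / 2 := by rw [hZ, zz]
  refine Prod.ext rfl ?_
  simp only [Phi, Phinv]
  rw [← hy]
  linear_combination (1 / 2) * y * h3 + (1 / 2) * hy1 + hZe

lemma source_equiv (ε t u : ℝ) {r s : ℝ} (hr : 0 < r) (hs : 0 < s) :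
    TopEquivAt0 (asymBDE (fun p => p.2 ^ 2 + ε * p.1 ^ 4 + p.1 ^ 2 * p.2 ^ 3 + t * p.1 ^ 2 + u * p.1 ^ 2 * p.2))
      (NF (clamped (k1f ε t u) r s)) := by
  set B : Set (ℝ × ℝ) := {q | |q.1| < r} ∩ {q | |q.2| < s} with hB
  have hBo : IsOpen B := (isOpen_lt (continuous_abs.comp continuous_fst) continuous_const).inter
    (isOpen_lt (continuous_abs.comp continuous_snd) continuous_const)
  have hΦ : ContDiff ℝ 1 (Phi u) := by unfold Phi; fun_prop
  have hzc : Continuous (fun q : ℝ × ℝ => 1 + 6 * q.1 ^ 2 * zz u (q.1 ^ 2, q.2)) := by unfold zz; fun_prop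
  set U : Set (ℝ × ℝ) := {p | 0 < 1 + 3 * p.1 ^ 2 * p.2} ∩ Phi u ⁻¹' B with hU
  set V : Set (ℝ × ℝ) := {q | 0 < 1 + 6 * q.1 ^ 2 * zz u (q.1 ^ 2, q.2)} ∩ B with hV
  have hP0 : Phi u 0 = 0 := by simp [Phi]
  have hB0 : (0 : ℝ × ℝ) ∈ B := ⟨by simpa using hr, by simpa using hs⟩
  refine topEquiv_of_diffeo (U := U) (V := V) (Φ := Phi u) (Ψ := Phinv u)
    ((isOpen_lt continuous_const (by fun_prop)).inter (hBo.preimage hΦ.continuous))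
    ((isOpen_lt continuous_const hzc).inter hBo) ⟨by simp, by rw [mem_preimage, hP0]; exact hB0⟩
    ⟨by simp, hB0⟩ hP0 hΦ.contDiffOn ?_ ?_ ?_ ⟨?_, ?_⟩ ?_
  · intro q hq
    apply ContDiffAt.contDiffWithinAt
    have h1 : ContDiffAt ℝ 1 (yy u) (q.1 ^ 2, q.2) := contDiffAt_yy u hq.1
    have h2 : ContDiffAt ℝ 1 (fun q : ℝ × ℝ => (q.1 ^ 2, q.2)) q := by fun_prop
    have h3 : ContDiffAt ℝ 1 (fun q : ℝ × ℝ => yy u (q.1 ^ 2, q.2)) q :=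
      ContDiffAt.comp q (g := yy u) (f := fun q : ℝ × ℝ => (q.1 ^ 2, q.2)) h1 h2
    exact contDiffAt_fst.prodMk h3
  · intro p hp
    refine ⟨?_, hp.2⟩
    have h1 : 0 < 1 + 3 * p.1 ^ 2 * p.2 := hp.1
    show 0 < 1 + 6 * (Phi u p).1 ^ 2 * zz u ((Phi u p).1 ^ 2, (Phi u p).2)
    have : 1 + 6 * (Phi u p).1 ^ 2 * zz u ((Phi u p).1 ^ 2, (Phi u p).2) = (1 + 3 * p.1 ^ 2 * p.2) ^ 2 := by
      simp [zz, Phi]; ring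
    rw [this]; positivity
  · intro q hq
    obtain ⟨h1, h2⟩ := Phinv_spec u hq.1
    exact ⟨h1, by rw [mem_preimage, h2]; exact hq.2⟩
  · intro p hp
    exact Prod.ext rfl (yy_Phi u hp.1)
  · intro q hq
    exact (Phinv_spec u hq.1).2
  · intro p hp v
    have hp1 : 0 < 1 + 3 * p.1 ^ 2 * p.2 := hp.1
    obtain ⟨b1, b2⟩ : |(Phi u p).1| < r ∧ |(Phi u p).2| < s := hp.2
    obtain ⟨d1, d2, d3⟩ := second_derivs ε t u p
    rw [fderiv_Phi]
    have hg : clamped (k1f ε t u) r s |(Phi u p).1| (Phi u p).2 = k1y ε t u (p.1 ^ 2) p.2 := by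
      rw [clamped, clp_eq ⟨abs_nonneg _, b1.le⟩, cl_eq b2.le, sq_abs, k1f, yy_Phi u hp1]
      rfl
    simp only [asymBDE, BDE, NF]
    rw [hg, d1, d2, d3]
    have key : ((1 + 3 * p.1 ^ 2 * p.2) * v.2 + p.1 * (3 * p.2 ^ 2 + u) * v.1) ^ 2 - k1y ε t u (p.1 ^ 2) p.2 * v.1 ^ 2
      = (1 + 3 * p.1 ^ 2 * p.2) / 2 * (2 * (1 + 3 * p.1 ^ 2 * p.2) * v.2 ^ 2 + 2 * (2 * (p.1 * (3 * p.2 ^ 2 + u))) * v.1 * v.2 +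
        2 * (6 * ε * p.1 ^ 2 + p.2 ^ 3 + u * p.2 + t) * v.1 ^ 2) := by
      rw [k1y]; ring
    rw [key, mul_eq_zero]
    constructor
    · exact fun h => Or.inr h
    · rintro (h | h)
      · linarith
      · exact h

lemma target_equiv (ε t u : ℝ) {r s : ℝ} (hr : 0 < r) (hs : 0 < s) :
    TopEquivAt0 (NF (clamped (k2f ε t u) r s))
      (BDE (fun _ => 1) (fun _ => 0) (fun p => ε * p.1 ^ 2 + p.2 ^ 3 + u * p.2 + t)) := by
  refine topEquiv_of_eq (U := {q | |q.1| < r} ∩ {q | |q.2| < s})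
    ((isOpen_lt (continuous_abs.comp continuous_fst) continuous_const).inter
    (isOpen_lt (continuous_abs.comp continuous_snd) continuous_const)) ⟨by simpa using hr, by simpa using hs⟩ ?_
  rintro p ⟨h1, h2⟩ v
  have h1' : |p.1| < r := h1
  have h2' : |p.2| < s := h2
  simp only [NF, BDE, clamped]
  rw [clp_eq ⟨abs_nonneg _, h1'.le⟩, cl_eq h2'.le, sq_abs, k2f]
  ring

theorem stmt14' (ε : ℝ) (hε : ε = 1 ∨ ε = -1) :
    FiberTopEquivAt0
      (fun tu => asymBDE (fun p => p.2 ^ 2 + ε * p.1 ^ 4 + p.1 ^ 2 * p.2 ^ 3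
        + tu.1 * p.1 ^ 2 + tu.2 * p.1 ^ 2 * p.2))
      (fun tu => BDE (fun _ => 1) (fun _ => 0)
        (fun p => ε * p.1 ^ 2 + p.2 ^ 3 + tu.2 * p.2 + tu.1)) := by
  refine ⟨{q | |q.2| < 1 / 16}, id, id, ?_, rfl, continuousOn_id, continuousOn_id,
    ⟨fun _ _ => rfl, fun _ _ => rfl⟩, ?_⟩
  · exact (isOpen_lt (continuous_abs.comp continuous_snd) continuous_const).mem_nhds (by simp)
  · rintro ⟨t, u⟩ hq
    have hu : |u| < 1 / 16 := hq
    obtain ⟨r, s, hr, hs, h⟩ := nf_equiv ε hε t u hu.le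
    exact ((source_equiv ε t u hr hs).trans h).trans (target_equiv ε t u hr hs)

/-- the 2-parameter family of asymptotic BDEs of
`f(x,y;t,u) = y² + εx⁴ + x²y³ + tx² + ux²y`, `ε = ±1`, is fiber topologically
equivalent at `0` to the family `dy² + (εx² + y³ + uy + t)dx² = 0`. -/
theorem stmt14 (ε : ℝ) (hε : ε = 1 ∨ ε = -1) :
    FiberTopEquivAt0
      (fun tu => asymBDE (fun p =>
        p.2 ^ 2 + ε * p.1 ^ 4 + p.1 ^ 2 * p.2 ^ 3 + tu.1 * p.1 ^ 2 + tu.2 * p.1 ^ 2 * p.2))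
      (fun tu => BDE (fun _ => 1) (fun _ => 0)
        (fun p => ε * p.1 ^ 2 + p.2 ^ 3 + tu.2 * p.2 + tu.1)) := stmt14' ε hε
end
end

section
/- Let t ∈ ℝ and f(x,y) = y² + x²y + (1/4)x⁴ + x⁵ + tx³. Then: (i) for all (x,y) ∈ ℝ², f_xx(x,y)·f_yy(x,y) − f_xy(x,y)² = 2·(2y + x² + 20x³ + 6tx), so the parabolic set of f is exactly the cubic curve {(x,y) : 2y + 20x³ + x² + 6tx = 0}; (ii) the flecnodal set of f is exactly the graph {(x,y) : y = −(100x⁴ + 10x³ + (1/2 + 20t)x² + 3tx + t²)}. -/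
open Asymptotics Filter Set

noncomputable section

theorem aux_iter (g : ℝ × ℝ → ℝ) (hg : ContDiff ℝ 5 g) (n : ℕ) (hn : n < 5) (p v : ℝ × ℝ)
    (m : Fin n → ℝ × ℝ) :
    iteratedFDeriv ℝ (n + 1) g p (Matrix.vecCons v m) =
      fderiv ℝ (fun q => iteratedFDeriv ℝ n g q m) p v := by
  have hd : Differentiable ℝ (iteratedFDeriv ℝ n g) :=
    hg.differentiable_iteratedFDeriv (by exact_mod_cast hn)
  rw [iteratedFDeriv_succ_apply_left, fderiv_continuousMultilinear_apply_const_apply (hd p)]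
  rfl

theorem aux_line (g : ℝ × ℝ → ℝ) (hg : Differentiable ℝ g) (p v : ℝ × ℝ) (d : ℝ)
    (h : HasDerivAt (fun s : ℝ => g (p.1 + s * v.1, p.2 + s * v.2)) d 0) :
    fderiv ℝ g p v = d := by
  rw [← (hg p).lineDeriv_eq_fderiv, lineDeriv]
  exact h.deriv

theorem aux_lin (a b : ℝ) : HasDerivAt (fun s : ℝ => a + s * b) b 0 := by
  simpa using ((hasDerivAt_id (0:ℝ)).mul_const b).const_add a

/-- for `f(x,y) = y² + x²y + (1/4)x⁴ + x⁵ + tx³`: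
(i) `det Hess f = 2(2y + x² + 20x³ + 6tx)`, so the parabolic set is the cubic
curve `{2y + 20x³ + x² + 6tx = 0}`; (ii) the flecnodal set of `f` is the graph
`{y = −(100x⁴ + 10x³ + (1/2 + 20t)x² + 3tx + t²)}`. -/
theorem stmt17 (t : ℝ) (f : ℝ × ℝ → ℝ)
    (hdef : f = fun p =>
      p.2 ^ 2 + p.1 ^ 2 * p.2 + (1 / 4) * p.1 ^ 4 + p.1 ^ 5 + t * p.1 ^ 3) :
    (∀ p : ℝ × ℝ, fxx f p * fyy f p - (fxy f p) ^ 2 =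
      2 * (2 * p.2 + p.1 ^ 2 + 20 * p.1 ^ 3 + 6 * t * p.1)) ∧
    {p : ℝ × ℝ | fxx f p * fyy f p - (fxy f p) ^ 2 = 0} =
      {p : ℝ × ℝ | 2 * p.2 + 20 * p.1 ^ 3 + p.1 ^ 2 + 6 * t * p.1 = 0} ∧
    {p : ℝ × ℝ | ∃ v : ℝ × ℝ, v ≠ 0 ∧
        iteratedFDeriv ℝ 2 f p ![v, v] = 0 ∧
        iteratedFDeriv ℝ 3 f p ![v, v, v] = 0} =
      {p : ℝ × ℝ | p.2 = -(100 * p.1 ^ 4 + 10 * p.1 ^ 3 + (1 / 2 + 20 * t) * p.1 ^ 2 +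
        3 * t * p.1 + t ^ 2)} := by
  have hfx : pdx f = fun p => 2 * p.1 * p.2 + p.1 ^ 3 + 5 * p.1 ^ 4 + 3 * t * p.1 ^ 2 := by
    funext p
    have h := hasDerivAt_id p.1
    refine HasDerivAt.deriv (f := fun s => f (s, p.2)) ?_
    rw [hdef]
    convert (((((h.pow 2).mul_const p.2).const_add (p.2 ^ 2)).add
      ((h.pow 4).const_mul (1 / 4))).add (h.pow 5)).add ((h.pow 3).const_mul t) using 1
    all_goals first | (funext s; rfl) | (simp; done) | (simp; ring) | rfl
  have hfy : pdy f = fun p => 2 * p.2 + p.1 ^ 2 := by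
    funext p
    have h := hasDerivAt_id p.2
    refine HasDerivAt.deriv (f := fun s => f (p.1, s)) ?_
    rw [hdef]
    convert ((((h.pow 2).add (h.const_mul (p.1 ^ 2))).add_const ((1 / 4) * p.1 ^ 4)).add_const
      (p.1 ^ 5)).add_const (t * p.1 ^ 3) using 1
    all_goals first | (funext s; rfl) | (simp; done) | (simp; ring) | rfl
  have hfxx : ∀ p, fxx f p = 2 * p.2 + 3 * p.1 ^ 2 + 20 * p.1 ^ 3 + 6 * t * p.1 := by
    intro p
    have h := hasDerivAt_id p.1
    refine HasDerivAt.deriv (f := fun s => pdx f (s, p.2)) ?_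
    rw [hfx]
    convert ((((h.const_mul 2).mul_const p.2).add (h.pow 3)).add
      ((h.pow 4).const_mul 5)).add ((h.pow 2).const_mul (3 * t)) using 1
    all_goals first | (funext s; rfl) | (simp; done) | (simp; ring) | rfl
  have hfxy : ∀ p, fxy f p = 2 * p.1 := by
    intro p
    have h := hasDerivAt_id p.2
    refine HasDerivAt.deriv (f := fun s => pdx f (p.1, s)) ?_
    rw [hfx]
    convert (((h.const_mul (2 * p.1)).add_const (p.1 ^ 3)).add_const (5 * p.1 ^ 4)).add_const
      (3 * t * p.1 ^ 2) using 1
    all_goals first | (funext s; rfl) | (simp; done) | (simp; ring) | rfl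
  have hfyy : ∀ p, fyy f p = 2 := by
    intro p
    have h := hasDerivAt_id p.2
    refine HasDerivAt.deriv (f := fun s => pdy f (p.1, s)) ?_
    rw [hfy]
    convert (h.const_mul 2).add_const (p.1 ^ 2) using 1
    all_goals first | (funext s; rfl) | (simp; done) | (simp; ring) | rfl
  have hdet : ∀ p : ℝ × ℝ, fxx f p * fyy f p - (fxy f p) ^ 2 =
      2 * (2 * p.2 + p.1 ^ 2 + 20 * p.1 ^ 3 + 6 * t * p.1) := by
    intro p
    rw [hfxx, hfxy, hfyy]; ring
  have hc : ContDiff ℝ 5 f := by rw [hdef]; fun_prop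
  have d1 : ∀ v q : ℝ × ℝ, iteratedFDeriv ℝ 1 f q ![v] =
      (2 * q.1 * q.2 + q.1 ^ 3 + 5 * q.1 ^ 4 + 3 * t * q.1 ^ 2) * v.1
        + (2 * q.2 + q.1 ^ 2) * v.2 := by
    intro v q
    rw [aux_iter f hc 0 (by norm_num)]
    simp only [iteratedFDeriv_zero_apply]
    refine aux_line _ (hc.differentiable (by norm_num)) _ _ _ ?_
    have hx := aux_lin q.1 v.1
    have hy := aux_lin q.2 v.2
    rw [hdef]
    convert ((((hy.pow 2).add ((hx.pow 2).mul hy)).add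
      ((hx.pow 4).const_mul (1 / 4))).add (hx.pow 5)).add ((hx.pow 3).const_mul t) using 1
    all_goals first | (funext s; rfl) | (simp; done) | (simp; ring) | rfl
  have d2 : ∀ v q : ℝ × ℝ, iteratedFDeriv ℝ 2 f q ![v, v] =
      (2 * q.2 + 3 * q.1 ^ 2 + 20 * q.1 ^ 3 + 6 * t * q.1) * v.1 ^ 2
        + 4 * v.1 * v.2 * q.1 + 2 * v.2 ^ 2 := by
    intro v q
    rw [aux_iter f hc 1 (by norm_num)]
    simp only [d1]
    refine aux_line _ (by fun_prop) _ _ _ ?_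
    have hx := aux_lin q.1 v.1
    have hy := aux_lin q.2 v.2
    convert ((((((hx.const_mul 2).mul hy).add (hx.pow 3)).add ((hx.pow 4).const_mul 5)).add
      ((hx.pow 2).const_mul (3 * t))).mul_const v.1).add
      (((hy.const_mul 2).add (hx.pow 2)).mul_const v.2) using 1
    all_goals first | (funext s; rfl) | (simp; done) | (simp; ring) | rfl
  have d3 : ∀ v q : ℝ × ℝ, iteratedFDeriv ℝ 3 f q ![v, v, v] =
      6 * v.1 ^ 2 * ((q.1 + 10 * q.1 ^ 2 + t) * v.1 + v.2) := by
    intro v q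
    rw [aux_iter f hc 2 (by norm_num)]
    simp only [d2]
    refine aux_line _ (by fun_prop) _ _ _ ?_
    have hx := aux_lin q.1 v.1
    have hy := aux_lin q.2 v.2
    convert ((((((hy.const_mul 2).add ((hx.pow 2).const_mul 3)).add
      ((hx.pow 3).const_mul 20)).add (hx.const_mul (6 * t))).mul_const (v.1 ^ 2)).add
      (hx.const_mul (4 * v.1 * v.2))).add_const (2 * v.2 ^ 2) using 1
    all_goals first | (funext s; rfl) | (simp; done) | (simp; ring) | rfl
  refine ⟨hdet, ?_, ?_⟩
  · ext p
    simp only [mem_ofPred_eq, hdet]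
    constructor <;> intro h <;> linarith
  · ext ⟨x, y⟩
    simp only [mem_ofPred_eq, d2, d3]
    constructor
    · rintro ⟨⟨a, b⟩, hv, h2, h3⟩
      simp only at h2 h3 ⊢
      have ha : a ≠ 0 := by
        rintro rfl
        apply hv
        have : b = 0 := by simpa using h2
        simp [this]
      have hb : b = -((x + 10 * x ^ 2 + t) * a) := by
        have : (x + 10 * x ^ 2 + t) * a + b = 0 := by
          rcases mul_eq_zero.1 h3 with h | h
          · exact absurd h (by positivity)
          · exact h
        linarith
      subst hb
      have : a ^ 2 * (y + (100 * x ^ 4 + 10 * x ^ 3 + (1 / 2 + 20 * t) * x ^ 2 +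
        3 * t * x + t ^ 2)) = 0 := by linear_combination h2 / 2
      rcases mul_eq_zero.1 this with h | h
      · exact absurd h (by positivity)
      · linarith
    · intro h
      refine ⟨(1, -(x + 10 * x ^ 2 + t)), by simp, ?_, ?_⟩
      · rw [h]; ring
      · simp
end
end
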